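/- arXiv:1912.10710 — 6 statements merged into one kernel-verified Lean document; each statement's English description precedes it below -/
import Mathlib

section
/- Let $K_0 \subseteq K$ be an extension of fields with both $K_0$ and $K$ algebraically closed, and let $x \in K$ be transcendental over $K_0$. Then there exists an intermediate field $F'$ of $K/K_0$ such that $F'$ is algebraically closed, the transcendence degree of $K$ over $F'$ equals $1$, and $x \notin F'$. -/
open Cardinal

/-- The transcendence degree of the `R`-algebra `A`: the supremum of the cardinalities of
algebraically independent subsets of `A` over `R`. -/
noncomputable def trdeg (R A : Type*) [CommRing R] [CommRing A] [Algebra R A] : Cardinal :=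
  ⨆ s : { s : Set A // AlgebraicIndependent R ((↑) : s → A) }, #s.1


theorem statement0 (K0 K : Type*) [Field K0] [Field K] [Algebra K0 K]
    [IsAlgClosed K0] [IsAlgClosed K] (x : K) (hx : Transcendental K0 x) :
    ∃ F' : IntermediateField K0 K, IsAlgClosed F' ∧ trdeg F' K = 1 ∧ x ∉ F' := by
  have h1 : AlgebraicIndepOn K0 id ({x} : Set K) :=
    algebraicIndependent_unique_type_iff.mpr hx
  obtain ⟨B, hxB, hB⟩ := exists_isTranscendenceBasis_superset h1
  have hxB : x ∈ B := hxB rfl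
  have hBind : AlgebraicIndepOn K0 id (insert x (B \ {x})) := by
    rw [Set.insert_sdiff_singleton, Set.insert_eq_of_mem hxB]; exact hB.1
  have htr := ((AlgebraicIndepOn.insert_iff (by simp)).1 hBind).2
  rw [Set.image_id, id] at htr
  let F := IntermediateField.adjoin K0 (B \ {x})
  have htrF : Transcendental F x := by
    intro h
    apply htr
    open scoped IntermediateField.algebraAdjoinAdjoin in
    exact (IsFractionRing.isAlgebraic_iff (Algebra.adjoin K0 (B \ {x}))
      (IntermediateField.adjoin K0 (B \ {x})) K).2 h
  let F' := (algebraicClosure F K).restrictScalars K0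
  have htr' : Transcendental F' x := htrF.algebraicClosure
  have hle : Algebra.adjoin K0 B ≤ (Algebra.adjoin F' {x}).restrictScalars K0 := by
    rw [Algebra.adjoin_le_iff]
    intro b hb
    by_cases hbx : b = x
    · subst hbx
      exact Algebra.subset_adjoin (R := F') rfl
    · have hbF : b ∈ F := IntermediateField.subset_adjoin _ _ ⟨hb, hbx⟩
      have hb' : b ∈ F' := (algebraicClosure F K).algebraMap_mem ⟨b, hbF⟩
      exact (Algebra.adjoin F' {x}).algebraMap_mem ⟨b, hb'⟩
  refine ⟨F', ?_, ?_, ?_⟩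
  · exact IsAlgClosure.isAlgClosed (K := algebraicClosure F K) F
  · have hind : AlgebraicIndependent F' (fun _ : PUnit => x) :=
      algebraicIndependent_unique_type_iff.mpr htr'
    have hbas : IsTranscendenceBasis F' (fun _ : PUnit => x) := by
      rw [hind.isTranscendenceBasis_iff_isAlgebraic, Set.range_const]
      have := hB.isAlgebraic
      rw [Subtype.range_coe] at this
      constructor
      intro a
      obtain ⟨p, hp, hpa⟩ := this.1 a
      let φ : Algebra.adjoin K0 B →+* Algebra.adjoin F' {x} :=
        (Subalgebra.inclusion hle).toRingHom
      refine ⟨p.map φ, ?_, ?_⟩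
      · exact (Polynomial.map_ne_zero_iff (Subalgebra.inclusion_injective hle)).2 hp
      · rw [Polynomial.aeval_def] at hpa ⊢
        rw [Polynomial.eval₂_map]
        exact hpa
    have := hbas.cardinalMk_eq_trdeg
    rw [Cardinal.mk_punit] at this
    exact this.symm
  · intro hxF
    exact htr' (isAlgebraic_algebraMap (⟨x, hxF⟩ : F'))
end

section
/- Let $K_0 \subseteq K$ be an extension of fields with both $K_0$ and $K$ algebraically closed, and assume some element of $K$ is transcendental over $K_0$. Then the intersection of all intermediate fields $F'$ of $K/K_0$ such that $F'$ is algebraically closed and the transcendence degree of $K$ over $F'$ equals $1$ is exactly $K_0$ (i.e., equals the bottom intermediate field of $K/K_0$). -/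
open Cardinal

theorem statement1 (K0 K : Type*) [Field K0] [Field K] [Algebra K0 K]
    [IsAlgClosed K0] [IsAlgClosed K] (h : ∃ x : K, Transcendental K0 x) :
    sInf {F' : IntermediateField K0 K | IsAlgClosed F' ∧ trdeg F' K = 1} = ⊥ := by
  rw [eq_bot_iff]
  intro x hx
  by_cases hxa : IsAlgebraic K0 x
  · have h1 : x ∈ algebraicClosure K0 K := (mem_algebraicClosure_iff).2 hxa
    rwa [IsAlgClosed.algebraicClosure_eq_bot_iff K0 K |>.2 inferInstance] at h1
  exfalso
  have hind : AlgebraicIndepOn K0 id ({x} : Set K) :=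
    algebraicIndependent_unique_type_iff.mpr hxa
  obtain ⟨B, hxB, hB⟩ := exists_isTranscendenceBasis_superset hind
  have hxB : x ∈ B := hxB rfl
  set F0 := IntermediateField.adjoin K0 (B \ {x}) with hF0
  have htr : Transcendental F0 x := by
    rw [hF0, IntermediateField.transcendental_adjoin_iff]
    have := hB.1.transcendental_adjoin (s := {b : B | (b : K) ≠ x}) (i := ⟨x, hxB⟩) (by simp)
    have he : (Subtype.val '' {b : B | (b : K) ≠ x}) = B \ {x} := by
      ext y; simp [and_comm]
    rwa [he] at this
  set F' : IntermediateField K0 K := (algebraicClosure F0 K).restrictScalars K0 with hF'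
  have hmem : ∀ y : K, y ∈ F' ↔ IsAlgebraic F0 y := fun y => by
    rw [hF', IntermediateField.mem_restrictScalars, mem_algebraicClosure_iff]
  have hxF : x ∉ F' := fun hc => htr ((hmem x).1 hc)
  have hac : IsAlgClosed F' := IsAlgClosure.isAlgClosed (K := algebraicClosure F0 K) F0
  have htr' : Transcendental F' x := htr.algebraicClosure
  refine hxF ((IntermediateField.mem_sInf.1 hx) F' ⟨hac, ?_⟩)
  change Algebra.trdeg F' K = 1
  apply le_antisymm
  · have hle : Algebra.adjoin K0 B ≤ (Algebra.adjoin F' ({x} : Set K)).restrictScalars K0 := by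
      apply Algebra.adjoin_le
      intro b hb
      by_cases hbx : b = x
      · subst hbx
        exact Algebra.subset_adjoin (R := F') (Set.mem_singleton b)
      · have hb' : b ∈ F0 := IntermediateField.subset_adjoin _ _ ⟨hb, hbx⟩
        have hb2 : b ∈ F' := (hmem b).2 (isAlgebraic_algebraMap (⟨b, hb'⟩ : F0))
        exact (Algebra.adjoin F' ({x} : Set K)).algebraMap_mem ⟨b, hb2⟩
    have hBa := hB.isAlgebraic
    rw [Subtype.range_coe] at hBa
    have : Algebra.IsAlgebraic (Algebra.adjoin F' ({x} : Set K)) K :=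
      ⟨fun y => (hBa.isAlgebraic y).tower_top_of_subalgebra_le hle⟩
    simpa using Algebra.IsAlgebraic.trdeg_le_cardinalMk F' ({x} : Set K)
  · have : Algebra.Transcendental F' K := ⟨x, htr'⟩
    exact Cardinal.one_le_iff_pos.2 (_root_.trdeg_pos F' K)
end

section
/- Let $F$ be an algebraically closed field of characteristic zero and let $W$ be an elliptic curve over $F$ (a Weierstrass curve over $F$ with nonzero discriminant). Then the rank of the group $W(F)$ of $F$-rational points of $W$ is infinite, i.e. the $\mathbb{Q}$-vector space $W(F) \otimes_{\mathbb{Z}} \mathbb{Q}$ is infinite-dimensional. -/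
open TensorProduct

section
variable {F : Type*} [Field F] {Γ : Type*} [LinearOrderedCommGroupWithZero Γ]

structure LargeX (W : WeierstrassCurve.Affine F) (v : Valuation F Γ) (m : Γ) : Prop where
  one : 1 < v 4 * m
  b2 : v W.b₂ < v 4 * m
  b4 : v W.b₄ < v 4 * m
  b6 : v W.b₆ < v 4 * m
  b8 : v W.b₈ < v 4 * m

lemma val_nat_le_one (v : Valuation F Γ) (h2 : v 2 < 1) : v 4 < 1 := by
  have : (4 : F) = 2 * 2 := by norm_num
  rw [this, map_mul]
  exact mul_lt_one_of_nonneg_of_lt_one_left zero_le h2 h2.le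

lemma large_double [DecidableEq F] (W : WeierstrassCurve.Affine F) (v : Valuation F Γ) (h2 : v 2 < 1)
    (x y : F) (h : W.Nonsingular x y) (hx : LargeX W v (v x)) :
    ∃ (x' y' : F) (h' : W.Nonsingular x' y'),
      WeierstrassCurve.Affine.Point.some x y h + WeierstrassCurve.Affine.Point.some x y h
        = WeierstrassCurve.Affine.Point.some x' y' h' ∧ v x < v x' := by
  obtain ⟨h1, hb2, hb4, hb6, hb8⟩ := hx
  have h4 := val_nat_le_one v h2
  set m := v x with hm
  have hmpos : 0 < m := by
    rcases (zero_le : 0 ≤ m).eq_or_lt with h | h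
    · rw [← h] at h1; simp at h1
    · exact h
  have hm2pos : 0 < m ^ 2 := pow_pos hmpos 2
  have hm3pos : 0 < m ^ 3 := pow_pos hmpos 3
  have h4m : v 4 * m ≤ m := by
    calc v 4 * m ≤ 1 * m := by gcongr
      _ = m := one_mul m
  have hm1 : 1 < m := h1.trans_le h4m
  have h4pos : 0 < v 4 := by
    rcases (zero_le : 0 ≤ v 4).eq_or_lt with h | h
    · rw [← h] at h1; simp at h1
    · exact h
  have hmm : m ≤ m ^ 2 := le_self_pow₀ hm1.le (by norm_num)
  have hm2 : 1 ≤ m ^ 2 := one_le_pow₀ hm1.le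
  have hsq : (2 * y + W.a₁ * x + W.a₃) ^ 2 = 4 * x ^ 3 + W.b₂ * x ^ 2 + 2 * W.b₄ * x + W.b₆ := by
    have := (W.equation_iff x y).1 h.1
    simp only [WeierstrassCurve.b₂, WeierstrassCurve.b₄, WeierstrassCurve.b₆]
    linear_combination 4 * this
  have hden : v (4 * x ^ 3 + W.b₂ * x ^ 2 + 2 * W.b₄ * x + W.b₆) = v 4 * m ^ 3 := by
    have e : v (4 * x ^ 3) = v 4 * m * m ^ 2 := by rw [map_mul, map_pow, ← hm]; simp [pow_succ, mul_assoc]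
    have l : v (W.b₂ * x ^ 2 + 2 * W.b₄ * x + W.b₆) < v (4 * x ^ 3) := by
      rw [e]
      refine v.map_add_lt (v.map_add_lt ?_ ?_) ?_
      · rw [map_mul, map_pow, ← hm]; gcongr
      · rw [map_mul, map_mul]
        calc v 2 * v W.b₄ * v x ≤ 1 * v W.b₄ * m := by gcongr
          _ = v W.b₄ * m := by rw [one_mul]
          _ < v 4 * m * m := by gcongr
          _ ≤ _ := by gcongr
      · calc v W.b₆ < v 4 * m := hb6
          _ = v 4 * m * 1 := by rw [mul_one]
          _ ≤ _ := by gcongr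
    rw [show 4 * x ^ 3 + W.b₂ * x ^ 2 + 2 * W.b₄ * x + W.b₆ =
      (W.b₂ * x ^ 2 + 2 * W.b₄ * x + W.b₆) + 4 * x ^ 3 by ring, v.map_add_eq_of_lt_right l, e]
    simp [pow_succ, mul_assoc]
  have hnum : v (x ^ 4 - W.b₄ * x ^ 2 - 2 * W.b₆ * x - W.b₈) = m ^ 4 := by
    have e : v (x ^ 4) = m * m * m ^ 2 := by rw [map_pow, ← hm]; simp [pow_succ, mul_assoc]
    have hmm2 : m * m ^ 2 ≤ m * m * m ^ 2 := by
      calc m * m ^ 2 = m * 1 * m ^ 2 := by rw [mul_one]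
        _ ≤ _ := by gcongr
    have l : v (- W.b₄ * x ^ 2 - 2 * W.b₆ * x - W.b₈) < v (x ^ 4) := by
      rw [e]
      refine v.map_sub_lt (v.map_sub_lt ?_ ?_) ?_
      · rw [map_mul, map_pow, v.map_neg, ← hm]
        calc _ < v 4 * m * m ^ 2 := by gcongr
          _ ≤ m * m ^ 2 := by gcongr
          _ ≤ _ := hmm2
      · rw [map_mul, map_mul]
        calc v 2 * v W.b₆ * v x ≤ 1 * v W.b₆ * m := by gcongr
          _ = v W.b₆ * m := by rw [one_mul]
          _ < v 4 * m * m := by gcongr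
          _ ≤ m * m ^ 2 := by gcongr
          _ ≤ _ := hmm2
      · calc v W.b₈ < v 4 * m := hb8
          _ = v 4 * m * 1 := by rw [mul_one]
          _ ≤ m * m ^ 2 := by gcongr
          _ ≤ _ := hmm2
    rw [show x ^ 4 - W.b₄ * x ^ 2 - 2 * W.b₆ * x - W.b₈ =
      (- W.b₄ * x ^ 2 - 2 * W.b₆ * x - W.b₈) + x ^ 4 by ring, v.map_add_eq_of_lt_right l, e]
    simp [pow_succ, mul_assoc]
  have hne : 2 * y + W.a₁ * x + W.a₃ ≠ 0 := by
    intro h0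
    rw [← hsq, h0] at hden
    simp at hden
    rcases hden with h | h
    · exact h4pos.ne' (by simpa using h)
    · exact hmpos.ne' h
  have hy : y ≠ W.negY x y := by
    intro h0
    apply hne
    rw [WeierstrassCurve.Affine.negY] at h0
    linear_combination h0
  refine ⟨_, _, _, WeierstrassCurve.Affine.Point.add_self_of_Y_ne hy, ?_⟩
  have key : W.addX x x (W.slope x x y y) * (4 * x ^ 3 + W.b₂ * x ^ 2 + 2 * W.b₄ * x + W.b₆)
      = x ^ 4 - W.b₄ * x ^ 2 - 2 * W.b₆ * x - W.b₈ := by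
    rw [← hsq, W.slope_of_Y_ne rfl hy, WeierstrassCurve.Affine.addX, WeierstrassCurve.Affine.negY]
    have := (W.equation_iff x y).1 h.1
    have e : y - (-y - W.a₁ * x - W.a₃) = 2 * y + W.a₁ * x + W.a₃ := by ring
    rw [e]
    set D := 2 * y + W.a₁ * x + W.a₃ with hD
    have hyD : y ^ 2 + W.a₁ * x * y + W.a₃ * y = x ^ 3 + W.a₂ * x ^ 2 + W.a₄ * x + W.a₆ := this
    field_simp
    simp only [WeierstrassCurve.b₄, WeierstrassCurve.b₆, WeierstrassCurve.b₈]
    rw [hD]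
    grind
  have := congrArg v key
  rw [map_mul, hden, hnum] at this
  by_contra hlt
  rw [not_lt] at hlt
  have : m ^ 4 < m ^ 4 := by
    calc m ^ 4 = _ := this.symm
      _ ≤ m * (v 4 * m ^ 3) := by gcongr
      _ < m * (1 * m ^ 3) := by gcongr
      _ = m ^ 4 := by simp [pow_succ, mul_assoc]
  exact lt_irrefl _ this

lemma large_sub [DecidableEq F] (W : WeierstrassCurve.Affine F) (v : Valuation F Γ) (h2 : v 2 < 1)
    (x₁ y₁ x₂ y₂ : F) (h₁ : W.Nonsingular x₁ y₁) (h₂ : W.Nonsingular x₂ y₂) (hne : x₁ ≠ x₂)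
    (m : Γ) (hm₁ : v x₁ = m) (hm₂ : v x₂ = m) (hx : LargeX W v m) :
    ∃ (x' y' : F) (h' : W.Nonsingular x' y'),
      WeierstrassCurve.Affine.Point.some x₁ y₁ h₁ - WeierstrassCurve.Affine.Point.some x₂ y₂ h₂
        = WeierstrassCurve.Affine.Point.some x' y' h' ∧ m ≤ v x' := by
  obtain ⟨h1, hb2, hb4, hb6, hb8⟩ := hx
  have h4 := val_nat_le_one v h2
  have hmpos : 0 < m := by
    rcases (zero_le : 0 ≤ m).eq_or_lt with h | h
    · rw [← h] at h1; simp at h1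
    · exact h
  have hm2pos : 0 < m ^ 2 := pow_pos hmpos 2
  have hm3pos : 0 < m ^ 3 := pow_pos hmpos 3
  have h4m : v 4 * m ≤ m := by
    calc v 4 * m ≤ 1 * m := by gcongr
      _ = m := one_mul m
  have hm1 : 1 < m := h1.trans_le h4m
  replace hb2 := hb2.trans_le h4m
  replace hb4 := hb4.trans_le h4m
  replace hb6 := hb6.trans_le h4m
  replace hb8 := hb8.trans_le h4m
  have hp12 : m ≤ m ^ 2 := le_self_pow₀ hm1.le (by norm_num)
  have hp23 : m ^ 2 ≤ m ^ 3 := pow_le_pow_right₀ hm1.le (by norm_num)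
  have hp34 : m ^ 3 < m ^ 4 := pow_lt_pow_right₀ hm1 (by norm_num)
  have hadd : v (x₁ + x₂) ≤ m := v.map_add_le hm₁.le hm₂.le
  have hmul : v (x₁ * x₂) = m ^ 2 := by rw [map_mul, hm₁, hm₂, sq]
  rw [sub_eq_add_neg, WeierstrassCurve.Affine.Point.neg_some]
  refine ⟨_, _, _, WeierstrassCurve.Affine.Point.add_of_X_ne hne, ?_⟩
  set u := W.addX x₁ x₂ (W.slope x₁ x₂ y₁ (W.negY x₂ y₂)) with hu
  set w := W.addX x₁ x₂ (W.slope x₁ x₂ y₁ y₂) with hw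
  have hD0 : x₁ - x₂ ≠ 0 := sub_ne_zero.2 hne
  have e₁ := (W.equation_iff x₁ y₁).1 h₁.1
  have e₂ := (W.equation_iff x₂ y₂).1 h₂.1
  have hS : (u + w) * (x₁ - x₂) ^ 2 =
      2 * (x₁ + x₂) * (x₁ * x₂) + W.b₂ * (x₁ * x₂) + W.b₄ * (x₁ + x₂) + W.b₆ := by
    rw [hu, hw, W.slope_of_X_ne hne, W.slope_of_X_ne hne]
    simp only [WeierstrassCurve.Affine.addX, WeierstrassCurve.Affine.negY,
      WeierstrassCurve.b₂, WeierstrassCurve.b₄, WeierstrassCurve.b₆]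
    field_simp
    linear_combination 2 * e₁ + 2 * e₂
  have hP : u * w * (x₁ - x₂) ^ 2 =
      (x₁ * x₂) ^ 2 - W.b₄ * (x₁ * x₂) - W.b₆ * (x₁ + x₂) - W.b₈ := by
    obtain ⟨T, hT⟩ : ∃ T, T = 2 * y₁ * y₂ + (W.a₁ * x₂ + W.a₃) * y₁ + (W.a₁ * x₁ + W.a₃) * y₂ :=
      ⟨_, rfl⟩
    obtain ⟨A, hA⟩ : ∃ A, A = (x₁ ^ 3 + W.a₂ * x₁ ^ 2 + W.a₄ * x₁ + W.a₆) +
      (x₂ ^ 3 + W.a₂ * x₂ ^ 2 + W.a₄ * x₂ + W.a₆) - (W.a₂ + x₁ + x₂) * (x₁ - x₂) ^ 2 := ⟨_, rfl⟩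
    have hw' : w * (x₁ - x₂) ^ 2 = A - T := by
      rw [hw, hA, hT, W.slope_of_X_ne hne]
      simp only [WeierstrassCurve.Affine.addX]
      field_simp
      linear_combination e₁ + e₂
    have hu' : u * (x₁ - x₂) ^ 2 = A + T + (W.a₁ * x₁ + W.a₃) * (W.a₁ * x₂ + W.a₃) := by
      rw [hu, hA, hT, W.slope_of_X_ne hne]
      simp only [WeierstrassCurve.Affine.addX, WeierstrassCurve.Affine.negY]
      field_simp
      linear_combination e₁ + e₂
    have hTT : T ^ 2 + (W.a₁ * x₁ + W.a₃) * (W.a₁ * x₂ + W.a₃) * T =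
        4 * (x₁ ^ 3 + W.a₂ * x₁ ^ 2 + W.a₄ * x₁ + W.a₆) *
          (x₂ ^ 3 + W.a₂ * x₂ ^ 2 + W.a₄ * x₂ + W.a₆) +
        (x₁ ^ 3 + W.a₂ * x₁ ^ 2 + W.a₄ * x₁ + W.a₆) * (W.a₁ * x₂ + W.a₃) ^ 2 +
        (x₂ ^ 3 + W.a₂ * x₂ ^ 2 + W.a₄ * x₂ + W.a₆) * (W.a₁ * x₁ + W.a₃) ^ 2 := by
      rw [hT]
      linear_combination (4 * (y₂ ^ 2 + W.a₁ * x₂ * y₂ + W.a₃ * y₂) + (W.a₁ * x₂ + W.a₃) ^ 2) * e₁ +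
        (4 * (x₁ ^ 3 + W.a₂ * x₁ ^ 2 + W.a₄ * x₁ + W.a₆) + (W.a₁ * x₁ + W.a₃) ^ 2) * e₂
    apply mul_right_cancel₀ (pow_ne_zero 2 hD0)
    have : u * w * (x₁ - x₂) ^ 2 * (x₁ - x₂) ^ 2 =
      A ^ 2 + (W.a₁ * x₁ + W.a₃) * (W.a₁ * x₂ + W.a₃) * A -
        (T ^ 2 + (W.a₁ * x₁ + W.a₃) * (W.a₁ * x₂ + W.a₃) * T) := by
      linear_combination (w * (x₁ - x₂) ^ 2) * hu' +
        (A + T + (W.a₁ * x₁ + W.a₃) * (W.a₁ * x₂ + W.a₃)) * hw'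
    rw [this, hTT, hA]
    simp only [WeierstrassCurve.b₈, WeierstrassCurve.b₄, WeierstrassCurve.b₆]
    ring
  have vS : v (u + w) * v (x₁ - x₂) ^ 2 ≤ m ^ 3 := by
    rw [← map_pow, ← map_mul, hS]
    refine v.map_add_le (v.map_add_le (v.map_add_le ?_ ?_) ?_) ?_
    · rw [map_mul, map_mul, hmul]
      calc v 2 * v (x₁ + x₂) * m ^ 2 ≤ 1 * m * m ^ 2 := by gcongr
        _ = m ^ 3 := by simp [pow_succ, mul_assoc]
    · rw [map_mul, hmul]
      calc v W.b₂ * m ^ 2 ≤ m * m ^ 2 := by gcongr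
        _ = m ^ 3 := by simp [pow_succ, mul_assoc]
    · rw [map_mul]
      calc v W.b₄ * v (x₁ + x₂) ≤ m * m := by gcongr
        _ = m ^ 2 := by simp [pow_succ, mul_assoc]
        _ ≤ _ := hp23
    · exact hb6.le.trans (hp12.trans hp23)
  have vP : v u * v w * v (x₁ - x₂) ^ 2 = m ^ 4 := by
    rw [← map_pow, ← map_mul, ← map_mul, hP]
    have e : v ((x₁ * x₂) ^ 2) = m ^ 4 := by rw [map_pow, hmul]; simp [pow_succ, mul_assoc]
    have l : v (- W.b₄ * (x₁ * x₂) - W.b₆ * (x₁ + x₂) - W.b₈) < v ((x₁ * x₂) ^ 2) := by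
      rw [e]
      refine lt_of_le_of_lt ?_ hp34
      refine v.map_sub_le (v.map_sub_le ?_ ?_) ?_
      · rw [map_mul, hmul, v.map_neg]
        calc v W.b₄ * m ^ 2 ≤ m * m ^ 2 := by gcongr
          _ = m ^ 3 := by simp [pow_succ, mul_assoc]
      · rw [map_mul]
        calc v W.b₆ * v (x₁ + x₂) ≤ m * m := by gcongr
          _ = m ^ 2 := by simp [pow_succ, mul_assoc]
          _ ≤ _ := hp23
      · exact hb8.le.trans (hp12.trans hp23)
    rw [show (x₁ * x₂) ^ 2 - W.b₄ * (x₁ * x₂) - W.b₆ * (x₁ + x₂) - W.b₈ =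
      (- W.b₄ * (x₁ * x₂) - W.b₆ * (x₁ + x₂) - W.b₈) + (x₁ * x₂) ^ 2 by ring,
      v.map_add_eq_of_lt_right l, e]
  have vD : v (x₁ - x₂) ≤ m := v.map_sub_le hm₁.le hm₂.le
  have vDpos : 0 < v (x₁ - x₂) := by
    rw [zero_lt_iff]; exact v.ne_zero_iff.2 hD0
  by_contra hlt
  rw [not_le] at hlt
  have hu0 : 0 ≤ v u := zero_le
  have hwu : v u < v w := by
    by_contra hle
    rw [not_lt] at hle
    have : m ^ 4 < m ^ 4 := by
      calc m ^ 4 = _ := vP.symm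
        _ ≤ v u * v u * m ^ 2 := by gcongr
        _ < m * m * m ^ 2 := by gcongr
        _ = m ^ 4 := by simp [pow_succ, mul_assoc]
    exact lt_irrefl _ this
  have hwpos : 0 < v w := lt_of_le_of_lt zero_le hwu
  rw [v.map_add_eq_of_lt_right hwu] at vS
  have hwD : 0 < v w * v (x₁ - x₂) ^ 2 := mul_pos hwpos (pow_pos vDpos 2)
  have : m ^ 4 < m ^ 4 := by
      calc m ^ 4 = v u * (v w * v (x₁ - x₂) ^ 2) := by rw [← vP]; simp [mul_assoc]
        _ < m * (v w * v (x₁ - x₂) ^ 2) := by gcongr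
        _ ≤ m * m ^ 3 := by gcongr
        _ = m ^ 4 := by simp [pow_succ, mul_assoc]
  exact lt_irrefl _ this

lemma large_nontorsion [DecidableEq F] (W : WeierstrassCurve.Affine F) (v : Valuation F Γ)
    (h2 : v 2 < 1) (x y : F) (h : W.Nonsingular x y) (hx : LargeX W v (v x)) (n : ℤ) (hn : n ≠ 0)
    (h0 : n • WeierstrassCurve.Affine.Point.some x y h = 0) : False := by
  set R := WeierstrassCurve.Affine.Point.some x y h with hR
  have step : ∀ k : ℕ, ∃ (x' y' : F) (h' : W.Nonsingular x' y'),
      (2 ^ k : ℕ) • R = WeierstrassCurve.Affine.Point.some x' y' h' ∧ LargeX W v (v x') ∧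
      ∃ (x'' y'' : F) (h'' : W.Nonsingular x'' y''),
      (2 ^ (k + 1) : ℕ) • R = WeierstrassCurve.Affine.Point.some x'' y'' h'' ∧ v x' < v x'' := by
    intro k
    induction k with
    | zero =>
      refine ⟨x, y, h, by simp [hR], hx, ?_⟩
      obtain ⟨x', y', h', e, l⟩ := large_double W v h2 x y h hx
      exact ⟨x', y', h', by rw [zero_add, pow_one, two_nsmul, e], l⟩
    | succ k ih =>
      obtain ⟨x₁, y₁, h₁, e₁, hx₁, x₂, y₂, h₂, e₂, l⟩ := ih
      have hx₂ : LargeX W v (v x₂) := by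
        have : v 4 * v x₁ ≤ v 4 * v x₂ := by gcongr
        exact ⟨hx₁.one.trans_le this, hx₁.b2.trans_le this, hx₁.b4.trans_le this,
          hx₁.b6.trans_le this, hx₁.b8.trans_le this⟩
      refine ⟨x₂, y₂, h₂, e₂, hx₂, ?_⟩
      obtain ⟨x', y', h', e, l⟩ := large_double W v h2 x₂ y₂ h₂ hx₂
      exact ⟨x', y', h', by rw [pow_succ, mul_comm, mul_nsmul', two_nsmul, e₂, e], l⟩
  let f : W.Point → Γ := fun P => match P with
    | 0 => 0
    | .some x _ _ => v x
  have mono : StrictMono (fun k : ℕ => f ((2 ^ k : ℕ) • R)) := by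
    refine strictMono_nat_of_lt_succ fun k => ?_
    obtain ⟨x₁, y₁, h₁, e₁, -, x₂, y₂, h₂, e₂, l⟩ := step k
    simp only [e₁, e₂]
    exact l
  have hfin : IsOfFinAddOrder R := by
    rw [isOfFinAddOrder_iff_zsmul_eq_zero]
    exact ⟨n, hn, h0⟩
  have hinj : Function.Injective (fun k : ℕ => (2 ^ k : ℕ) • R) := by
    intro a b hab
    exact mono.injective (congrArg f hab)
  have : (Set.range (fun k : ℕ => (2 ^ k : ℕ) • R)).Finite := by
    refine Set.Finite.subset hfin.finite_multiples ?_
    rintro _ ⟨k, rfl⟩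
    exact ⟨2 ^ k, rfl⟩
  exact Set.infinite_range_of_injective hinj this
end
section
variable {F : Type*} [Field F] 

lemma exists_val [CharZero F] : ∃ A : ValuationSubring F, A.valuation 2 < 1 := by
  let S : Subring F := (Int.castRingHom F).range
  let I : Ideal S := Ideal.span {(2 : S)}
  have hI : I ≠ ⊤ := by
    intro h
    rw [Ideal.eq_top_iff_one, Ideal.mem_span_singleton] at h
    obtain ⟨⟨_, n, rfl⟩, hc⟩ := h
    have := congrArg Subtype.val hc
    simp at this
    have h3 : ((1 : ℤ) : F) = ((2 * n : ℤ) : F) := by push_cast; exact this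
    have := Int.cast_injective h3
    omega
  obtain ⟨A, hA, h⟩ := I.image_subset_nonunits_valuationSubring hI
  refine ⟨A, ?_⟩
  have : (2 : F) ∈ A.nonunits := h ⟨2, Ideal.mem_span_singleton_self _, rfl⟩
  exact this

lemma exists_cofinal {Γ : Type*} [LinearOrderedCommGroupWithZero Γ] {L : Type*} [Field L]
    [Algebra L F] [Algebra.IsAlgebraic L F] (v : Valuation F Γ) (x : F) :
    ∃ c : L, 1 ≤ v (algebraMap L F c) ∧ v x ≤ v (algebraMap L F c) := by
  by_cases hx : v x ≤ 1
  · exact ⟨1, by simp, by simpa⟩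
  rw [not_le] at hx
  by_contra! hcon
  have hintg : IsIntegral L x := Algebra.IsIntegral.isIntegral x
  set p := minpoly L x with hp
  have hmon : p.Monic := minpoly.monic hintg
  have hdeg : 0 < p.natDegree := minpoly.natDegree_pos hintg
  have hsum : x ^ p.natDegree = - ∑ i ∈ Finset.range p.natDegree, algebraMap L F (p.coeff i) * x ^ i := by
    have := minpoly.aeval L x
    rw [← hp, Polynomial.aeval_eq_sum_range, Finset.sum_range_succ] at this
    simp only [Algebra.smul_def, hmon.coeff_natDegree, map_one, one_mul] at this
    linear_combination this
  have hlt : v (∑ i ∈ Finset.range p.natDegree, algebraMap L F (p.coeff i) * x ^ i)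
      < v x ^ p.natDegree := by
    refine v.map_sum_lt (pow_ne_zero _ (zero_lt_one.trans hx).ne') fun i hi => ?_
    rw [Finset.mem_range] at hi
    have hc : v (algebraMap L F (p.coeff i)) < v x := by
      by_cases h1 : 1 ≤ v (algebraMap L F (p.coeff i))
      · exact hcon _ h1
      · exact (not_le.1 h1).trans hx
    have hpos : 0 < v x ^ i := pow_pos (zero_lt_one.trans hx) i
    rw [map_mul, map_pow]
    calc _ < v x * v x ^ i := by gcongr
      _ = v x ^ (i + 1) := by rw [pow_succ, mul_comm]
      _ ≤ _ := pow_le_pow_right₀ hx.le hi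
  rw [← v.map_neg, ← hsum, map_pow] at hlt
  exact lt_irrefl _ hlt

lemma exists_large_finset {Γ : Type*} [LinearOrderedCommGroupWithZero Γ] {L : Type*} [Field L]
    [Algebra L F] [Algebra.IsAlgebraic L F] (v : Valuation F Γ) (s : Finset F) :
    ∃ c : L, 1 ≤ v (algebraMap L F c) ∧ ∀ x ∈ s, v x ≤ v (algebraMap L F c) := by
  classical
  induction s using Finset.induction_on with
  | empty => exact ⟨1, by simp, by simp⟩
  | insert a s ha ih =>
    obtain ⟨c, h1, hc⟩ := ih
    obtain ⟨d, h1', hd⟩ := exists_cofinal (L := L) v a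
    refine ⟨c * d, ?_, ?_⟩
    · rw [map_mul, map_mul]; exact one_le_mul h1 h1'
    · intro x hx
      rw [map_mul, map_mul]
      rcases Finset.mem_insert.1 hx with rfl | hx
      · exact hd.trans (le_mul_of_one_le_left zero_le h1)
      · exact (hc x hx).trans (le_mul_of_one_le_right zero_le h1')



end
universe u
/-- An algebraically closed field of characteristic zero is an infinite algebraic extension
of some subfield. -/
lemma exists_base (F : Type u) [Field F] [IsAlgClosed F] [CharZero F] :
    ∃ (M : Type u) (_ : Field M) (_ : Algebra M F), Algebra.IsAlgebraic M F ∧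
      ¬ FiniteDimensional M F := by
  obtain ⟨ι, x, hx⟩ := exists_isTranscendenceBasis' ℤ F
  let A := MvPolynomial ι ℤ
  let _ : Algebra A F := (MvPolynomial.aeval (R := ℤ) x).toRingHom.toAlgebra
  have hinj : Function.Injective (algebraMap A F) := hx.1
  have : FaithfulSMul A F := (faithfulSMul_iff_algebraMap_injective A F).2 hinj
  have halg : Algebra.IsAlgebraic A F := by
    have := hx.isAlgebraic
    refine ⟨fun z => ?_⟩
    refine IsAlgebraic.of_ringHom_of_comp_eq (S := Algebra.adjoin ℤ (Set.range x)) (B := F)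
      (hx.1.aevalEquiv : A ≃ₐ[ℤ] _).toRingEquiv.toRingHom (RingHom.id F) ?_ ?_ ?_ ?_
    · exact this.isAlgebraic z
    · exact (hx.1.aevalEquiv).surjective
    · exact Function.injective_id
    · apply RingHom.ext
      intro a
      exact (hx.1.algebraMap_aevalEquiv a)
  let M := FractionRing A
  let _ : Algebra M F := FractionRing.liftAlgebra A F
  have : IsScalarTower A M F := FractionRing.isScalarTower_liftAlgebra A F
  refine ⟨M, inferInstance, inferInstance, ?_, ?_⟩
  · exact (IsFractionRing.comap_isAlgebraic_iff (A := A) (K := M) (C := F)).1 halg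
  · intro hfd
    set d := Module.finrank M F
    let q : Polynomial A := Polynomial.X ^ (d + 1) - Polynomial.C 2
    have hmon : q.Monic := Polynomial.monic_X_pow_sub_C _ (by omega)
    have hdeg : q.degree = (d + 1 : ℕ) := Polynomial.degree_X_pow_sub_C (by omega) _
    have hirr : Irreducible q := by
      have h2p : Prime (2 : A) := by
        have : Prime (MvPolynomial.C (2 : ℤ) : A) := (MvPolynomial.prime_C_iff ι).2 Int.prime_two
        simpa using this
      have hprime : (Ideal.span {(2 : A)}).IsPrime := (Ideal.span_singleton_prime h2p.ne_zero).2 h2p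
      refine Polynomial.irreducible_of_eisenstein_criterion hprime ?_ ?_ ?_ ?_ hmon.isPrimitive
      · rw [hmon.leadingCoeff]
        intro h
        exact hprime.ne_top ((Ideal.eq_top_iff_one _).2 h)
      · intro n hn
        rw [hdeg] at hn
        have hn' : n < d + 1 := by exact_mod_cast hn
        simp only [q, Polynomial.coeff_sub, Polynomial.coeff_X_pow, Polynomial.coeff_C]
        rw [if_neg (by omega), zero_sub]
        refine neg_mem ?_
        split_ifs
        · exact Ideal.mem_span_singleton_self _
        · exact zero_mem _
      · rw [hdeg]; exact_mod_cast Nat.succ_pos d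
      · simp only [q, Polynomial.coeff_sub, Polynomial.coeff_X_pow, Polynomial.coeff_C]
        rw [if_neg (by omega), zero_sub, neg_mem_iff, Ideal.span_singleton_pow,
          Ideal.mem_span_singleton, if_pos trivial]
        rintro ⟨c, hc⟩
        refine h2p.not_isUnit (isUnit_iff_dvd_one.2 ⟨c, ?_⟩)
        have : (2 : A) * 1 = 2 * (2 * c) := by rw [mul_one, ← mul_assoc, ← pow_two]; exact hc
        exact mul_left_cancel₀ h2p.ne_zero this
    have hirr' : Irreducible (q.map (algebraMap A M)) :=
      (hmon.isPrimitive.irreducible_iff_irreducible_map_fraction_map (K := M)).1 hirr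
    obtain ⟨α, hα⟩ := IsAlgClosed.exists_pow_nat_eq (2 : F) (n := d + 1) (by omega)
    have hroot : Polynomial.aeval α (q.map (algebraMap A M)) = 0 := by
      simp only [q, Polynomial.map_sub, Polynomial.map_pow, Polynomial.map_X, Polynomial.map_C,
        map_sub, map_pow, Polynomial.aeval_X, Polynomial.aeval_C, hα]
      rw [map_ofNat, map_ofNat, sub_self]
    have := minpoly.eq_of_irreducible_of_monic hirr' hroot (hmon.map _)
    have h1 := minpoly.natDegree_le (A := M) α
    rw [← this, hmon.natDegree_map, Polynomial.natDegree_X_pow_sub_C] at h1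
    omega

lemma core_point {F : Type*} [Field F] [IsAlgClosed F] [CharZero F] [DecidableEq F]
    {L : Type*} [Field L] [Algebra L F] [Algebra.IsAlgebraic L F] (WL : WeierstrassCurve L)
    (hΔ : (WL.baseChange F).Δ ≠ 0) (σ : F →ₐ[L] F) (x : F) (hσ : x ≠ σ x) :
    ∃ P : (WL.baseChange F).toAffine.Point, ∀ n : ℤ, n ≠ 0 →
      n • (P - WeierstrassCurve.Affine.Point.map (W' := WL) σ P) ≠ 0 := by
  obtain ⟨A, h2⟩ := exists_val (F := F)
  set v := A.valuation with hv
  set W : WeierstrassCurve.Affine F := WL.baseChange F with hW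
  obtain ⟨c', hc1, hc⟩ := exists_large_finset (L := L) v {x, σ x, W.b₂, W.b₄, W.b₆, W.b₈}
  set c : F := algebraMap L F (c' / 8) with hcdef
  have hc8 : algebraMap L F c' = 2 * (4 * c) := by
    rw [hcdef, map_div₀, map_ofNat]; ring
  have hlt : v (algebraMap L F c') < v 4 * v c := by
    have hpos : 0 < v 4 * v c := by
      rw [← map_mul]
      refine zero_lt_iff.2 fun h => ?_
      rw [hc8, map_mul, h, mul_zero] at hc1
      exact absurd hc1 (not_le.2 zero_lt_one)
    rw [hc8, map_mul, map_mul]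
    calc _ < 1 * (v 4 * v c) := by gcongr
      _ = _ := one_mul _
  have hlarge : LargeX W v (v c) := by
    refine ⟨hc1.trans_lt hlt, ?_, ?_, ?_, ?_⟩ <;> refine (hc _ ?_).trans_lt hlt <;> simp
  have hlt' : v (algebraMap L F c') < v c :=
    hlt.trans_le (mul_le_of_le_one_left zero_le (val_nat_le_one v h2).le)
  have hx1 : v (x + c) = v c := v.map_add_eq_of_lt_right ((hc x (by simp)).trans_lt hlt')
  have hx2 : v (σ x + c) = v c := v.map_add_eq_of_lt_right ((hc (σ x) (by simp)).trans_lt hlt')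
  obtain ⟨y, hy⟩ : ∃ y, W.Equation (x + c) y := by
    obtain ⟨s, hs⟩ := IsAlgClosed.exists_pow_nat_eq ((W.a₁ * (x + c) + W.a₃) ^ 2 + 4 *
      ((x + c) ^ 3 + W.a₂ * (x + c) ^ 2 + W.a₄ * (x + c) + W.a₆)) (n := 2) (by norm_num)
    refine ⟨(s - (W.a₁ * (x + c) + W.a₃)) / 2, ?_⟩
    rw [WeierstrassCurve.Affine.equation_iff]
    linear_combination hs / 4
  have hns : W.Nonsingular (x + c) y :=
    (WeierstrassCurve.Affine.equation_iff_nonsingular_of_Δ_ne_zero hΔ).1 hy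
  refine ⟨WeierstrassCurve.Affine.Point.some _ _ hns, fun n hn h0 => ?_⟩
  rw [WeierstrassCurve.Affine.Point.map_some] at h0
  have hσc : σ (x + c) = σ x + c := by rw [map_add, hcdef, σ.commutes]
  obtain ⟨x', y', h', e, l⟩ := large_sub W v h2 (x + c) y (σ (x + c)) (σ y) hns
    ((WeierstrassCurve.Affine.baseChange_nonsingular (W := WL) σ.injective ..).mpr hns)
    (by rw [hσc]; simpa using hσ) (v c) hx1 (by rw [hσc, hx2]) hlarge
  rw [e] at h0
  have hle : v 4 * v c ≤ v 4 * v x' := by gcongr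
  exact large_nontorsion W v h2 x' y' h'
    ⟨hlarge.one.trans_le hle, hlarge.b2.trans_le hle, hlarge.b4.trans_le hle,
      hlarge.b6.trans_le hle, hlarge.b8.trans_le hle⟩ n hn h0

/-- An element of an abelian group that vanishes after tensoring with the rationals is torsion. -/
lemma torsion_of_tensor_zero {G : Type*} [AddCommGroup G] (g : G)
    (h : (1 : ℚ) ⊗ₜ[ℤ] g = 0) : ∃ n : ℤ, n ≠ 0 ∧ n • g = 0 := by
  have hloc : IsLocalizedModule (nonZeroDivisors ℤ) (TensorProduct.mk ℤ ℚ G 1) :=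
    (isLocalizedModule_iff_isBaseChange (nonZeroDivisors ℤ) ℚ _).2 (TensorProduct.isBaseChange ℤ G ℚ)
  obtain ⟨m, hm⟩ := (IsLocalizedModule.eq_zero_iff (nonZeroDivisors ℤ)
    (TensorProduct.mk ℤ ℚ G 1)).1 h
  exact ⟨m, nonZeroDivisors.ne_zero m.2, hm⟩

lemma core_span {F : Type*} [Field F] [IsAlgClosed F] [CharZero F] [DecidableEq F]
    {L : Type*} [Field L] [Algebra L F] [Algebra.IsAlgebraic L F] (WL : WeierstrassCurve L)
    (W : WeierstrassCurve.Affine F) (hW : W = WL.baseChange F)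
    (hΔ : W.Δ ≠ 0) (hL : ¬ Function.Surjective (algebraMap L F))
    (T : Set W.Point) (hT : ∀ x y h, WeierstrassCurve.Affine.Point.some x y h ∈ T →
      x ∈ (algebraMap L F).range ∧ y ∈ (algebraMap L F).range)
    (hspan : Submodule.span ℚ ((fun P : W.Point => (1 : ℚ) ⊗ₜ[ℤ] P) '' T) = ⊤) : False := by
  subst hW
  obtain ⟨σ, x, hσ⟩ : ∃ (σ : F →ₐ[L] F) (x : F), x ≠ σ x := by
    have : CharZero L := (algebraMap L F).charZero_iff (algebraMap L F).injective |>.2 inferInstance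
    have : IsAlgClosure L F := ⟨inferInstance, inferInstance⟩
    have : IsGalois L F := inferInstance
    by_contra! hcon
    apply hL
    intro x
    exact (InfiniteGalois.mem_range_algebraMap_iff_fixed x).2 fun f => (hcon f.toAlgHom x).symm
  obtain ⟨P, hP⟩ := core_point WL hΔ σ x hσ
  let φ := (WeierstrassCurve.Affine.Point.map (W' := WL) σ).toIntLinearMap
  have heq : φ.baseChange ℚ = LinearMap.id := by
    refine LinearMap.ext_on hspan ?_
    rintro _ ⟨Q, hQ, rfl⟩
    simp only [LinearMap.baseChange_tmul, LinearMap.id_apply]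
    congr 1
    change WeierstrassCurve.Affine.Point.map (W' := WL) σ Q = Q
    match Q, hQ with
    | .zero, _ => rfl
    | .some x y h, hQ =>
      obtain ⟨⟨a, rfl⟩, ⟨b, rfl⟩⟩ := hT x y h hQ
      rw [WeierstrassCurve.Affine.Point.map_some]
      simp only [σ.commutes]
  have h1 : (1 : ℚ) ⊗ₜ[ℤ] (P - WeierstrassCurve.Affine.Point.map (W' := WL) σ P) = 0 := by
    rw [TensorProduct.tmul_sub, sub_eq_zero]
    have := LinearMap.congr_fun heq ((1 : ℚ) ⊗ₜ[ℤ] P)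
    rw [LinearMap.baseChange_tmul] at this
    exact this.symm
  obtain ⟨n, hn, h0⟩ := torsion_of_tensor_zero _ h1
  exact hP n hn h0

/-- The coordinates of a point (zero at infinity). -/
def coordSet {F : Type*} [Field F] {W : WeierstrassCurve.Affine F} : W.Point → Set F
  | .zero => ∅
  | .some x y _ => {x, y}

lemma coordSet_finite {F : Type*} [Field F] {W : WeierstrassCurve.Affine F} (P : W.Point) :
    (coordSet P).Finite := by
  match P with
  | .zero => exact Set.finite_empty
  | .some x y _ => exact Set.toFinite {x, y}

open scoped Classical in
theorem statement6 (F : Type*) [Field F] [IsAlgClosed F] [CharZero F]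
    (W : WeierstrassCurve.Affine F) (hΔ : W.Δ ≠ 0) :
    Cardinal.aleph0 ≤ Module.rank ℚ (ℚ ⊗[ℤ] W.Point) := by
  by_contra hcon
  rw [not_le] at hcon
  have hfin : Module.Finite ℚ (ℚ ⊗[ℤ] W.Point) := Module.rank_lt_aleph0_iff.1 hcon
  have htop : Submodule.span ℚ ((fun P : W.Point => (1 : ℚ) ⊗ₜ[ℤ] P) '' Set.univ) = ⊤ := by
    rw [Set.image_univ, eq_top_iff]
    intro z _
    induction z using TensorProduct.induction_on with
    | zero => exact zero_mem _
    | add a b ha hb => exact add_mem (ha trivial) (hb trivial)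
    | tmul q P =>
      have : q ⊗ₜ[ℤ] P = q • ((1 : ℚ) ⊗ₜ[ℤ] P) := by
        rw [TensorProduct.smul_tmul', smul_eq_mul, mul_one]
      rw [this]
      exact Submodule.smul_mem _ _ (Submodule.subset_span ⟨P, rfl⟩)
  obtain ⟨T, hTfin, hT⟩ : ∃ T : Set W.Point, T.Finite ∧
      Submodule.span ℚ ((fun P : W.Point => (1 : ℚ) ⊗ₜ[ℤ] P) '' T) = ⊤ := by
    have hfg : (Submodule.span ℚ ((fun P : W.Point => (1 : ℚ) ⊗ₜ[ℤ] P) '' Set.univ)).FG := by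
      rw [htop]; exact Module.Finite.fg_top
    obtain ⟨t, ht, hts⟩ := Submodule.fg_span_iff_fg_span_finset_subset _ |>.1 hfg
    obtain ⟨T, -, hTfin, hTt⟩ := Set.exists_subset_image_finite_and
      (p := fun u => u = (t : Set (ℚ ⊗[ℤ] W.Point))) |>.1
      ⟨(t : Set _), ht, t.finite_toSet, rfl⟩
    exact ⟨T, hTfin, by rw [hTt, ← hts, htop]⟩
  obtain ⟨M, _, _, halg, hinf⟩ := exists_base F
  set S : Set F := {W.a₁, W.a₂, W.a₃, W.a₄, W.a₆} ∪ ⋃ P ∈ T, coordSet P with hS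
  have hSfin : S.Finite := (Set.toFinite _).union (hTfin.biUnion fun P _ => coordSet_finite P)
  let L := IntermediateField.adjoin M S
  have hsub : S ⊆ L := IntermediateField.subset_adjoin M S
  have hLfin : FiniteDimensional M L := by
    have : Finite S := hSfin
    exact IntermediateField.finiteDimensional_adjoin fun x _ => Algebra.IsIntegral.isIntegral x
  have hrange : ∀ z ∈ S, z ∈ (algebraMap L F).range := fun z hz => ⟨⟨z, hsub hz⟩, rfl⟩
  let WL : WeierstrassCurve L := ⟨⟨W.a₁, hsub (by simp [hS])⟩, ⟨W.a₂, hsub (by simp [hS])⟩,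
    ⟨W.a₃, hsub (by simp [hS])⟩, ⟨W.a₄, hsub (by simp [hS])⟩, ⟨W.a₆, hsub (by simp [hS])⟩⟩
  have : Algebra.IsAlgebraic L F := Algebra.IsAlgebraic.tower_top (K := M) L
  refine core_span WL W rfl hΔ ?_ T ?_ hT
  · intro hsurj
    apply hinf
    exact Module.Finite.of_surjective (L.val.toLinearMap) hsurj
  · intro x y h hmem
    have hc : coordSet (WeierstrassCurve.Affine.Point.some x y h) ⊆ S :=
      (Set.subset_biUnion_of_mem (u := fun P => coordSet P) hmem).trans Set.subset_union_right
    exact ⟨hrange x (hc (by simp [coordSet])), hrange y (hc (by simp [coordSet]))⟩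
end

section
/- Let $p$ be a prime, let $F$ be an algebraically closed field of characteristic $p$ that is not algebraic over its prime field $\mathbb{F}_p$ (i.e. some element of $F$ is transcendental over $\mathbb{F}_p$), and let $W$ be an elliptic curve over $F$ (a Weierstrass curve over $F$ with nonzero discriminant). Then the rank of the group $W(F)$ of $F$-rational points of $W$ is infinite, i.e. the $\mathbb{Q}$-vector space $W(F) \otimes_{\mathbb{Z}} \mathbb{Q}$ is infinite-dimensional. -/
open TensorProduct

/-- finite rank gives a finite set spanning up to torsion. -/
lemma exists_finite_span_of_rank_lt {M : Type*} [AddCommGroup M]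
    (h : Module.rank ℤ M < Cardinal.aleph0) :
    ∃ S : Set M, S.Finite ∧ ∀ P : M, ∃ n : ℤ, n ≠ 0 ∧ n • P ∈ Submodule.span ℤ S := by
  obtain ⟨S, hS, hli⟩ := exists_set_linearIndependent ℤ M
  have hfin : S.Finite := by
    rw [← Cardinal.lt_aleph0_iff_set_finite, hS]; exact h
  refine ⟨S, hfin, ?_⟩
  have h1 := Submodule.rank_quotient_add_rank (Submodule.span ℤ S)
  rw [rank_span_set hli, hS] at h1
  have h2 : Module.rank ℤ (M ⧸ Submodule.span ℤ S) = 0 := by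
    have h3 : Module.rank ℤ (M ⧸ Submodule.span ℤ S) + Module.rank ℤ M = 0 + Module.rank ℤ M := by
      rw [h1, zero_add]
    exact (Cardinal.add_right_inj_of_lt_aleph0 h).1 h3
  rw [rank_eq_zero_iff] at h2
  intro P
  obtain ⟨n, hn, hnP⟩ := h2 (Submodule.Quotient.mk P)
  refine ⟨n, hn, ?_⟩
  rwa [← Submodule.Quotient.mk_smul, Submodule.Quotient.mk_eq_zero] at hnP

lemma rank_le_of_hom {M N : Type*} [AddCommGroup M] [AddCommGroup N] (f : M →+ N)
    (hf : Function.Injective f) (h : Cardinal.aleph0 ≤ Module.rank ℤ M) :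
    Cardinal.aleph0 ≤ Module.rank ℤ N := by
  have := LinearMap.lift_rank_le_of_injective f.toIntLinearMap hf
  have h2 := (Cardinal.lift_le.2 h).trans this
  simpa using h2

section
variable {F : Type*} [Field F]

open WeierstrassCurve WeierstrassCurve.Affine in
lemma vc_equation (W : WeierstrassCurve F) (C : VariableChange F) (x y : F) :
    (C • W).toAffine.Equation x y ↔
    W.toAffine.Equation (C.u ^ 2 * x + C.r) (C.u ^ 3 * y + C.u ^ 2 * C.s * x + C.t) := by
  rw [Affine.equation_iff', Affine.equation_iff']
  have hu : (C.u : F) ≠ 0 := C.u.ne_zero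
  have : (C.u : F)^6 * (y ^ 2 + (C • W).a₁ * x * y + (C • W).a₃ * y - (x ^ 3 + (C • W).a₂ * x ^ 2 + (C • W).a₄ * x + (C • W).a₆))
    = (C.u ^ 3 * y + C.u ^ 2 * C.s * x + C.t) ^ 2 + W.a₁ * (C.u ^ 2 * x + C.r) * (C.u ^ 3 * y + C.u ^ 2 * C.s * x + C.t) + W.a₃ * (C.u ^ 3 * y + C.u ^ 2 * C.s * x + C.t)
     - ((C.u ^ 2 * x + C.r) ^ 3 + W.a₂ * (C.u ^ 2 * x + C.r) ^ 2 + W.a₄ * (C.u ^ 2 * x + C.r) + W.a₆) := by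
    simp only [variableChange_def, Units.val_inv_eq_inv_val]
    field_simp
    ring
  rw [← this]
  simp [hu]

open WeierstrassCurve WeierstrassCurve.Affine in
lemma vc_slope [DecidableEq F] (W : WeierstrassCurve F) (C : VariableChange F) (x₁ x₂ y₁ y₂ : F)
    (h : ¬(x₁ = x₂ ∧ y₁ = (C • W).toAffine.negY x₂ y₂)) 
    (hh : ¬(C.u ^ 2 * x₁ + C.r = C.u ^ 2 * x₂ + C.r ∧ C.u ^ 3 * y₁ + C.u ^ 2 * C.s * x₁ + C.t = W.toAffine.negY (C.u ^ 2 * x₂ + C.r) (C.u ^ 3 * y₂ + C.u ^ 2 * C.s * x₂ + C.t)))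
    (h1 : (C • W).toAffine.Equation x₁ y₁) (h2 : (C • W).toAffine.Equation x₂ y₂):
    W.toAffine.slope (C.u ^ 2 * x₁ + C.r) (C.u ^ 2 * x₂ + C.r) (C.u ^ 3 * y₁ + C.u ^ 2 * C.s * x₁ + C.t) (C.u ^ 3 * y₂ + C.u ^ 2 * C.s * x₂ + C.t)
     = C.u * (C • W).toAffine.slope x₁ x₂ y₁ y₂ + C.s := by
  have hu : (C.u : F) ≠ 0 := C.u.ne_zero
  by_cases hx : x₁ = x₂
  · subst hx
    have hy : y₁ ≠ (C • W).toAffine.negY x₁ y₂ := fun e => h ⟨rfl, e⟩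
    have hy' := fun e => hh ⟨rfl, e⟩
    have hyy : y₁ = y₂ := Affine.Y_eq_of_Y_ne h1 h2 rfl hy
    subst hyy
    rw [slope_of_Y_ne rfl hy, slope_of_Y_ne rfl hy']
    rw [← sub_ne_zero] at hy
    replace hy' := sub_ne_zero.2 hy'
    rw [← mul_right_inj' (mul_ne_zero hy hy')]
    have e : (C.u ^ 3 * y₁ + C.u ^ 2 * C.s * x₁ + C.t) - W.toAffine.negY (C.u ^ 2 * x₁ + C.r) (C.u ^ 3 * y₁ + C.u ^ 2 * C.s * x₁ + C.t) = C.u ^ 3 * (y₁ - (C • W).toAffine.negY x₁ y₁) := by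
      simp only [negY, variableChange_def, Units.val_inv_eq_inv_val]
      field_simp
      ring
    rw [e]
    field_simp
    simp only [negY, variableChange_def, Units.val_inv_eq_inv_val]
    field_simp
    ring
  · rw [slope_of_X_ne hx, slope_of_X_ne (by simpa [hu] using hx)]
    have := sub_ne_zero.2 hx
    have h3 : (C.u ^ 2 * x₁ + C.r) - (C.u ^ 2 * x₂ + C.r) = (C.u:F) ^ 2 * (x₁ - x₂) := by ring
    rw [h3]
    field_simp
    ring

open WeierstrassCurve WeierstrassCurve.Affine in
/-- The injective group homomorphism given by a change of variables. -/
lemma vc_hom [DecidableEq F] (W : WeierstrassCurve F) (hW : W.Δ ≠ 0) (C : VariableChange F) :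
    ∃ f : (C • W).toAffine.Point →+ W.toAffine.Point, Function.Injective f := by
  have hu : (C.u : F) ≠ 0 := C.u.ne_zero
  have ns : ∀ {x y : F}, (C • W).toAffine.Nonsingular x y → W.toAffine.Nonsingular (C.u ^ 2 * x + C.r) (C.u ^ 3 * y + C.u ^ 2 * C.s * x + C.t) := by
    intro x y h
    exact (equation_iff_nonsingular_of_Δ_ne_zero (W := W) hW).1 ((vc_equation W C x y).1 h.1)
  have key : ∀ x₁ y₁ x₂ y₂ : F, (x₁ = x₂ ∧ y₁ = (C • W).toAffine.negY x₂ y₂) ↔ (C.u ^ 2 * x₁ + C.r = C.u ^ 2 * x₂ + C.r ∧ C.u ^ 3 * y₁ + C.u ^ 2 * C.s * x₁ + C.t = W.toAffine.negY (C.u ^ 2 * x₂ + C.r) (C.u ^ 3 * y₂ + C.u ^ 2 * C.s * x₂ + C.t)) := by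
    intro x₁ y₁ x₂ y₂
    have e : ∀ x₁, (C.u ^ 3 * y₁ + C.u ^ 2 * C.s * x₁ + C.t) - W.toAffine.negY (C.u ^ 2 * x₁ + C.r) (C.u ^ 3 * y₂ + C.u ^ 2 * C.s * x₁ + C.t) = C.u ^ 3 * (y₁ - (C • W).toAffine.negY x₁ y₂) := by
      intro x₁
      simp only [negY, variableChange_def, Units.val_inv_eq_inv_val]
      field_simp
      ring
    constructor
    · rintro ⟨rfl, h⟩
      refine ⟨rfl, ?_⟩
      rw [← sub_eq_zero, e, h, sub_self, mul_zero]
    · rintro ⟨h, h'⟩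
      have : x₁ = x₂ := by simpa [hu] using h
      subst this
      refine ⟨rfl, ?_⟩
      rw [← sub_eq_zero, e] at h'
      simpa [hu, sub_eq_zero] using h'
  refine ⟨⟨⟨fun P => match P with
    | 0 => 0
    | .some x y h => .some _ _ (ns h), rfl⟩, ?_⟩, ?_⟩
  · rintro (_ | ⟨x₁, y₁, h₁⟩) (_ | ⟨x₂, y₂, h₂⟩)
    any_goals rfl
    by_cases hxy : x₁ = x₂ ∧ y₁ = (C • W).toAffine.negY x₂ y₂
    · rw [Point.add_of_Y_eq hxy.left hxy.right]
      have := (key x₁ y₁ x₂ y₂).1 hxy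
      exact (Point.add_of_Y_eq this.1 this.2).symm
    · have h' := mt (key x₁ y₁ x₂ y₂).2 hxy
      rw [Point.add_some hxy]
      change Point.some _ _ _ = Point.some _ _ (ns h₁) + Point.some _ _ (ns h₂)
      rw [Point.add_some h', Point.some.injEq, vc_slope W C x₁ x₂ y₁ y₂ hxy h' h₁.1 h₂.1]
      simp only [addX, addY, negAddY, negY, variableChange_def, Units.val_inv_eq_inv_val]
      constructor
      · field_simp
        ring
      · field_simp
        ring
  · rintro (_ | ⟨x₁, y₁, h₁⟩) (_ | ⟨x₂, y₂, h₂⟩) h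
    · rfl
    · cases h
    · cases h
    · change Point.some _ _ (ns h₁) = Point.some _ _ (ns h₂) at h
      rw [Point.some.injEq] at h
      rw [Point.some.injEq]
      have h1 : x₁ = x₂ := by simpa [hu] using h.1
      subst h1
      refine ⟨rfl, ?_⟩
      simpa [hu] using h.2
end

open TensorProduct
lemma rank_tensor_aux.{u, v, u₁, u₂} {R : Type u₁} {K : Type u₂} [CommRing R] [IsDomain R] [Field K] [Algebra R K] [IsFractionRing R K]
    {M : Type u} {N : Type v} [AddCommGroup M] [Module R M] [AddCommGroup N] [Module R N] [Module K N]
    [IsScalarTower R K N] (f : M →ₗ[R] N) (hf : IsBaseChange K f) (c : Cardinal.{0})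
    (h : Cardinal.lift c ≤ Module.rank R M) :
    Cardinal.lift c ≤ Module.rank K N := by
  rw [IsLocalization.rank_eq (R := R) K (nonZeroDivisors R) le_rfl]
  have : IsLocalizedModule (nonZeroDivisors R) f :=
    (isLocalizedModule_iff_isBaseChange (nonZeroDivisors R) K _).2 hf
  have := IsLocalizedModule.lift_rank_eq (nonZeroDivisors R) f le_rfl
  have h2 := Cardinal.lift_le.{v}.2 h
  rw [← this] at h2
  rw [← Cardinal.lift_le.{u}]
  simpa using h2

lemma rank_tensor_le {M : Type*} [AddCommGroup M] (h : Cardinal.aleph0 ≤ Module.rank ℤ M) :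
    Cardinal.aleph0 ≤ Module.rank ℚ (ℚ ⊗[ℤ] M) := by
  simpa using rank_tensor_aux _ (TensorProduct.isBaseChange ℤ M ℚ) Cardinal.aleph0 (by simpa using h)

open Polynomial

section height
variable {k : Type*} [Field k]

lemma form4_natDegree_le (e0 e1 e2 e3 e4 a b : k[X]) (n : ℕ) (ha : a.natDegree ≤ n) (hb : b.natDegree ≤ n) :
    (e0 * a^4 + e1 * (a^3*b) + e2 * (a^2*b^2) + e3*(a*b^3) + e4*b^4).natDegree ≤
      (e0.natDegree + e1.natDegree + e2.natDegree + e3.natDegree + e4.natDegree) + 4 * n := by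
  have hm : ∀ i j : ℕ, i + j = 4 → (a^i * b^j).natDegree ≤ 4 * n := by
    intro i j hij
    calc (a^i * b^j).natDegree ≤ i * a.natDegree + j * b.natDegree :=
          natDegree_mul_le.trans (add_le_add natDegree_pow_le natDegree_pow_le)
      _ ≤ i * n + j * n := by gcongr
      _ = 4 * n := by rw [← add_mul, hij]
  have h0 := hm 4 0 rfl
  have h1 := hm 3 1 rfl
  have h2 := hm 2 2 rfl
  have h3 := hm 1 3 rfl
  have h4 := hm 0 4 rfl
  simp only [pow_zero, pow_one, mul_one, one_mul] at h0 h1 h2 h3 h4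
  refine natDegree_add_le_of_degree_le (natDegree_add_le_of_degree_le (natDegree_add_le_of_degree_le (natDegree_add_le_of_degree_le ?_ ?_) ?_) ?_) ?_ <;>
  refine natDegree_mul_le.trans ?_ <;> omega

/-- numerator of the doubling map -/
noncomputable def dblN {R : Type*} [CommRing R] (V : WeierstrassCurve R) (a b : R) : R :=
  a^4 - V.b₄ * a^2*b^2 - 2 * V.b₆ * a * b^3 - V.b₈ * b^4
/-- denominator of the doubling map -/
noncomputable def dblD {R : Type*} [CommRing R] (V : WeierstrassCurve R) (a b : R) : R :=
  4 * a^3 * b + V.b₂ * a^2*b^2 + 2 * V.b₄ * a * b^3 + V.b₆ * b^4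

lemma dbl_cofactor {R : Type*} [CommRing R] (W : WeierstrassCurve R) :
   ∃ e f g h : Fin 5 → R, ∀ a b : R,
     (e 0 * a^4 + e 1 * (a^3*b) + e 2 * (a^2*b^2) + e 3*(a*b^3) + e 4*b^4) * dblN W a b
     + (f 0 * a^4 + f 1 * (a^3*b) + f 2 * (a^2*b^2) + f 3*(a*b^3) + f 4*b^4) * dblD W a b = W.Δ * a^8
    ∧ (g 0 * a^4 + g 1 * (a^3*b) + g 2 * (a^2*b^2) + g 3*(a*b^3) + g 4*b^4) * dblN W a b
     + (h 0 * a^4 + h 1 * (a^3*b) + h 2 * (a^2*b^2) + h 3*(a*b^3) + h 4*b^4) * dblD W a b = W.Δ * b^8 := by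
  refine ⟨![(-W.b₂ ^ 2 * W.b₈ + 9 * W.b₂ * W.b₄ * W.b₆ - 8 * W.b₄ ^ 3 - 27 * W.b₆ ^ 2),
     2 * (2 * W.b₂ * W.b₄ * W.b₈ - 2 * W.b₄ ^ 2 * W.b₆ - 10 * W.b₆ * W.b₈),
      (-W.b₂ * W.b₆ * W.b₈ + W.b₄ * W.b₆ ^ 2) + 4 * (3 * W.b₄ ^ 2 * W.b₈ - 3 * W.b₄ * W.b₆ ^ 2),
      2 * (3 * W.b₄ * W.b₆ * W.b₈ - 3 * W.b₆ ^ 3), 0],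
     ![(-W.b₂ * W.b₄ * W.b₈ + W.b₄ ^ 2 * W.b₆ + 5 * W.b₆ * W.b₈),
        2 * (2 * W.b₂ * W.b₆ * W.b₈ - 2 * W.b₄ * W.b₆ ^ 2 - 10 * W.b₈ ^ 2),
        (-W.b₂ * W.b₈ ^ 2 + W.b₄ * W.b₆ * W.b₈) + 4 * (3 * W.b₄ * W.b₆ * W.b₈ - 3 * W.b₆ ^ 3),
        2 * (3 * W.b₄ * W.b₈ ^ 2 - 3 * W.b₆ ^ 2 * W.b₈), 0],
     ![0, 0, -48, 2 * (-4 * W.b₂), (W.b₂ ^ 2 - 32 * W.b₄)],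
     ![0, 12, -W.b₂, 2 * (-5 * W.b₄), W.b₂ * W.b₄ - 27 * W.b₆], ?_⟩
  intro a b
  have := W.b_relation
  constructor
  · simp [dblN, dblD, WeierstrassCurve.Δ]
    grind only
  · simp [dblN, dblD, WeierstrassCurve.Δ]
    grind only

lemma height_step (V : WeierstrassCurve k[X]) (hΔ : V.Δ ≠ 0) : ∃ c : ℕ, ∀ a b : k[X], IsCoprime a b →
    c < max a.natDegree b.natDegree → dblD V a b ≠ 0 ∧ ∃ a' b' g : k[X], IsCoprime a' b' ∧ g ≠ 0 ∧
      dblN V a b = g * a' ∧ dblD V a b = g * b' ∧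
      max a.natDegree b.natDegree < max a'.natDegree b'.natDegree := by
  obtain ⟨e, f, g, h, H⟩ := dbl_cofactor V
  set E := ∑ i, (e i).natDegree with hE
  set F := ∑ i, (f i).natDegree with hF
  set G := ∑ i, (g i).natDegree with hG
  set I := ∑ i, (h i).natDegree with hI
  rw [Fin.sum_univ_five] at hE hF hG hI
  refine ⟨E + F + G + I + 2 * V.Δ.natDegree, fun a b hab hc => ?_⟩
  set n := max a.natDegree b.natDegree with hn
  have han : a.natDegree ≤ n := le_max_left _ _
  have hbn : b.natDegree ≤ n := le_max_right _ _
  obtain ⟨H1, H2⟩ := H a b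
  have hE' := form4_natDegree_le (e 0) (e 1) (e 2) (e 3) (e 4) a b n han hbn
  have hF' := form4_natDegree_le (f 0) (f 1) (f 2) (f 3) (f 4) a b n han hbn
  have hG' := form4_natDegree_le (g 0) (g 1) (g 2) (g 3) (g 4) a b n han hbn
  have hI' := form4_natDegree_le (h 0) (h 1) (h 2) (h 3) (h 4) a b n han hbn
  rw [← hE] at hE'
  rw [← hF] at hF'
  rw [← hG] at hG'
  rw [← hI] at hI'
  set N := dblN V a b
  set D := dblD V a b
  have hgcd : ∀ q, q ∣ N → q ∣ D → q ∣ V.Δ := by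
    intro q h1 h2
    have ha : q ∣ V.Δ * a^8 := H1 ▸ dvd_add (dvd_mul_of_dvd_right h1 _) (dvd_mul_of_dvd_right h2 _)
    have hb : q ∣ V.Δ * b^8 := H2 ▸ dvd_add (dvd_mul_of_dvd_right h1 _) (dvd_mul_of_dvd_right h2 _)
    obtain ⟨u, v, huv⟩ := hab.pow (m := 8) (n := 8)
    have : V.Δ = u * (V.Δ * a^8) + v * (V.Δ * b^8) := by
      linear_combination (-V.Δ) * huv
    rw [this]
    exact dvd_add (dvd_mul_of_dvd_right ha _) (dvd_mul_of_dvd_right hb _)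
  have hbound : 4 * n ≤ E + F + G + I + max N.natDegree D.natDegree := by
    rcases le_total a.natDegree b.natDegree with hle | hle
    · have hbn' : n = b.natDegree := max_eq_right hle
      have hb0 : b ≠ 0 := by rintro rfl; simp at hbn'; omega
      have h3 : (V.Δ * b^8).natDegree = V.Δ.natDegree + 8 * n := by
        rw [natDegree_mul hΔ (pow_ne_zero _ hb0), natDegree_pow, hbn']
      have h4 := natDegree_add_le_of_degree_le (n := E + F + G + I + 4 * n + max N.natDegree D.natDegree)
        (natDegree_mul_le.trans (show _ + N.natDegree ≤ _ by have := le_max_left N.natDegree D.natDegree; omega))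
        (natDegree_mul_le.trans (show _ + D.natDegree ≤ _ by have := le_max_right N.natDegree D.natDegree; omega))
        (p := (g 0 * a^4 + g 1 * (a^3*b) + g 2 * (a^2*b^2) + g 3*(a*b^3) + g 4*b^4) * N)
        (q := (h 0 * a^4 + h 1 * (a^3*b) + h 2 * (a^2*b^2) + h 3*(a*b^3) + h 4*b^4) * D)
      rw [H2, h3] at h4
      omega
    · have han' : n = a.natDegree := max_eq_left hle
      have ha0 : a ≠ 0 := by rintro rfl; simp at han'; omega
      have h3 : (V.Δ * a^8).natDegree = V.Δ.natDegree + 8 * n := by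
        rw [natDegree_mul hΔ (pow_ne_zero _ ha0), natDegree_pow, han']
      have h4 := natDegree_add_le_of_degree_le (n := E + F + G + I + 4 * n + max N.natDegree D.natDegree)
        (natDegree_mul_le.trans (show _ + N.natDegree ≤ _ by have := le_max_left N.natDegree D.natDegree; omega))
        (natDegree_mul_le.trans (show _ + D.natDegree ≤ _ by have := le_max_right N.natDegree D.natDegree; omega))
        (p := (e 0 * a^4 + e 1 * (a^3*b) + e 2 * (a^2*b^2) + e 3*(a*b^3) + e 4*b^4) * N)
        (q := (f 0 * a^4 + f 1 * (a^3*b) + f 2 * (a^2*b^2) + f 3*(a*b^3) + f 4*b^4) * D)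
      rw [H1, h3] at h4
      omega
  have hD : D ≠ 0 := by
    intro hD
    have := natDegree_le_of_dvd (hgcd N dvd_rfl (hD ▸ dvd_zero _)) hΔ
    rw [hD, natDegree_zero, max_eq_left (Nat.zero_le _)] at hbound
    omega
  refine ⟨hD, ?_⟩
  classical
  have hg0 : EuclideanDomain.gcd N D ≠ 0 := fun h => hD (EuclideanDomain.gcd_eq_zero_iff.1 h).2
  obtain ⟨a', ha'⟩ := EuclideanDomain.gcd_dvd_left N D
  obtain ⟨b', hb'⟩ := EuclideanDomain.gcd_dvd_right N D
  have hbez := EuclideanDomain.gcd_eq_gcd_ab N D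
  have hdeg := natDegree_le_of_dvd
    (hgcd _ (EuclideanDomain.gcd_dvd_left N D) (EuclideanDomain.gcd_dvd_right N D)) hΔ
  generalize EuclideanDomain.gcd N D = q at *
  generalize EuclideanDomain.gcdA N D = A at *
  generalize EuclideanDomain.gcdB N D = B at *
  refine ⟨a', b', q, ⟨A, B, ?_⟩, hg0, ha', hb', ?_⟩
  · apply mul_left_cancel₀ hg0
    linear_combination -hbez - A * ha' - B * hb'
  · have h1 : N.natDegree ≤ q.natDegree + a'.natDegree := by
      rw [ha']; exact natDegree_mul_le
    have h2 : D.natDegree ≤ q.natDegree + b'.natDegree := by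
      rw [hb']; exact natDegree_mul_le
    omega

section points
variable {F : Type*} [Field F] [Algebra k[X] F]
open WeierstrassCurve WeierstrassCurve.Affine

/-- The point has rational x-coordinate of height `n`. -/
def HasH (V : WeierstrassCurve k[X]) (P : (V⁄F).Point) (n : ℕ) : Prop :=
  ∃ a b : k[X], IsCoprime a b ∧ b ≠ 0 ∧ max a.natDegree b.natDegree = n ∧
    ∃ x y h, P = Point.some x y h ∧ x * algebraMap k[X] F b = algebraMap k[X] F a

lemma HasH.unique (hinj : Function.Injective (algebraMap k[X] F)) {V : WeierstrassCurve k[X]}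
    {P : (V⁄F).Point} {m n : ℕ}
    (hm : HasH V P m) (hn : HasH V P n) : m = n := by
  obtain ⟨a, b, hab, hb, rfl, x, y, h, rfl, hx⟩ := hm
  obtain ⟨a', b', hab', hb', rfl, x', y', h', hP, hx'⟩ := hn
  rw [Point.some.injEq] at hP
  rw [← hP.1] at hx'
  have e : a * b' = a' * b := by
    apply hinj
    rw [map_mul, map_mul, ← hx, ← hx']
    ring
  have h1 : b ∣ b' := hab.symm.dvd_of_dvd_mul_left (Dvd.intro_left a' e.symm)
  have h2 : b' ∣ b := hab'.symm.dvd_of_dvd_mul_left (Dvd.intro_left a e)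
  have h3 : a ∣ a' := hab.dvd_of_dvd_mul_right (Dvd.intro b' e)
  have h4 : a' ∣ a := hab'.dvd_of_dvd_mul_right (Dvd.intro b e.symm)
  rw [natDegree_eq_of_degree_eq (degree_eq_degree_of_associated (associated_of_dvd_dvd h1 h2)),
    natDegree_eq_of_degree_eq (degree_eq_degree_of_associated (associated_of_dvd_dvd h3 h4))]

/-- The duplication formula. -/
lemma dbl_formula [DecidableEq F] (W : WeierstrassCurve F) {x y : F} (h : W.toAffine.Nonsingular x y)
    (hD : dblD W x 1 ≠ 0) :
    ∃ x' y' h', (Point.some x y h : W.toAffine.Point) + Point.some x y h = Point.some x' y' h' ∧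
      x' * dblD W x 1 = dblN W x 1 := by
  have heq := (Affine.equation_iff' ..).1 h.1
  have e : dblD W x 1 = (y - W.toAffine.negY x y) ^ 2 := by
    simp only [dblD, negY, b₂, b₄, b₆]
    linear_combination -4 * heq
  have hy : y ≠ W.toAffine.negY x y := by
    intro hy
    rw [e, ← hy] at hD
    simp at hD
  refine ⟨_, _, _, Point.add_self_of_Y_ne hy, ?_⟩
  rw [slope_of_Y_ne rfl hy, e]
  have hy' := sub_ne_zero.2 hy
  simp only [addX, dblN]
  field_simp
  simp only [negY, b₄, b₆, b₈]
  have heq' : y^2 = -(W.a₁ * x * y + W.a₃ * y - (x ^ 3 + W.a₂ * x ^ 2 + W.a₄ * x + W.a₆)) := by linear_combination heq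
  grind

lemma dblD_map (V : WeierstrassCurve k[X]) (a b : k[X]) (x : F)
    (hx : x * algebraMap k[X] F b = algebraMap k[X] F a) :
    algebraMap k[X] F (dblD V a b) = dblD (V⁄F) x 1 * algebraMap k[X] F b ^ 4 := by
  simp only [dblD, map_add, map_mul, map_pow, ← hx, show (V⁄F).b₂ = _ from map_b₂ .., show (V⁄F).b₄ = _ from map_b₄ ..,
    show (V⁄F).b₆ = _ from map_b₆ .., map_ofNat]
  ring

lemma dblN_map (V : WeierstrassCurve k[X]) (a b : k[X]) (x : F)
    (hx : x * algebraMap k[X] F b = algebraMap k[X] F a) :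
    algebraMap k[X] F (dblN V a b) = dblN (V⁄F) x 1 * algebraMap k[X] F b ^ 4 := by
  simp only [dblN, map_sub, map_mul, map_pow, ← hx, show (V⁄F).b₈ = _ from map_b₈ .., show (V⁄F).b₄ = _ from map_b₄ ..,
    show (V⁄F).b₆ = _ from map_b₆ .., map_ofNat]
  ring

lemma HasH.double [DecidableEq F] (hinj : Function.Injective (algebraMap k[X] F)) (V : WeierstrassCurve k[X])
    (hΔ : V.Δ ≠ 0) : ∃ c : ℕ, ∀ (P : (V⁄F).Point) (n : ℕ), c < n → HasH V P n →
      ∃ m, n < m ∧ HasH V (P + P) m := by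
  obtain ⟨c, hc⟩ := height_step V hΔ
  refine ⟨c, ?_⟩
  rintro P n hn ⟨a, b, hab, hb, rfl, x, y, h, rfl, hx⟩
  obtain ⟨hD, a', b', g, hco, hg, hN', hD', hlt⟩ := hc a b hab hn
  refine ⟨_, hlt, a', b', hco, ?_, rfl, ?_⟩
  · rintro rfl
    simp [hD'] at hD
  have hb0 : algebraMap k[X] F b ≠ 0 := (map_ne_zero_iff _ hinj).2 hb
  have hg0 : algebraMap k[X] F g ≠ 0 := (map_ne_zero_iff _ hinj).2 hg
  have hD0 : algebraMap k[X] F (dblD V a b) ≠ 0 := (map_ne_zero_iff _ hinj).2 hD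
  have h1 := dblD_map V a b x hx
  have h2 := dblN_map V a b x hx
  obtain ⟨x', y', h', hadd, hx'⟩ := dbl_formula (V⁄F) h (by
    intro h0
    rw [h1, h0, zero_mul] at hD0
    exact hD0 rfl)
  refine ⟨x', y', h', hadd, ?_⟩
  apply mul_left_cancel₀ hg0
  rw [← map_mul, ← hN', h2, ← hx', mul_assoc, ← h1, hD', map_mul]
  ring

lemma HasH.nontorsion [DecidableEq F] (hinj : Function.Injective (algebraMap k[X] F)) (V : WeierstrassCurve k[X])
    (hΔ : V.Δ ≠ 0) : ∃ c : ℕ, ∀ (P : (V⁄F).Point) (n : ℕ), c < n → HasH V P n →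
      ∀ z : ℤ, z ≠ 0 → z • P ≠ 0 := by
  obtain ⟨c, hc⟩ := HasH.double hinj V hΔ
  refine ⟨c, fun P n hn hP z hz hzP => ?_⟩
  have key : ∀ i : ℕ, ∃ m, c < m ∧ HasH V ((2 ^ i : ℕ) • P) m := by
    intro i
    induction i with
    | zero => exact ⟨n, hn, by simpa using hP⟩
    | succ i ih =>
      obtain ⟨m, hm, hHm⟩ := ih
      obtain ⟨m', hm', hHm'⟩ := hc _ m hm hHm
      refine ⟨m', hm.trans hm', ?_⟩
      rwa [pow_succ, mul_comm, mul_smul, two_nsmul]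
  choose m hm hHm using key
  have hmono : StrictMono m := by
    apply strictMono_nat_of_lt_succ
    intro i
    obtain ⟨m', hm', hHm'⟩ := hc _ (m i) (hm i) (hHm i)
    rw [← two_nsmul, ← mul_smul, mul_comm, ← pow_succ] at hHm'
    rwa [← HasH.unique hinj hHm' (hHm (i + 1))]
  have hinj2 : Function.Injective (fun i : ℕ => (2 ^ i : ℕ) • P) := by
    intro i j hij
    have hi := hHm i
    dsimp only at hij
    rw [hij] at hi
    exact hmono.injective (HasH.unique hinj hi (hHm j))
  have hfin : IsOfFinAddOrder P := isOfFinAddOrder_iff_zsmul_eq_zero.2 ⟨z, hz, hzP⟩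
  have hfin2 := hfin.finite_multiples
  exact Set.infinite_range_of_injective hinj2 (hfin2.subset (by
    rintro _ ⟨i, rfl⟩
    exact ⟨2 ^ i, rfl⟩))
end points
end height

open Polynomial
section ramification
attribute [local instance] FractionRing.liftAlgebra FractionRing.isScalarTower_liftAlgebra

lemma ram_aux {A B : Type*} [CommRing A] [IsDomain A] [IsPrincipalIdealRing A] [CommRing B] [IsDomain B] [IsDedekindDomain B] [Algebra A B]
   [Module.IsTorsionFree A B] [Module.Finite A B]
   [Algebra.IsSeparable (FractionRing A) (FractionRing B)] :
   ∃ d : A, d ≠ 0 ∧ ∀ π : A, Irreducible π → ¬ π ∣ d → ∀ c e : A, ∀ Y : B,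
     Y ^ 2 + algebraMap A B (π * c) * Y = algebraMap A B (π * (1 + π * e)) → False := by
  have hD : differentIdeal A B ≠ ⊥ := differentIdeal_ne_bot
  have hD' : (differentIdeal A B).comap (algebraMap A B) ≠ ⊥ :=
    fun h => hD (Ideal.eq_bot_of_comap_eq_bot h)
  obtain ⟨d, hd, hd0⟩ := Submodule.exists_mem_ne_zero_of_ne_bot hD'
  refine ⟨d, hd0, fun π hπ hπd c e Y hY => ?_⟩
  have hmax : (Ideal.span {π}).IsMaximal := PrincipalIdealRing.isMaximal_of_irreducible hπ
  have hne : Ideal.span {π} ≠ ⊥ := by simpa using hπ.ne_zero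
  obtain ⟨P, hPmax, hPover⟩ := Ideal.exists_maximal_ideal_liesOver_of_isIntegral (S := B) (Ideal.span {π})
  have hcomap : ∀ a : A, algebraMap A B a ∈ P ↔ π ∣ a := by
    intro a
    rw [← Ideal.mem_span_singleton, hPover.over]
    rfl
  have hπP : algebraMap A B π ∈ P := (hcomap π).2 dvd_rfl
  have hYP : Y ∈ P := by
    apply hPmax.isPrime.mem_of_pow_mem 2
    have : Y ^ 2 = algebraMap A B π * (algebraMap A B (1 + π * e) - algebraMap A B c * Y) := by
      simp only [map_mul] at hY ⊢
      linear_combination hY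
    rw [this]
    exact P.mul_mem_right _ hπP
  set u : B := 1 + algebraMap A B π * algebraMap A B e - algebraMap A B c * Y with hu
  have hYu : Y ^ 2 = algebraMap A B π * u := by
    simp only [map_mul, map_add, map_one] at hY
    rw [hu]
    linear_combination hY
  have hu' : 1 - u ∈ P := by
    have : 1 - u = algebraMap A B c * Y - algebraMap A B e * algebraMap A B π := by rw [hu]; ring
    rw [this]
    exact P.sub_mem (P.mul_mem_left _ hYP) (P.mul_mem_left _ hπP)
  have hπ2 : algebraMap A B π ∈ P ^ 2 := by
    have : algebraMap A B π = Y * Y + algebraMap A B π * (1 - u) := by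
      linear_combination -hYu
    rw [this, pow_two]
    exact Ideal.add_mem _ (Ideal.mul_mem_mul hYP hYP) (Ideal.mul_mem_mul hπP hu')
  have hdvd : P ^ 2 ∣ (Ideal.span {π}).map (algebraMap A B) := by
    rw [Ideal.dvd_iff_le, Ideal.map_span, Set.image_singleton, Ideal.span_singleton_le_iff_mem]
    exact hπ2
  have h1 := pow_sub_one_dvd_differentIdeal A P 2 hne hdvd
  simp only [Nat.add_one_sub_one, pow_one] at h1
  exact hπd ((hcomap d).1 (Ideal.le_of_dvd h1 hd))

lemma ram {A K M : Type*} [CommRing A] [IsDomain A] [IsPrincipalIdealRing A] [Field K] [Field M]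
   [Algebra A K] [IsFractionRing A K] [Algebra K M] [Algebra A M] [IsScalarTower A K M]
   [FiniteDimensional K M] [Algebra.IsSeparable K M] :
   ∃ d : A, d ≠ 0 ∧ ∀ π : A, Irreducible π → ¬ π ∣ d → ∀ c e : A, ∀ Y : M,
     Y ^ 2 + algebraMap A M (π * c) * Y = algebraMap A M (π * (1 + π * e)) → False := by
  let B := integralClosure A M
  have : IsDedekindDomain B := integralClosure.isDedekindDomain A K M
  have : Module.Finite A B := IsIntegralClosure.finite A K M B
  have : IsFractionRing B M := integralClosure.isFractionRing_of_finite_extension K M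
  have : Module.IsTorsionFree A M := by
    have := IsFractionRing.injective A K
    have h2 : Function.Injective (algebraMap A M) := by
      rw [IsScalarTower.algebraMap_eq A K M]
      exact (algebraMap K M).injective.comp this
    have := (faithfulSMul_iff_algebraMap_injective A M).2 h2
    infer_instance
  have : Module.IsTorsionFree A B := inferInstance
  have : Algebra.IsSeparable (FractionRing A) (FractionRing B) := by
    refine Algebra.IsSeparable.of_equiv_equiv (FractionRing.algEquiv A K).symm.toRingEquiv
          (FractionRing.algEquiv B M).symm.toRingEquiv ?_
    ext _
    exact IsFractionRing.algEquiv_commutes (FractionRing.algEquiv A K).symm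
      (FractionRing.algEquiv B M).symm _
  obtain ⟨d, hd, H⟩ := ram_aux (A := A) (B := B)
  refine ⟨d, hd, fun π hπ hπd c e Y hY => ?_⟩
  have hIntegral : IsIntegral A Y := by
    refine ⟨X ^ 2 + C (π * c) * X - C (π * (1 + π * e)), ?_, ?_⟩
    · monicity!
    · simp only [eval₂_sub, eval₂_add, eval₂_mul, eval₂_pow, eval₂_X, eval₂_C, hY, sub_self]
  exact H π hπ hπd c e ⟨Y, hIntegral⟩ (Subtype.ext hY)

end ramification

open Polynomial

lemma exists_conj {K F : Type*} [Field K] [Field F] [Algebra K F] [IsAlgClosed F] [Algebra.IsAlgebraic K F]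
    (L : IntermediateField K F) (s q : K) (y y' : F) (hs : y + y' = algebraMap K F s)
    (hq : y * y' = algebraMap K F q) (hne : y ≠ y') (hy : y ∉ L ⊓ separableClosure K F) :
    ∃ σ : F ≃ₐ[L] F, σ y = y' := by
  set f : K[X] := X ^ 2 - C s * X + C q with hf
  have hfF : f.map (algebraMap K F) = (X - C y) * (X - C y') := by
    simp only [hf, Polynomial.map_add, Polynomial.map_sub, Polynomial.map_mul, Polynomial.map_pow,
      map_X, map_C, ← hs, ← hq, C_add, C_mul]
    ring
  have hfsep : f.Separable := by
    rw [← separable_map (algebraMap K F), hfF]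
    exact (separable_X_sub_C).mul separable_X_sub_C (by
      exact Polynomial.isCoprime_X_sub_C_of_isUnit_sub (sub_ne_zero.2 hne).isUnit)
  have hroot : ∀ z, (z = y ∨ z = y') → aeval z f = 0 := by
    intro z hz
    rw [← eval_map_algebraMap, hfF]
    rcases hz with rfl | rfl <;> simp
  have hysep : y ∈ separableClosure K F := by
    rw [mem_separableClosure_iff]
    exact hfsep.of_dvd (minpoly.dvd K y (hroot y (Or.inl rfl)))
  have hyL : y ∉ L := fun h => hy ⟨h, hysep⟩
  have halg : Algebra.IsAlgebraic L F := Algebra.IsAlgebraic.tower_top (K := K) L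
  have hIntegral : IsIntegral L y := (halg.isAlgebraic y).isIntegral
  have hfm : f.Monic := by
    rw [hf]; monicity!
  have hfd : f.natDegree = 2 := by rw [hf]; compute_degree!
  have h2 : 2 ≤ (minpoly L y).natDegree := by
    rw [minpoly.two_le_natDegree_iff hIntegral]
    rintro ⟨z, rfl⟩
    exact hyL z.2
  have hrootL : ∀ z, (z = y ∨ z = y') → aeval z (f.map (algebraMap K L)) = 0 := by
    intro z hz
    rw [aeval_map_algebraMap]
    exact hroot z hz
  have heq : f.map (algebraMap K L) = minpoly L y := by
    refine (Polynomial.eq_of_monic_of_dvd_of_natDegree_le (minpoly.monic hIntegral) (hfm.map _) 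
      (minpoly.dvd L y (hrootL y (Or.inl rfl))) ?_)
    rw [natDegree_map, hfd]; exact h2
  have : IsAlgClosure L F := ⟨inferInstance, halg⟩
  have : Normal L F := IsAlgClosure.normal L F
  apply minpoly.exists_algEquiv_of_root' (halg.isAlgebraic y)
  rw [← heq]
  exact hrootL y' (Or.inr rfl)

open WeierstrassCurve WeierstrassCurve.Affine in
lemma core_rank {k : Type*} [Field k] {K F : Type*} [Field K] [Field F] [Algebra k[X] K]
    [IsFractionRing k[X] K] [Algebra K F] [Algebra k[X] F] [IsScalarTower k[X] K F]
    [IsAlgClosed F] [Algebra.IsAlgebraic K F] [DecidableEq F]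
    (V : WeierstrassCurve k[X]) (hΔ : V.Δ ≠ 0) :
    Cardinal.aleph0 ≤ Module.rank ℤ (V⁄F).Point := by
  have hinj : Function.Injective (algebraMap k[X] F) := by
    rw [IsScalarTower.algebraMap_eq k[X] K F]
    exact (algebraMap K F).injective.comp (IsFractionRing.injective k[X] K)
  by_contra hcon
  obtain ⟨S, hSfin, hS⟩ := exists_finite_span_of_rank_lt (not_le.1 hcon)
  -- coordinates
  let crd : (V⁄F).Point → Set F := fun P =>
    match P with
    | Point.zero => ∅
    | Point.some x y _ => {x, y}
  have hcrd : ∀ P, (crd P).Finite := by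
    rintro (_ | ⟨x, y, h⟩)
    · exact Set.finite_empty
    · exact Set.toFinite {x, y}
  let T : Set F := ⋃ P ∈ S, crd P
  have hT : T.Finite := hSfin.biUnion fun P _ => hcrd P
  let L : IntermediateField K F := IntermediateField.adjoin K T
  have : Finite T := hT
  have hLfin : FiniteDimensional K L :=
    IntermediateField.finiteDimensional_adjoin fun x _ => (Algebra.IsAlgebraic.isAlgebraic x).isIntegral
  let M : IntermediateField K F := L ⊓ separableClosure K F
  have hMfin : FiniteDimensional K M :=
    FiniteDimensional.of_injective (IntermediateField.inclusion (inf_le_left : M ≤ L)).toLinearMap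
      (IntermediateField.inclusion (inf_le_left : M ≤ L)).injective
  have hMsep : Algebra.IsSeparable K M :=
    (le_separableClosure_iff K F M).1 inf_le_right
  obtain ⟨d, hd, hram⟩ := ram (A := k[X]) (K := K) (M := M)
  obtain ⟨π, hπ, hπd⟩ : ∃ π : k[X], Irreducible π ∧ ¬ π ∣ d := by
    have hnu : ¬ IsUnit (X * d + 1) := by
      intro h
      have h0 := natDegree_eq_zero_of_isUnit h
      rw [show (1 : k[X]) = C 1 by simp, natDegree_add_C, natDegree_X_mul hd] at h0
      omega
    have hne : X * d + 1 ≠ 0 := by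
      intro h
      have h1 := congrArg (eval 0) h
      simp at h1
    obtain ⟨π, hπ, hdvd⟩ := WfDvdMonoid.exists_irreducible_factor hnu hne
    refine ⟨π, hπ, fun h => hπ.not_isUnit ?_⟩
    rw [isUnit_iff_dvd_one]
    exact (dvd_add_right (h.mul_left X)).1 hdvd
  obtain ⟨l, hl⟩ := HasH.nontorsion hinj V hΔ
  set ϖ : F := algebraMap k[X] F π with hϖ
  have hϖ0 : ϖ ≠ 0 := by
    rw [hϖ, Ne, map_eq_zero_iff _ hinj]
    exact hπ.ne_zero
  set x : F := (ϖ ^ (2 * l + 1))⁻¹ with hx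
  set a₁ : F := algebraMap k[X] F V.a₁ with ha1
  set a₂ : F := algebraMap k[X] F V.a₂ with ha2
  set a₃ : F := algebraMap k[X] F V.a₃ with ha3
  set a₄ : F := algebraMap k[X] F V.a₄ with ha4
  set a₆ : F := algebraMap k[X] F V.a₆ with ha6
  obtain ⟨y, hy⟩ : ∃ y : F, y ^ 2 + (a₁ * x + a₃) * y = x ^ 3 + a₂ * x ^ 2 + a₄ * x + a₆ := by
    obtain ⟨y, hy⟩ := IsAlgClosed.exists_root
      (X ^ 2 + C (a₁ * x + a₃) * X - C (x ^ 3 + a₂ * x ^ 2 + a₄ * x + a₆)) (by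
        have : natDegree (X ^ 2 + C (a₁ * x + a₃) * X - C (x ^ 3 + a₂ * x ^ 2 + a₄ * x + a₆)) = 2 := by
          compute_degree!
        intro h
        exact absurd (this.symm.trans (natDegree_eq_zero_iff_degree_le_zero.2 h.le)) (by norm_num))
    refine ⟨y, ?_⟩
    simp only [IsRoot.def, eval_sub, eval_add, eval_mul, eval_pow, eval_X, eval_C] at hy
    linear_combination hy
  have hVΔ : (V⁄F).Δ ≠ 0 := by
    change (V.map (algebraMap k[X] F)).Δ ≠ 0
    rw [WeierstrassCurve.map_Δ, Ne, map_eq_zero_iff _ hinj]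
    exact hΔ
  have heqn : (V⁄F).Equation x y := by
    rw [Affine.equation_iff]
    change y ^ 2 + a₁ * x * y + a₃ * y = x ^ 3 + a₂ * x ^ 2 + a₄ * x + a₆
    linear_combination hy
  have hns : (V⁄F).Nonsingular x y :=
    (Affine.equation_iff_nonsingular_of_Δ_ne_zero hVΔ).1 heqn
  let P : (V⁄F).Point := Point.some x y hns
  have hP : ∀ z : ℤ, z ≠ 0 → z • P ≠ 0 := by
    refine hl P (max (1 : k[X]).natDegree (π ^ (2 * l + 1)).natDegree) ?_
      ⟨1, π ^ (2 * l + 1), isCoprime_one_left, pow_ne_zero _ hπ.ne_zero, rfl, x, y, hns, rfl, ?_⟩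
    · have h1 : 0 < π.natDegree := hπ.natDegree_pos
      rw [natDegree_pow]
      apply lt_max_of_lt_right
      nlinarith
    · rw [map_pow, map_one, hx]
      exact inv_mul_cancel₀ (pow_ne_zero _ hϖ0)
  have hneg : -P = Point.some x ((V⁄F).negY x y) ((nonsingular_neg ..).2 hns) := rfl
  set y' : F := (V⁄F).negY x y with hy'
  have hy'' : y' = - y - a₁ * x - a₃ := rfl
  have hne : y ≠ y' := by
    intro h
    apply hP 2 two_ne_zero
    have : P = -P := by
      rw [hneg]
      simp only [P, Point.some.injEq, true_and]
      exact h
    rw [two_zsmul]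
    nth_rewrite 2 [this]
    exact add_neg_cancel P
  have hyM : y ∉ M := by
    intro hyM
    have hYM : y * ϖ ^ (3 * l + 2) ∈ M := by
      refine M.mul_mem hyM (pow_mem ?_ _)
      rw [hϖ, IsScalarTower.algebraMap_apply k[X] K F]
      exact M.algebraMap_mem _
    refine hram π hπ hπd (V.a₁ * π ^ l + V.a₃ * π ^ (3 * l + 1))
      (V.a₂ * π ^ (2 * l) + V.a₄ * π ^ (4 * l + 1) + V.a₆ * π ^ (6 * l + 2)) ⟨_, hYM⟩ ?_
    apply Subtype.ext
    change (y * ϖ ^ (3 * l + 2)) ^ 2 + algebraMap k[X] F _ * (y * ϖ ^ (3 * l + 2)) = algebraMap k[X] F _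
    simp only [map_mul, map_add, map_pow, map_one, ← hϖ, ← ha1, ← ha2, ← ha3, ← ha4, ← ha6]
    have hx1 : x * ϖ ^ (2 * l + 1) = 1 := inv_mul_cancel₀ (pow_ne_zero _ hϖ0)
    set t := ϖ ^ l with ht
    have e1 : ϖ ^ (3 * l + 2) = t ^ 3 * ϖ ^ 2 := by rw [ht]; ring
    have e2 : ϖ ^ (3 * l + 1) = t ^ 3 * ϖ := by rw [ht]; ring
    have e3 : ϖ ^ (2 * l) = t ^ 2 := by rw [ht]; ring
    have e4 : ϖ ^ (4 * l + 1) = t ^ 4 * ϖ := by rw [ht]; ring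
    have e5 : ϖ ^ (6 * l + 2) = t ^ 6 * ϖ ^ 2 := by rw [ht]; ring
    have e6 : ϖ ^ (2 * l + 1) = t ^ 2 * ϖ := by rw [ht]; ring
    rw [e6] at hx1
    rw [e1, e2, e3, e4, e5]
    have ht0 : t ≠ 0 := pow_ne_zero _ hϖ0
    have hx2 : x = 1 / (t ^ 2 * ϖ) := by
      field_simp
      linear_combination hx1
    rw [hx2] at hy
    have := congrArg (fun z => z * (t ^ 6 * ϖ ^ 4)) hy
    field_simp at this
    linear_combination ϖ * this
  obtain ⟨σ, hσ⟩ : ∃ σ : F ≃ₐ[L] F, σ y = y' := by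
    have hxK : ∃ xK : K, algebraMap K F xK = x := by
      refine ⟨(algebraMap k[X] K π ^ (2 * l + 1))⁻¹, ?_⟩
      rw [map_inv₀, map_pow, ← IsScalarTower.algebraMap_apply]
    obtain ⟨xK, hxK⟩ := hxK
    refine exists_conj L (-(algebraMap k[X] K V.a₁ * xK) - algebraMap k[X] K V.a₃)
      (-(xK ^ 3 + algebraMap k[X] K V.a₂ * xK ^ 2 + algebraMap k[X] K V.a₄ * xK + algebraMap k[X] K V.a₆))
      y y' ?_ ?_ hne hyM
    · simp only [map_sub, map_neg, map_mul, hxK, ← IsScalarTower.algebraMap_apply]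
      rw [hy'']
      ring
    · simp only [map_add, map_neg, map_mul, map_pow, hxK, ← IsScalarTower.algebraMap_apply]
      rw [hy'']
      linear_combination -hy
  let τ : F →ₐ[k[X]] F := ((σ : F →ₐ[L] F).restrictScalars K).restrictScalars k[X]
  have hτ : ∀ z, τ z = σ z := fun z => rfl
  have hτL : ∀ z ∈ L, τ z = z := fun z hz => σ.commutes ⟨z, hz⟩
  let φ : (V⁄F).Point →+ (V⁄F).Point := Point.map τ
  have hφS : ∀ Q ∈ S, φ Q = Q := by
    intro Q hQ
    have hsub : crd Q ⊆ L :=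
      (Set.subset_biUnion_of_mem (u := fun Q => crd Q) hQ).trans (IntermediateField.subset_adjoin K T)
    rcases Q with _ | ⟨x₀, y₀, h₀⟩
    · exact Point.map_zero τ
    · have h1 : x₀ ∈ L := hsub (by simp [crd])
      have h2 : y₀ ∈ L := hsub (by simp [crd])
      simp only [φ, Point.map_some, hτL _ h1, hτL _ h2]
  have hφspan : ∀ Q ∈ Submodule.span ℤ S, φ Q = Q := by
    intro Q hQ
    induction hQ using Submodule.span_induction with
    | mem Q h => exact hφS Q h
    | zero => exact map_zero φ
    | add Q R _ _ h1 h2 => rw [map_add, h1, h2]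
    | smul n Q _ h => rw [map_zsmul, h]
  have hxL : τ x = x := by
    rw [hx, map_inv₀, map_pow, hϖ, τ.commutes]
  have hφP : φ P = -P := by
    rw [hneg]
    simp only [φ, P, Point.map_some, hxL, hτ y, hσ]
    rfl
  obtain ⟨n, hn, hnP⟩ := hS P
  have h1 := hφspan _ hnP
  rw [map_zsmul, hφP, smul_neg] at h1
  apply hP (2 * n) (mul_ne_zero two_ne_zero hn)
  rw [mul_zsmul, two_zsmul]
  nth_rewrite 1 [← h1]
  exact neg_add_cancel _

open WeierstrassCurve WeierstrassCurve.Affine in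
lemma rank_of_model {k F : Type*} [Field k] [Field F] [IsAlgClosed F] [DecidableEq F]
    (V : WeierstrassCurve k[X]) (f : k[X] →+* F) (hf : Function.Injective f)
    (E W : WeierstrassCurve F) [E.IsElliptic] [W.IsElliptic] (hE : V.map f = E) (hj : W.j = E.j) :
    Cardinal.aleph0 ≤ Module.rank ℤ W.toAffine.Point := by
  classical
  let _ : Algebra k[X] F := f.toAlgebra
  have hΔ : V.Δ ≠ 0 := by
    intro h
    apply E.isUnit_Δ.ne_zero
    rw [← hE, WeierstrassCurve.map_Δ, h, map_zero]
  obtain ⟨C, hC⟩ := exists_variableChange_of_j_eq W E hj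
  obtain ⟨g, hg⟩ := vc_hom W W.isUnit_Δ.ne_zero C
  refine rank_le_of_hom g hg ?_
  rw [hC, ← hE]
  have : FaithfulSMul k[X] F := (faithfulSMul_iff_algebraMap_injective k[X] F).2 hf
  have : FaithfulSMul k[X] (AlgebraicClosure (FractionRing k[X])) := by
    rw [faithfulSMul_iff_algebraMap_injective,
      IsScalarTower.algebraMap_eq k[X] (FractionRing k[X]) (AlgebraicClosure (FractionRing k[X]))]
    exact (algebraMap (FractionRing k[X]) _).injective.comp (IsFractionRing.injective k[X] _)
  have : Algebra.IsAlgebraic k[X] (AlgebraicClosure (FractionRing k[X])) :=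
    (IsFractionRing.comap_isAlgebraic_iff (K := FractionRing k[X])).2 inferInstance
  let φ : AlgebraicClosure (FractionRing k[X]) →ₐ[k[X]] F := IsAlgClosed.lift
  exact rank_le_of_hom (Point.map (W' := V) φ) (Point.map_injective φ)
    (core_rank (K := FractionRing k[X]) V hΔ)

open WeierstrassCurve WeierstrassCurve.Affine in
lemma rank_points (p : ℕ) [Fact p.Prime] (F : Type*) [Field F] [IsAlgClosed F] [DecidableEq F]
    [Algebra (ZMod p) F] (hF : ∃ x : F, Transcendental (ZMod p) x)
    (W : WeierstrassCurve F) (hΔ : W.Δ ≠ 0) :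
    Cardinal.aleph0 ≤ Module.rank ℤ W.toAffine.Point := by
  classical
  have : W.IsElliptic := ⟨hΔ.isUnit⟩
  by_cases hj : IsAlgebraic (ZMod p) W.j
  · obtain ⟨t, ht⟩ := hF
    let k := algebraicClosure (ZMod p) F
    have htk : Transcendental k t := fun h => ht (h.restrictScalars (ZMod p))
    let j₀ : k := ⟨W.j, mem_algebraicClosure_iff.2 hj⟩
    refine rank_of_model ((ofJ j₀).map (C : k →+* k[X])) (aeval (R := k) t : k[X] →ₐ[k] F).toRingHom
      (transcendental_iff_injective.1 htk) ((ofJ j₀).map (algebraMap k F)) W ?_ ?_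
    · rw [WeierstrassCurve.map_map]
      congr 1
      ext z
      simp
    · rw [WeierstrassCurve.map_j, ofJ_j]
      rfl
  · have h0 : W.j ≠ 0 := by
      intro h
      rw [h] at hj
      exact hj isAlgebraic_zero
    have h1728 : W.j ≠ 1728 := by
      intro h
      rw [h] at hj
      exact hj (by simpa using isAlgebraic_natCast (R := ZMod p) (A := F) 1728)
    refine rank_of_model (ofJNe0Or1728 (X : (ZMod p)[X])) (aeval W.j : (ZMod p)[X] →ₐ[ZMod p] F).toRingHom
      (transcendental_iff_injective.1 hj) (ofJ W.j) W ?_ ?_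
    · rw [ofJ_ne_0_ne_1728 _ h0 h1728]
      ext <;> simp [ofJNe0Or1728, map_ofNat]
    · rw [ofJ_j]

open TensorProduct

open scoped Classical in
theorem statement7 (p : ℕ) [Fact p.Prime] (F : Type*) [Field F] [IsAlgClosed F]
    [CharP F p] [Algebra (ZMod p) F] (hF : ∃ x : F, Transcendental (ZMod p) x)
    (W : WeierstrassCurve.Affine F) (hΔ : W.Δ ≠ 0) :
    Cardinal.aleph0 ≤ Module.rank ℚ (ℚ ⊗[ℤ] W.Point) := by
  exact rank_tensor_le (rank_points p F hF W hΔ)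
end

section
/- Let $p$ be a prime, let $F$ be a separably closed field of characteristic $p$ that is not algebraic over its prime field $\mathbb{F}_p$ (i.e. some element of $F$ is transcendental over $\mathbb{F}_p$), and let $W$ be an elliptic curve over $F$ (a Weierstrass curve over $F$ with nonzero discriminant). Then the rank of the group $W(F)$ of $F$-rational points of $W$ is infinite, i.e. the $\mathbb{Q}$-vector space $W(F) \otimes_{\mathbb{Z}} \mathbb{Q}$ is infinite-dimensional. -/
open TensorProduct

namespace EllRank

open WeierstrassCurve WeierstrassCurve.Affine

section formulas

variable {F : Type*} [Field F] [DecidableEq F] {W : WeierstrassCurve.Affine F}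

/-- the numerator of `s(P+Q)+s(P-Q)` in terms of `s = 1/x`. -/
def NN (W : WeierstrassCurve F) (s t : F) : F :=
  2 * (s + t) + W.b₂ * (s * t) + W.b₄ * ((s + t) * (s * t)) + W.b₆ * (s * t) ^ 2

/-- the denominator of `s(P+Q)+s(P-Q)` in terms of `s = 1/x`. -/
def DD (W : WeierstrassCurve F) (s t : F) : F :=
  1 - W.b₄ * (s * t) - W.b₆ * ((s + t) * (s * t)) - W.b₈ * (s * t) ^ 2

lemma addX_sum {x₁ x₂ y₁ y₂ : F} (h₁ : W.Equation x₁ y₁) (h₂ : W.Equation x₂ y₂) (hx : x₁ ≠ x₂) :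
    (W.addX x₁ x₂ (W.slope x₁ x₂ y₁ y₂) + W.addX x₁ x₂ (W.slope x₁ x₂ y₁ (W.negY x₂ y₂))) *
      (x₁ - x₂) ^ 2 =
    2 * (x₁ * x₂) * (x₁ + x₂) + W.b₂ * (x₁ * x₂) + W.b₄ * (x₁ + x₂) + W.b₆ := by
  have hd : x₁ - x₂ ≠ 0 := sub_ne_zero.mpr hx
  rw [equation_iff] at h₁ h₂
  rw [slope_of_X_ne hx, slope_of_X_ne hx]
  simp only [addX, negY, b₂, b₄, b₆]
  field_simp
  linear_combination 2 * h₁ + 2 * h₂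

lemma addX_mul {x₁ x₂ y₁ y₂ : F} (h₁ : W.Equation x₁ y₁) (h₂ : W.Equation x₂ y₂) (hx : x₁ ≠ x₂) :
    (W.addX x₁ x₂ (W.slope x₁ x₂ y₁ y₂) * W.addX x₁ x₂ (W.slope x₁ x₂ y₁ (W.negY x₂ y₂))) *
      (x₁ - x₂) ^ 2 =
    (x₁ * x₂) ^ 2 - W.b₄ * (x₁ * x₂) - W.b₆ * (x₁ + x₂) - W.b₈ := by
  have hd : x₁ - x₂ ≠ 0 := sub_ne_zero.mpr hx
  rw [equation_iff] at h₁ h₂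
  rw [slope_of_X_ne hx, slope_of_X_ne hx]
  simp only [addX, negY, b₄, b₆, b₈]
  field_simp
  grind

lemma addX_self {x y : F} (h₁ : W.Equation x y) (hy : y ≠ W.negY x y) :
    W.addX x x (W.slope x x y y) * (4 * x ^ 3 + W.b₂ * x ^ 2 + 2 * W.b₄ * x + W.b₆) =
    x ^ 4 - W.b₄ * x ^ 2 - 2 * W.b₆ * x - W.b₈ := by
  have hd : y - W.negY x y ≠ 0 := sub_ne_zero.mpr hy
  have e : 4 * x ^ 3 + W.b₂ * x ^ 2 + 2 * W.b₄ * x + W.b₆ = (y - W.negY x y) ^ 2 := by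
    rw [equation_iff] at h₁
    simp only [negY, b₂, b₄, b₆]
    linear_combination -4 * h₁
  rw [e, slope_of_Y_ne rfl hy, addX]
  rw [equation_iff] at h₁
  field_simp
  simp only [negY, b₄, b₆, b₈]
  grind

end formulas
end EllRank

namespace EllRank

open WeierstrassCurve WeierstrassCurve.Affine

section HasS

variable {F : Type*} [Field F] [DecidableEq F] {W : WeierstrassCurve.Affine F}

/-- `s` is the inverse of the `x`-coordinate of `P` (and `0` if `P = 0`). -/
def HasS (P : W.Point) (s : F) : Prop := P.xRep 0 * s = P.xRep 1

lemma hasS_zero {s : F} : HasS (0 : W.Point) s ↔ s = 0 := by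
  simp [HasS]

lemma hasS_some {x y s : F} (h : W.Nonsingular x y) : HasS (Point.some x y h) s ↔ x * s = 1 := by
  simp [HasS]

lemma hasS_neg {P : W.Point} {s : F} : HasS (-P) s ↔ HasS P s := by
  simp [HasS]

lemma HasS.unique {P : W.Point} {s t : F} (h : HasS P s) (h' : HasS P t) : s = t := by
  rcases P with _ | ⟨x, y, hP⟩
  · rw [← Point.zero_def, hasS_zero] at h h'
    rw [h, h']
  · rw [hasS_some] at h h'
    have : x ≠ 0 := by rintro rfl; simp at h
    exact mul_left_cancel₀ this (h.trans h'.symm)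

lemma HasS.eq_zero_iff {P : W.Point} {s : F} (h : HasS P s) : P = 0 ↔ s = 0 := by
  rcases P with _ | ⟨x, y, hP⟩
  · rw [← Point.zero_def, hasS_zero] at h
    simp [h, ← Point.zero_def]
  · rw [hasS_some] at h
    have : s ≠ 0 := by rintro rfl; simp at h
    simp [this, Point.some_ne_zero]

lemma hasS_double {P : W.Point} {s : F} (h : HasS P s) (hD : DD W s s ≠ 0) :
    HasS (P + P) (NN W s s / DD W s s) := by
  rcases P with _ | ⟨x, y, hP⟩
  · rw [← Point.zero_def, hasS_zero] at h
    subst h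
    rw [← Point.zero_def, add_zero, hasS_zero]
    simp [NN]
  · rw [hasS_some] at h
    have hx : x ≠ 0 := by rintro rfl; simp at h
    have hs : s = x⁻¹ := eq_inv_of_mul_eq_one_right h
    have eN : NN W s s * x ^ 4 = 4 * x ^ 3 + W.b₂ * x ^ 2 + 2 * W.b₄ * x + W.b₆ := by
      rw [NN, hs]; field_simp; ring
    have eD : DD W s s * x ^ 4 = x ^ 4 - W.b₄ * x ^ 2 - 2 * W.b₆ * x - W.b₈ := by
      rw [DD, hs]; field_simp; ring
    by_cases hy : y = W.negY x y
    · rw [Point.add_self_of_Y_eq hy, hasS_zero, div_eq_zero_iff]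
      left
      have e : 4 * x ^ 3 + W.b₂ * x ^ 2 + 2 * W.b₄ * x + W.b₆ = (y - W.negY x y) ^ 2 := by
        have h₁ := hP.1
        rw [equation_iff] at h₁
        simp only [negY, b₂, b₄, b₆]
        linear_combination -4 * h₁
      rw [← eN, ← hy, sub_self] at e
      simpa [hx] using e
    · rw [Point.add_self_of_Y_ne hy, hasS_some]
      have := addX_self hP.1 hy
      rw [← eN, ← eD, ← mul_assoc] at this
      have := mul_right_cancel₀ (pow_ne_zero 4 hx) this
      rw [← mul_div_assoc, this, div_self hD]

lemma hasS_add {P Q : W.Point} {s t u : F} (hP : HasS P s) (hQ : HasS Q t) (hu : HasS (P - Q) u)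
    (hD : DD W s t ≠ 0) : HasS (P + Q) (NN W s t / DD W s t - u) := by
  by_cases hP0 : P = 0
  · subst hP0
    rw [hasS_zero] at hP
    rw [zero_sub, hasS_neg] at hu
    have := hu.unique hQ
    subst hP this
    rw [zero_add]
    convert hQ using 1
    simp [NN, DD]; ring
  by_cases hQ0 : Q = 0
  · subst hQ0
    rw [hasS_zero] at hQ
    rw [sub_zero] at hu
    have := hu.unique hP
    subst hQ this
    rw [add_zero]
    convert hP using 1
    simp [NN, DD]; ring
  by_cases h1 : P = Q
  · subst h1
    have := hP.unique hQ
    subst this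
    rw [sub_self, hasS_zero] at hu
    rw [hu, sub_zero]
    exact hasS_double hP hD
  by_cases h2 : P = -Q
  · subst h2
    rw [hasS_neg] at hP
    have := hP.unique hQ
    subst this
    have hh : HasS (Q + Q) u := by
      rw [← hasS_neg]; convert hu using 1; abel
    rw [neg_add_cancel, hasS_zero, (hasS_double hP hD).unique hh, sub_self]
  rcases P with _ | ⟨x₁, y₁, hP'⟩
  · exact absurd rfl hP0
  rcases Q with _ | ⟨x₂, y₂, hQ'⟩
  · exact absurd rfl hQ0
  have hx : x₁ ≠ x₂ := by
    intro h
    rcases (Point.X_eq_iff (h₁ := hP') (h₂ := hQ')).mp h with h | h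
    exacts [h1 h, h2 h]
  rw [sub_eq_add_neg, Point.neg_some, Point.add_of_X_ne hx, hasS_some] at hu
  rw [Point.add_of_X_ne hx, hasS_some]
  rw [hasS_some] at hP hQ
  have hx1 : x₁ ≠ 0 := by rintro rfl; simp at hP
  have hx2 : x₂ ≠ 0 := by rintro rfl; simp at hQ
  have hs : s = x₁⁻¹ := eq_inv_of_mul_eq_one_right hP
  have ht : t = x₂⁻¹ := eq_inv_of_mul_eq_one_right hQ
  have E1 := addX_sum hP'.1 hQ'.1 hx
  have E2 := addX_mul hP'.1 hQ'.1 hx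
  have eN : NN W s t * (x₁ * x₂) ^ 2 =
      2 * (x₁ * x₂) * (x₁ + x₂) + W.b₂ * (x₁ * x₂) + W.b₄ * (x₁ + x₂) + W.b₆ := by
    rw [NN, hs, ht]; field_simp; ring
  have eD : DD W s t * (x₁ * x₂) ^ 2 =
      (x₁ * x₂) ^ 2 - W.b₄ * (x₁ * x₂) - W.b₆ * (x₁ + x₂) - W.b₈ := by
    rw [DD, hs, ht]; field_simp; ring
  rw [← eN] at E1
  rw [← eD] at E2
  have hd : x₁ - x₂ ≠ 0 := sub_ne_zero.mpr hx
  generalize W.addX x₁ x₂ (W.slope x₁ x₂ y₁ (W.negY x₂ y₂)) = X4 at *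
  generalize W.addX x₁ x₂ (W.slope x₁ x₂ y₁ y₂) = X3 at *
  have hX4 : X4 ≠ 0 := by rintro rfl; simp at hu
  have hu' : u = X4⁻¹ := eq_inv_of_mul_eq_one_right hu
  have key : X3 * X4 * NN W s t = (X3 + X4) * DD W s t := by
    apply mul_right_cancel₀ (pow_ne_zero 2 (mul_ne_zero hx1 hx2))
    linear_combination (X3 + X4) * E2 - X3 * X4 * E1
  rw [hu']
  field_simp
  linear_combination key

end HasS
end EllRank

namespace EllRank

open WeierstrassCurve WeierstrassCurve.Affine

section val

variable {K : Type*} [Field K] {Γ₀ : Type*} [LinearOrderedCommGroupWithZero Γ₀]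
  (v : Valuation K Γ₀) (W : WeierstrassCurve K)

/-- smallness with respect to a valuation and the curve -/
def Small (s : K) : Prop :=
  v s < 1 ∧ v (W.b₂ * s) < 1 ∧ v (W.b₄ * s) < 1 ∧ v (W.b₆ * s) < 1 ∧ v (W.b₈ * s) < 1

variable {v W}

lemma Small.mono {s t : K} (h : Small v W s) (ht : v t ≤ v s) : Small v W t := by
  obtain ⟨h1, h2, h3, h4, h5⟩ := h
  simp only [map_mul] at *
  have aux : ∀ a : K, v a * v s < 1 → v a * v t < 1 := fun a ha ↦
    lt_of_le_of_lt (mul_le_mul_right ht _) ha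
  refine ⟨lt_of_le_of_lt ht h1, ?_⟩
  simp only [map_mul]
  exact ⟨aux _ h2, aux _ h3, aux _ h4, aux _ h5⟩

lemma vmul_lt_one {a b : K} (ha : v a < 1) (hb : v b ≤ 1) : v (a * b) < 1 := by
  rw [map_mul]; exact mul_lt_one_of_lt_of_le ha hb

lemma vmul_le_one {a b : K} (ha : v a ≤ 1) (hb : v b ≤ 1) : v (a * b) ≤ 1 := by
  rw [map_mul]; exact mul_le_one' ha hb

lemma vmul_lt {a b c : K} (ha : v a < 1) (hb : v b ≤ v c) (hc : v c ≠ 0) : v (a * b) < v c := by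
  rw [map_mul]
  rcases eq_or_ne (v b) 0 with h | h
  · rw [h, mul_zero]; exact zero_lt_iff.mpr hc
  · calc v a * v b < 1 * v b := by
          exact mul_lt_mul_of_pos_right ha (zero_lt_iff.mpr h)
      _ = v b := one_mul _
      _ ≤ v c := hb

lemma DD_aux {s t : K} (hs : Small v W s) (hst : v t ≤ v s) : v (DD W s t - 1) < 1 := by
  have ht := hs.mono hst
  have h1 : v (s + t) ≤ 1 := v.map_add_le hs.1.le ht.1.le
  have e : DD W s t - 1 = -((W.b₄ * s) * t + (W.b₆ * s) * ((s + t) * t) +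
      (W.b₈ * s) * (s * t * t)) := by rw [DD]; ring
  rw [e, Valuation.map_neg]
  refine v.map_add_lt (v.map_add_lt ?_ ?_) ?_
  · exact vmul_lt_one hs.2.2.1 ht.1.le
  · exact vmul_lt_one hs.2.2.2.1 (vmul_le_one h1 ht.1.le)
  · exact vmul_lt_one hs.2.2.2.2 (vmul_le_one (vmul_le_one hs.1.le ht.1.le) ht.1.le)

lemma DD_symm (s t : K) : DD W s t = DD W t s := by rw [DD, DD]; ring

lemma DD_val {s t : K} (hs : Small v W s) (hst : v t ≤ v s) : v (DD W s t) = 1 := by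
  have := DD_aux hs hst
  have h : DD W s t = 1 + (DD W s t - 1) := by ring
  rw [h, v.map_one_add_of_lt this]

lemma vnat_le_one (n : ℕ) : v (n : K) ≤ 1 := by
  induction n with
  | zero => simp
  | succ n ih => push_cast; exact v.map_add_le ih (by simp)

lemma NN_val {s t : K} (hs : Small v W s) (hs0 : s ≠ 0) (hst : v t ≤ v s) :
    v (NN W s t / DD W s t - 2 * (s + t)) < v s := by
  have hD := DD_val hs hst
  have hD0 : DD W s t ≠ 0 := by intro h; rw [h] at hD; simp at hD
  have ht := hs.mono hst
  have h1 : v (s + t) ≤ 1 := v.map_add_le hs.1.le ht.1.le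
  have hv : v s ≠ 0 := by simpa using hs0
  have h2 : v (2 : K) ≤ 1 := by simpa using vnat_le_one (v := v) 2
  have e : NN W s t / DD W s t - 2 * (s + t) =
     (((W.b₂ * s) * t + ((W.b₄ * s) * (s + t)) * t + ((W.b₆ * s) * (s * t)) * t) +
      (-(DD W s t - 1)) * (2 * (s + t))) / DD W s t := by
    field_simp
    rw [NN]; ring
  have h3 : v (2 * (s + t)) ≤ v s := by
    rw [map_mul]
    exact mul_le_of_le_one_of_le h2 (v.map_add_le le_rfl hst)
  rw [e, map_div₀, hD, div_one]
  refine v.map_add_lt (v.map_add_lt (v.map_add_lt ?_ ?_) ?_) ?_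
  · exact vmul_lt hs.2.1 hst hv
  · exact vmul_lt (vmul_lt_one hs.2.2.1 h1) hst hv
  · exact vmul_lt (vmul_lt_one hs.2.2.2.1 (vmul_le_one hs.1.le ht.1.le)) hst hv
  · refine vmul_lt ?_ h3 hv
    rw [Valuation.map_neg]; exact DD_aux hs hst

variable {F : Type*} [Field F] [DecidableEq F] [Algebra K F]

lemma NN_map (s t : K) : NN (W⁄F) (algebraMap K F s) (algebraMap K F t) =
    algebraMap K F (NN W s t) := by
  simp [NN, WeierstrassCurve.baseChange, map_ofNat (algebraMap K F) 2]

lemma DD_map (s t : K) : DD (W⁄F) (algebraMap K F s) (algebraMap K F t) =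
    algebraMap K F (DD W s t) := by
  simp [DD, WeierstrassCurve.baseChange]

lemma hasS_nsmul_aux {P : (W⁄F).Point} {s : K} (hP : HasS P (algebraMap K F s)) (hs : Small v W s)
    (hs0 : s ≠ 0) (n : ℕ) :
    (∃ u : K, HasS (n • P) (algebraMap K F u) ∧ v (u - (n : K) ^ 2 * s) < v s) ∧
    (∃ u : K, HasS ((n + 1) • P) (algebraMap K F u) ∧ v (u - ((n : K) + 1) ^ 2 * s) < v s) := by
  have hv : v s ≠ 0 := by simpa using hs0
  induction n with
  | zero =>
    refine ⟨⟨0, ?_, ?_⟩, ⟨s, ?_, ?_⟩⟩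
    · simp [hasS_zero]
    · simpa using zero_lt_iff.mpr hv
    · simpa using hP
    · simpa using zero_lt_iff.mpr hv
  | succ n ih =>
    refine ⟨by simpa using ih.2, ?_⟩
    obtain ⟨⟨u, hu, hu'⟩, ⟨w, hw, hw'⟩⟩ := ih
    have hws : v w ≤ v s := by
      have : w = (w - ((n : K) + 1) ^ 2 * s) + ((n + 1 : ℕ) : K) ^ 2 * s := by push_cast; ring
      rw [this]
      refine v.map_add_le hw'.le ?_
      rw [map_mul, map_pow]
      exact mul_le_of_le_one_of_le (pow_le_one' (vnat_le_one _) 2) le_rfl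
    have hD := DD_val hs hws
    have hD0 : DD W s w ≠ 0 := by intro h; rw [h] at hD; simp at hD
    have hN := NN_val hs hs0 hws
    refine ⟨NN W s w / DD W s w - u, ?_, ?_⟩
    · have e : HasS (P - (n + 1) • P) (algebraMap K F u) := by
        rw [← hasS_neg]
        convert hu using 1
        rw [add_smul, one_smul]; abel
      have := hasS_add hP hw e (by rw [DD_map]; simpa using hD0)
      rw [NN_map, DD_map, ← map_div₀, ← map_sub] at this
      convert this using 1
      rw [add_smul _ 1, one_smul, add_comm]
    · have : NN W s w / DD W s w - u - (((n + 1 : ℕ) : K) + 1) ^ 2 * s =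
        (NN W s w / DD W s w - 2 * (s + w)) + (-(u - (n : K) ^ 2 * s)) +
          2 * (w - ((n : K) + 1) ^ 2 * s) := by
        push_cast; ring
      rw [this]
      refine v.map_add_lt (v.map_add_lt hN ?_) ?_
      · rwa [Valuation.map_neg]
      · rw [map_mul]
        refine lt_of_le_of_lt ?_ hw'
        exact mul_le_of_le_one_of_le (by simpa using vnat_le_one (v := v) 2) le_rfl

lemma hasS_nsmul {P : (W⁄F).Point} {s : K} (hP : HasS P (algebraMap K F s)) (hs : Small v W s)
    (hs0 : s ≠ 0) (n : ℕ) :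
    ∃ u : K, HasS (n • P) (algebraMap K F u) ∧ v u ≤ v s ∧ (v (n : K) = 1 → u ≠ 0) := by
  obtain ⟨u, hu, hu'⟩ := (hasS_nsmul_aux hP hs hs0 n).1
  refine ⟨u, hu, ?_, ?_⟩
  · have : u = (u - (n : K) ^ 2 * s) + (n : K) ^ 2 * s := by ring
    rw [this]
    refine v.map_add_le hu'.le ?_
    rw [map_mul, map_pow]
    exact mul_le_of_le_one_of_le (pow_le_one' (vnat_le_one _) 2) le_rfl
  · rintro hn rfl
    rw [zero_sub, Valuation.map_neg, map_mul, map_pow, hn, one_pow, one_mul] at hu'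
    exact lt_irrefl _ hu'

lemma v_natCast_eq_one (p : ℕ) [Fact p.Prime] [CharP K p] {n : ℕ} (hn : ¬ p ∣ n) :
    v (n : K) = 1 := by
  have hp := (Fact.out : p.Prime)
  have h0 : (n : ZMod p) ≠ 0 := by rwa [Ne, ZMod.natCast_eq_zero_iff]
  have h1 : (n : ZMod p) ^ (p - 1) = 1 := ZMod.pow_card_sub_one_eq_one h0
  have h2 : (n : K) ^ (p - 1) = 1 := by
    have := congrArg (ZMod.castHom (dvd_refl p) K) h1
    simpa using this
  have h3 := congrArg v h2
  rw [map_pow, map_one] at h3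
  by_contra hne
  exact (pow_lt_one₀ zero_le (lt_of_le_of_ne (vnat_le_one n) hne)
    (Nat.sub_ne_zero_of_lt hp.one_lt)).ne h3

/-- A torsion point close to the origin is killed by a power of `p`. -/
lemma torsion_ppow (p : ℕ) [Fact p.Prime] [CharP K p] {P : (W⁄F).Point} {s : K}
    (hP : HasS P (algebraMap K F s)) (hs : Small v W s)
    {N : ℕ} (hN : N ≠ 0) (hNP : N • P = 0) : ∃ k : ℕ, (p ^ k) • P = 0 := by
  by_cases hs0 : s = 0
  · refine ⟨0, ?_⟩
    rw [hP.eq_zero_iff.mpr (by simp [hs0]), smul_zero]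
  obtain ⟨k, m, hm, rfl⟩ := Nat.exists_eq_pow_mul_and_not_dvd hN p
    (Fact.out : p.Prime).ne_one
  refine ⟨k, ?_⟩
  obtain ⟨u, hu, huv, -⟩ := hasS_nsmul hP hs hs0 (p ^ k)
  by_contra hne
  have hu0 : u ≠ 0 := by
    rintro rfl
    exact hne (hu.eq_zero_iff.mpr (by simp))
  obtain ⟨w, hw, -, hw0⟩ := hasS_nsmul hu (hs.mono huv) hu0 m
  have := hw0 (v_natCast_eq_one p hm)
  rw [smul_smul, mul_comm, hNP, hasS_zero] at hw
  simp [this] at hw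

/-- In characteristic two, a nonzero point close to the origin is never killed by `2^k`. -/
lemma two_pow_ne_zero [CharP K 2] {P : (W⁄F).Point} {s : K} (hΔ : W.Δ ≠ 0)
    (hP : HasS P (algebraMap K F s)) (hs : Small v W s) (hs0 : s ≠ 0)
    (hs2 : W.b₂ ≠ 0 → v (W.b₆ * s) < v W.b₂)
    (k : ℕ) : (2 ^ k) • P ≠ 0 := by
  have h2 : (2 : K) = 0 := CharTwo.two_eq_zero
  induction k generalizing P s with
  | zero =>
    rw [pow_zero, one_smul, Ne, hP.eq_zero_iff]; simpa using hs0
  | succ k ih =>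
    have hD := DD_val hs le_rfl
    have hD0 : DD W s s ≠ 0 := by intro h; rw [h] at hD; simp at hD
    have := hasS_double hP (by rw [DD_map]; simpa using hD0)
    rw [NN_map, DD_map, ← map_div₀] at this
    rw [pow_succ, mul_smul, two_smul]
    have hNv := NN_val hs hs0 le_rfl
    rw [h2, zero_mul, sub_zero] at hNv
    refine ih this (hs.mono hNv.le) ?_ ?_
    · refine div_ne_zero ?_ hD0
      have e : NN W s s = (W.b₂ + (W.b₆ * s) * s) * s ^ 2 := by
        rw [NN]
        linear_combination (2 * s + W.b₄ * s ^ 3) * h2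
      rw [e]
      refine mul_ne_zero ?_ (pow_ne_zero _ hs0)
      by_cases hb : W.b₂ = 0
      · rw [hb, zero_add]
        refine mul_ne_zero (mul_ne_zero ?_ hs0) hs0
        intro hb6
        apply hΔ
        rw [WeierstrassCurve.Δ, hb, hb6]
        linear_combination (-4 * W.b₄ ^ 3) * h2
      · intro h0
        have h3 : v (W.b₆ * s * s) < v W.b₂ := by
          rw [map_mul]
          refine lt_of_le_of_lt ?_ (hs2 hb)
          exact mul_le_of_le_of_le_one le_rfl hs.1.le
        have h4 : W.b₂ = -(W.b₆ * s * s) := eq_neg_of_add_eq_zero_left h0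
        have h5 := congrArg v h4
        rw [Valuation.map_neg] at h5
        exact absurd h5 h3.ne'
    · intro hb
      refine lt_of_le_of_lt ?_ (hs2 hb)
      rw [map_mul, map_mul]
      exact mul_le_mul_right hNv.le _

end val
end EllRank

namespace EllRank

open WeierstrassCurve WeierstrassCurve.Affine

section approx

variable {K : Type*} [Field K] (v₁ v₂ : Valuation K (WithZero (Multiplicative ℤ)))

lemma exists_exp_bound (S : Finset K) (v : Valuation K (WithZero (Multiplicative ℤ))) :
    ∃ m : ℕ, ∀ a ∈ S, v a < WithZero.exp (m : ℤ) := by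
  classical
  induction S using Finset.induction_on with
  | empty => exact ⟨0, by simp⟩
  | insert a S _ ih =>
    obtain ⟨m, hm⟩ := ih
    refine ⟨max m ((WithZero.log (v a)).toNat + 1), fun b hb ↦ ?_⟩
    rcases Finset.mem_insert.mp hb with rfl | hb
    · apply WithZero.lt_exp_of_log_lt
      push_cast
      have := Int.self_le_toNat (WithZero.log (v b))
      omega
    · refine lt_of_lt_of_le (hm b hb) ?_
      rw [WithZero.exp_le_exp]
      push_cast
      exact le_max_left _ _

lemma exists_approx {b c : K} (hb : v₁ b = WithZero.exp (-1 : ℤ)) (hc1 : v₁ c = 1) (hc2 : v₂ c < 1)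
    (x₀ : K) (S₁ S₂ : Finset K) : ∃ (x : K) (m : ℤ), x ≠ x₀ ∧ v₁ x = WithZero.exp (2 * m + 1) ∧
      (∀ a ∈ S₁, v₁ a < v₁ x) ∧ ∀ a ∈ S₂, v₂ (a * (x - x₀)) < 1 := by
  classical
  obtain ⟨m, hm⟩ := exists_exp_bound (insert x₀ S₁) v₁
  obtain ⟨l, hl⟩ := exists_exp_bound S₂ v₂
  have hb0 : b ≠ 0 := by
    intro h; rw [h, map_zero] at hb; exact WithZero.exp_ne_zero hb.symm
  have hc0 : c ≠ 0 := by rintro rfl; simp at hc1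
  have hb2 : v₂ b ≠ 0 := by simpa using hb0
  obtain ⟨N, hN⟩ := exists_pow_lt₀ hc2
    (Units.mk0 (v₂ b ^ (2 * m + 1) * (WithZero.exp (l : ℤ))⁻¹)
      (mul_ne_zero (pow_ne_zero _ hb2) (inv_ne_zero WithZero.exp_ne_zero)))
  set e : K := c ^ N / b ^ (2 * m + 1) with he
  have he0 : e ≠ 0 := div_ne_zero (pow_ne_zero _ hc0) (pow_ne_zero _ hb0)
  have hv1 : v₁ e = WithZero.exp (2 * (m : ℤ) + 1) := by
    rw [he, map_div₀, map_pow, map_pow, hc1, hb, one_pow, ← WithZero.exp_nsmul, one_div,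
      ← WithZero.exp_neg]
    congr 1
    simp
  have hlt : ∀ a ∈ insert x₀ S₁, v₁ a < v₁ e := fun a ha ↦ by
    refine (hm a ha).trans_le ?_
    rw [hv1, WithZero.exp_le_exp]; omega
  have hx : v₁ (x₀ + e) = v₁ e := v₁.map_add_eq_of_lt_right (hlt x₀ (Finset.mem_insert_self _ _))
  refine ⟨x₀ + e, m, by simpa using he0, by rw [hx, hv1], ?_, ?_⟩
  · intro a ha
    rw [hx]
    exact hlt a (Finset.mem_insert_of_mem ha)
  · intro a ha
    rw [add_sub_cancel_left, map_mul]
    have h1 : v₂ e < (WithZero.exp (l : ℤ))⁻¹ := by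
      rw [he, map_div₀, map_pow, map_pow]
      rw [div_lt_iff₀ (zero_lt_iff.mpr (pow_ne_zero _ hb2)), mul_comm]
      exact hN
    have h2 := hl a ha
    calc v₂ a * v₂ e ≤ WithZero.exp (l : ℤ) * v₂ e := mul_le_mul_left h2.le _
      _ < WithZero.exp (l : ℤ) * (WithZero.exp (l : ℤ))⁻¹ :=
          mul_lt_mul_of_pos_left h1 WithZero.exp_pos
      _ = 1 := mul_inv_cancel₀ WithZero.exp_ne_zero

/-- A point with large `x`-coordinate of odd valuation is not rational. -/
lemma no_y (W : WeierstrassCurve.Affine K) {x : K} {m : ℤ} (hx : v₁ x = WithZero.exp (2 * m + 1))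
    (h : ∀ a ∈ ({1, W.a₁ ^ 2, W.a₂, W.a₃, W.a₄, W.a₆} : Set K), v₁ a < v₁ x) (y : K) :
    ¬ W.Equation x y := by
  intro hy
  rw [equation_iff] at hy
  have h1 : 1 < v₁ x := by simpa using h 1 (by simp)
  have ha1 : v₁ W.a₁ ^ 2 < v₁ x := by
    rw [← map_pow]; exact h _ (by simp)
  have ha2 := h W.a₂ (by simp)
  have ha3 := h W.a₃ (by simp)
  have ha4 := h W.a₄ (by simp)
  have ha6 := h W.a₆ (by simp)
  have hx0 : 0 < v₁ x := lt_trans zero_lt_one h1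
  have hp : ∀ {i j : ℕ}, i ≤ j → v₁ x ^ i ≤ v₁ x ^ j := fun hij ↦ pow_le_pow_right₀ h1.le hij
  have hR : v₁ (x ^ 3 + W.a₂ * x ^ 2 + W.a₄ * x + W.a₆) = v₁ x ^ 3 := by
    rw [show x ^ 3 + W.a₂ * x ^ 2 + W.a₄ * x + W.a₆ = x ^ 3 + (W.a₂ * x ^ 2 + W.a₄ * x + W.a₆) by
      ring, v₁.map_add_eq_of_lt_left, map_pow]
    rw [map_pow]
    refine v₁.map_add_lt (v₁.map_add_lt ?_ ?_) ?_
    · rw [map_mul, map_pow, pow_succ' _ 2]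
      exact mul_lt_mul_of_pos_right ha2 (pow_pos hx0 2)
    · rw [map_mul]
      refine lt_of_lt_of_le (mul_lt_mul_of_pos_right ha4 hx0) ?_
      rw [← pow_two]; exact hp (by norm_num)
    · refine lt_of_lt_of_le ha6 ?_
      simpa using hp (i := 1) (j := 3) (by norm_num)
  have hB : v₁ (W.a₁ * x + W.a₃) ^ 2 < v₁ x ^ 3 := by
    have hle := v₁.map_add (W.a₁ * x) W.a₃
    rcases le_max_iff.mp hle with hle | hle
    · refine lt_of_le_of_lt (pow_le_pow_left₀ zero_le hle 2) ?_
      rw [map_mul, mul_pow, pow_succ' _ 2]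
      exact mul_lt_mul_of_pos_right ha1 (pow_pos hx0 2)
    · refine lt_of_le_of_lt (pow_le_pow_left₀ zero_le hle 2) ?_
      refine lt_of_lt_of_le (pow_lt_pow_left₀ ha3 zero_le two_ne_zero) (hp (by norm_num))
  have hL : v₁ y * v₁ (y + (W.a₁ * x + W.a₃)) = v₁ x ^ 3 := by
    rw [← map_mul, ← hR, ← hy]; congr 1; ring
  by_cases hc : v₁ y ≤ v₁ (W.a₁ * x + W.a₃)
  · have : v₁ y * v₁ (y + (W.a₁ * x + W.a₃)) ≤ v₁ (W.a₁ * x + W.a₃) ^ 2 := by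
      rw [pow_two]
      exact mul_le_mul' hc (v₁.map_add_le hc le_rfl)
    rw [hL] at this
    exact absurd hB (not_lt.mpr this)
  · push Not at hc
    rw [v₁.map_add_eq_of_lt_left hc] at hL
    have hy0 : v₁ y ≠ 0 := fun h0 ↦ by
      rw [h0, zero_mul] at hL
      exact (pow_pos hx0 3).ne hL
    rw [← WithZero.exp_log hy0, hx, ← WithZero.exp_add, ← WithZero.exp_nsmul,
      WithZero.exp_inj] at hL
    simp at hL
    omega

end approx

section torsionpoint

variable {F : Type*} [Field F] [IsSepClosed F]

lemma exists_two_torsion_x (W : WeierstrassCurve F) (h2 : (2 : F) ≠ 0) (hΔ : W.Δ ≠ 0) :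
    ∃ x : F, 4 * x ^ 3 + W.b₂ * x ^ 2 + 2 * W.b₄ * x + W.b₆ = 0 := by
  have h4 : (4 : F) ≠ 0 := by
    rw [show (4 : F) = 2 * 2 by norm_num]; exact mul_ne_zero h2 h2
  have ha : W.twoTorsionPolynomial.a ≠ 0 := by simpa [twoTorsionPolynomial] using h4
  have hsep : W.twoTorsionPolynomial.toPoly.Separable := by
    have hs : (W.twoTorsionPolynomial.toPoly.map
      (algebraMap F (AlgebraicClosure F))).Splits := IsAlgClosed.splits _
    rw [← Polynomial.nodup_aroots_iff_of_splits (Cubic.ne_zero_of_a_ne_zero ha) hs]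
    have := (Cubic.discr_ne_zero_iff_roots_nodup ha hs).mp (by
      rw [twoTorsionPolynomial_discr]
      refine mul_ne_zero ?_ hΔ
      rw [show (16 : F) = 4 * 4 by norm_num]; exact mul_ne_zero h4 h4)
    rwa [Cubic.map_roots] at this
  obtain ⟨x, hx⟩ := IsSepClosed.exists_root _ (by rw [Cubic.degree_of_a_ne_zero ha]; norm_num) hsep
  refine ⟨x, ?_⟩
  simpa [Polynomial.IsRoot, Cubic.toPoly, twoTorsionPolynomial] using hx

end torsionpoint
end EllRank

namespace EllRank

open WeierstrassCurve WeierstrassCurve.Affine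

section nontorsion

variable {K : Type*} [Field K] {W : WeierstrassCurve K}

lemma c0_ne_zero (hΔ : W.Δ ≠ 0) {x : K}
    (hx : 4 * x ^ 3 + W.b₂ * x ^ 2 + 2 * W.b₄ * x + W.b₆ = 0) :
    x ^ 4 - W.b₄ * x ^ 2 - 2 * W.b₆ * x - W.b₈ ≠ 0 := by
  intro h0
  have : W.IsElliptic := ⟨isUnit_iff_ne_zero.mpr hΔ⟩
  refine addSubMap_ne_zero W (x := ![x ^ 2, 2 * x, 1]) (fun h ↦ by simpa using congrFun h 2) ?_
  funext i
  fin_cases i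
  all_goals simp [addSubMap]
  · linear_combination h0
  · linear_combination hx
  · ring

variable {Γ₀ : Type*} [LinearOrderedCommGroupWithZero Γ₀] {v₁ v₂ : Valuation K Γ₀}
variable {F : Type*} [Field F] [DecidableEq F] [Algebra K F]

/-- the elements that have to be small times `x - xT`. -/
def S2 (W : WeierstrassCurve K) (xT : K) : Set K :=
  let c := xT ^ 4 - W.b₄ * xT ^ 2 - 2 * W.b₆ * xT - W.b₈
  {1, 1 / c, W.b₂ ^ 2 / c, W.b₄ ^ 2 / c, W.b₆ ^ 2 / c, W.b₈ ^ 2 / c,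
    (2 * xT ^ 3 - W.b₄ * xT - W.b₆) / c, xT ^ 2 / c}

lemma small_shift (hΔ : W.Δ ≠ 0) (h2 : (2 : K) ≠ 0) {x xT : K} (hxT : x ≠ xT)
    (hT : 4 * xT ^ 3 + W.b₂ * xT ^ 2 + 2 * W.b₄ * xT + W.b₆ = 0)
    (hS : ∀ a ∈ S2 W xT, v₂ (a * (x - xT)) < 1)
    {y : F} (hP : (W⁄F).Nonsingular (algebraMap K F x) y) :
    ∃ (T : (W⁄F).Point) (s : K), T ≠ 0 ∧ T + T = 0 ∧ Small v₂ W s ∧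
      HasS (Point.some _ _ hP + T) (algebraMap K F s) := by
  set c := xT ^ 4 - W.b₄ * xT ^ 2 - 2 * W.b₆ * xT - W.b₈ with hc
  set d := x - xT with hd
  have hd0 : d ≠ 0 := sub_ne_zero.mpr hxT
  have hc0 : c ≠ 0 := c0_ne_zero hΔ hT
  have hvc : 0 < v₂ c := by simpa [zero_lt_iff] using hc0
  have key : ∀ a : K, a / c ∈ S2 W xT → v₂ (a * d) < v₂ c := fun a ha ↦ by
    have := hS _ ha
    rw [div_mul_eq_mul_div, map_div₀, div_lt_iff₀ hvc, one_mul] at this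
    exact this
  have hd1 : v₂ d < 1 := by simpa using hS 1 (by simp [S2])
  set D := (x * xT) ^ 2 - W.b₄ * (x * xT) - W.b₆ * (x + xT) - W.b₈ with hD
  set N := 2 * (x * xT) * (x + xT) + W.b₂ * (x * xT) + W.b₄ * (x + xT) + W.b₆ with hN
  have hDe : D = c + ((2 * xT ^ 3 - W.b₄ * xT - W.b₆) * d + d * (xT ^ 2 * d)) := by
    rw [hD, hc, hd]; ring
  have hDv : v₂ D = v₂ c := by
    rw [hDe]
    refine v₂.map_add_eq_of_lt_left (v₂.map_add_lt (key _ (by simp [S2, ← hc])) ?_)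
    exact vmul_lt hd1 (key _ (by simp [S2, ← hc])).le hvc.ne'
  have hD0 : D ≠ 0 := by
    intro h; rw [h, map_zero] at hDv; exact hvc.ne hDv
  -- the 2-torsion point
  have h2F : (2 : F) ≠ 0 := by
    have := (map_ne_zero (algebraMap K F)).mpr h2
    rwa [map_ofNat] at this
  set yT : K := -(W.a₁ * xT + W.a₃) / 2 with hyT
  have hTeq : Affine.Equation W xT yT := by
    rw [equation_iff, hyT]
    simp only [b₂, b₄, b₆] at hT
    field_simp
    linear_combination -hT
  have hTeqF : (W⁄F).Equation (algebraMap K F xT) (algebraMap K F yT) := by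
    exact hTeq.map (algebraMap K F)
  have hΔF : (W⁄F).Δ ≠ 0 := by
    rw [show (W⁄F).Δ = algebraMap K F W.Δ from W.map_Δ (algebraMap K F)]
    exact (map_ne_zero _).mpr hΔ
  have hTns := ((W⁄F).equation_iff_nonsingular_of_Δ_ne_zero hΔF).mp hTeqF
  have hneg : (W⁄F).negY (algebraMap K F xT) (algebraMap K F yT) = algebraMap K F yT := by
    have : Affine.negY W xT yT = yT := by rw [negY, hyT]; field_simp; ring
    conv_rhs => rw [← this]
    exact Affine.map_negY (W' := W) (algebraMap K F) xT yT
  have hxF : algebraMap K F x ≠ algebraMap K F xT := fun h ↦ hxT ((algebraMap K F).injective h)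
  have e1 := addX_sum hP.1 hTeqF hxF
  have e2 := addX_mul hP.1 hTeqF hxF
  have hadd := Point.add_of_X_ne (h₁ := hP) (h₂ := hTns) hxF
  rw [hneg] at e1 e2
  generalize hX : (W⁄F).addX (algebraMap K F x) (algebraMap K F xT) _ = X at e1 e2
  replace e1 : 2 * X * algebraMap K F d ^ 2 = algebraMap K F N := by
    rw [hd, hN]; simp only [map_add, map_mul, map_sub, map_ofNat]
    simp only [WeierstrassCurve.baseChange, map_b₂, map_b₄, map_b₆] at e1
    linear_combination e1
  replace e2 : X ^ 2 * algebraMap K F d ^ 2 = algebraMap K F D := by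
    rw [hd, hD]; simp only [map_add, map_mul, map_sub, map_pow]
    simp only [WeierstrassCurve.baseChange, map_b₄, map_b₆, map_b₈] at e2
    linear_combination e2
  have hdF : algebraMap K F d ≠ 0 := (map_ne_zero _).mpr hd0
  have hX0 : X ≠ 0 := by
    rintro rfl
    apply (map_ne_zero (algebraMap K F)).mpr hD0
    rw [← e2]; ring
  have hXK : X = algebraMap K F (N / (2 * d ^ 2)) := by
    rw [map_div₀, ← e1]; simp only [map_mul, map_pow, map_ofNat]; field_simp
  set X' := N / (2 * d ^ 2) with hX'
  have e3 : X' ^ 2 * d ^ 2 = D := by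
    apply (algebraMap K F).injective
    rw [← e2, hXK]; simp
  have hX'0 : X' ≠ 0 := by rintro h; rw [h] at hXK; simp at hXK; exact hX0 hXK
  have hsv : ∀ a : K, a ^ 2 / c ∈ S2 W xT → v₂ (a * X'⁻¹) < 1 := fun a ha ↦ by
    have h1 := vmul_lt hd1 (key _ ha).le hvc.ne'
    rw [← hDv, ← e3] at h1
    have h3 : v₂ (X' ^ 2 * d ^ 2) = v₂ X' ^ 2 * v₂ d ^ 2 := by simp
    have h4 : v₂ (d * (a ^ 2 * d)) = v₂ a ^ 2 * v₂ d ^ 2 := by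
      simp only [map_mul, map_pow]; rw [mul_left_comm, pow_two (v₂ d)]
    rw [h3, h4] at h1
    have h5 : v₂ a ^ 2 < v₂ X' ^ 2 := lt_of_mul_lt_mul_right h1 zero_le
    have h6 : v₂ a < v₂ X' := lt_of_pow_lt_pow_left₀ 2 zero_le h5
    rw [map_mul, map_inv₀, ← div_eq_mul_inv, div_lt_one₀ (by simpa [zero_lt_iff] using hX'0)]
    exact h6
  refine ⟨Point.some _ _ hTns, X'⁻¹, Point.some_ne_zero _, Point.add_self_of_Y_eq hneg.symm,
    ⟨?_, ?_, ?_, ?_, ?_⟩, ?_⟩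
  · simpa using hsv 1 (by simp [S2, ← hc])
  · exact hsv _ (by simp [S2, ← hc])
  · exact hsv _ (by simp [S2, ← hc])
  · exact hsv _ (by simp [S2, ← hc])
  · exact hsv _ (by simp [S2, ← hc])
  · rw [hadd, hasS_some, hX, hXK, ← map_mul, mul_inv_cancel₀ hX'0, map_one]

lemma not_torsion_odd (p : ℕ) [Fact p.Prime] [CharP K p] (hp2 : p ≠ 2)
    (hΔ : W.Δ ≠ 0) {x xT : K} (hxT : x ≠ xT)
    (hT : 4 * xT ^ 3 + W.b₂ * xT ^ 2 + 2 * W.b₄ * xT + W.b₆ = 0)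
    (hS : ∀ a ∈ S2 W xT, v₂ (a * (x - xT)) < 1) (hx0 : x ≠ 0) (h1 : Small v₁ W x⁻¹)
    {y : F} (hP : (W⁄F).Nonsingular (algebraMap K F x) y) {N : ℕ} (hN : N ≠ 0) :
    N • Point.some _ _ hP ≠ 0 := by
  intro h
  have hp := (Fact.out : p.Prime)
  have h2 : (2 : K) ≠ 0 := by
    have : ((2 : ℕ) : K) ≠ 0 := by
      rw [Ne, CharP.cast_eq_zero_iff K p]
      intro h
      exact hp2 ((Nat.prime_dvd_prime_iff_eq hp Nat.prime_two).mp h)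
    simpa using this
  obtain ⟨T, s, hT0, hTT, hs, hPT⟩ := small_shift hΔ h2 hxT hT hS hP
  obtain ⟨k, hk⟩ := torsion_ppow p ((hasS_some hP).mpr (by
    rw [← map_mul, mul_inv_cancel₀ hx0, map_one])) h1 hN h
  obtain ⟨l, hl⟩ := torsion_ppow p hPT hs (N := 2 * N) (by omega) (by
    rw [smul_add, mul_smul, h, mul_comm, mul_smul, two_smul ℕ T, hTT]; simp)
  have hfin : p ^ (k + l) • T = 0 := by
    have e1 : p ^ (k + l) • (Point.some _ _ hP + T) = 0 := by rw [pow_add, mul_smul, hl, smul_zero]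
    have e2 : p ^ (k + l) • (Point.some _ _ hP) = 0 := by
      rw [add_comm, pow_add, mul_smul, hk, smul_zero]
    rwa [smul_add, e2, zero_add] at e1
  have hodd : Odd (p ^ (k + l)) := (hp.odd_of_ne_two hp2).pow
  obtain ⟨j, hj⟩ := hodd
  rw [hj, add_smul, mul_comm, mul_smul, two_smul, hTT, smul_zero, zero_add, one_smul] at hfin
  exact hT0 hfin

lemma not_torsion_two [CharP K 2] (hΔ : W.Δ ≠ 0) {x : K}
    (hx0 : x ≠ 0) (h1 : Small v₁ W x⁻¹) (hs2 : W.b₂ ≠ 0 → v₁ (W.b₆ * x⁻¹) < v₁ W.b₂)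
    {y : F} (hP : (W⁄F).Nonsingular (algebraMap K F x) y) {N : ℕ} (hN : N ≠ 0) :
    N • Point.some _ _ hP ≠ 0 := by
  intro h
  have hs : HasS (Point.some _ _ hP) (algebraMap K F x⁻¹) := (hasS_some hP).mpr (by
    rw [← map_mul, mul_inv_cancel₀ hx0, map_one])
  have : Fact (Nat.Prime 2) := ⟨Nat.prime_two⟩
  obtain ⟨k, hk⟩ := torsion_ppow 2 hs h1 hN h
  exact two_pow_ne_zero hΔ hs h1 (inv_ne_zero hx0) hs2 k hk

lemma exists_y_odd [IsSepClosed F] (W : WeierstrassCurve.Affine F) (h2 : (2 : F) ≠ 0) (x : F) :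
    ∃ y, W.Equation x y := by
  have : NeZero (2 : F) := ⟨h2⟩
  obtain ⟨z, hz⟩ := IsSepClosed.exists_eq_mul_self
    (4 * x ^ 3 + W.b₂ * x ^ 2 + 2 * W.b₄ * x + W.b₆)
  refine ⟨(z - (W.a₁ * x + W.a₃)) / 2, ?_⟩
  rw [equation_iff]
  simp only [b₂, b₄, b₆] at hz
  field_simp
  linear_combination -hz

lemma exists_y_two [IsSepClosed F] (W : WeierstrassCurve.Affine F) (h2 : (2 : F) = 0) {x : F}
    (hx : W.a₁ * x + W.a₃ ≠ 0) : ∃ y, W.Equation x y := by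
  obtain ⟨y, hy⟩ := IsSepClosed.exists_root_C_mul_X_pow_add_C_mul_X_add_C (n := 2) 1
    (W.a₁ * x + W.a₃) (-(x ^ 3 + W.a₂ * x ^ 2 + W.a₄ * x + W.a₆)) (by simpa using h2) le_rfl hx
  refine ⟨y, ?_⟩
  rw [equation_iff]
  linear_combination hy

lemma B_ne_zero [CharP K 2] (hΔ : W.Δ ≠ 0) {x : K}
    (hx0 : x ≠ 0) (h1 : Small v₁ W x⁻¹) (hs2 : W.b₂ ≠ 0 → v₁ (W.b₆ * x⁻¹) < v₁ W.b₂) :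
    W.a₁ * x + W.a₃ ≠ 0 := by
  have h2 : (2 : K) = 0 := CharTwo.two_eq_zero
  intro h
  have e : W.b₂ + W.b₆ * x⁻¹ * x⁻¹ = 0 := by
    have : (W.b₂ + W.b₆ * x⁻¹ * x⁻¹) * x ^ 2 = 0 := by
      field_simp
      simp only [b₂, b₆]
      linear_combination (W.a₁ * x + W.a₃) * h +
        (2 * W.a₂ * x ^ 2 + 2 * W.a₆ - W.a₁ * W.a₃ * x) * h2
    exact (mul_eq_zero.mp this).resolve_right (pow_ne_zero _ hx0)
  by_cases hb : W.b₂ = 0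
  · rw [hb, zero_add] at e
    have hb6 : W.b₆ = 0 := by simpa [hx0] using e
    apply hΔ
    rw [WeierstrassCurve.Δ, hb, hb6]
    linear_combination (-4 * W.b₄ ^ 3) * h2
  · have h3 : v₁ (W.b₆ * x⁻¹ * x⁻¹) < v₁ W.b₂ := by
      rw [map_mul]
      exact lt_of_le_of_lt (mul_le_of_le_of_le_one le_rfl h1.1.le) (hs2 hb)
    have h5 := congrArg v₁ (eq_neg_of_add_eq_zero_left e)
    rw [Valuation.map_neg] at h5
    exact absurd h5 h3.ne'

end nontorsion

section main

variable {K : Type*} [Field K] (W : WeierstrassCurve K)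
  (v₁ v₂ : Valuation K (WithZero (Multiplicative ℤ)))
  {F : Type*} [Field F] [DecidableEq F] [Algebra K F] [IsSepClosed F]

/-- Existence of quadratic nontorsion points. -/
lemma exists_point (p : ℕ) [Fact p.Prime] [CharP K p] (hΔ : W.Δ ≠ 0) {b c : K}
    (hb : v₁ b = WithZero.exp (-1 : ℤ)) (hc1 : v₁ c = 1) (hc2 : v₂ c < 1)
    (hT : p ≠ 2 → ∃ xT : K, 4 * xT ^ 3 + W.b₂ * xT ^ 2 + 2 * W.b₄ * xT + W.b₆ = 0) :
    ∃ (x : K) (y : F) (h : (W⁄F).Nonsingular (algebraMap K F x) y),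
      y ∉ Set.range (algebraMap K F) ∧ ∀ N : ℕ, N ≠ 0 → N • Point.some _ _ h ≠ 0 := by
  classical
  obtain ⟨xT, hxT⟩ : ∃ xT : K, p ≠ 2 → 4 * xT ^ 3 + W.b₂ * xT ^ 2 + 2 * W.b₄ * xT + W.b₆ = 0 := by
    by_cases h : p = 2
    · exact ⟨0, fun h' ↦ absurd h h'⟩
    · obtain ⟨xT, h'⟩ := hT h; exact ⟨xT, fun _ ↦ h'⟩
  have hfin : (S2 W xT).Finite := by unfold S2; exact Set.toFinite _
  obtain ⟨x, m, hne, hxm, hS1, hS2⟩ := exists_approx v₁ v₂ hb hc1 hc2 xT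
    {1, W.a₁ ^ 2, W.a₂, W.a₃, W.a₄, W.a₆, W.b₂, W.b₄, W.b₆, W.b₈, W.b₆ / W.b₂} hfin.toFinset
  have hx0 : x ≠ 0 := by
    intro h; rw [h, map_zero] at hxm; exact WithZero.exp_ne_zero hxm.symm
  have hvx : 0 < v₁ x := by simpa [zero_lt_iff] using hx0
  have hsm : ∀ a, v₁ a < v₁ x → v₁ (a * x⁻¹) < 1 := fun a ha ↦ by
    rwa [map_mul, map_inv₀, ← div_eq_mul_inv, div_lt_one₀ hvx]
  have h1 : Small v₁ W x⁻¹ := by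
    refine ⟨?_, ?_, ?_, ?_, ?_⟩
    · simpa using hsm 1 (hS1 _ (by simp))
    all_goals exact hsm _ (hS1 _ (by simp))
  have hs2 : W.b₂ ≠ 0 → v₁ (W.b₆ * x⁻¹) < v₁ W.b₂ := fun h ↦ by
    have := hsm _ (hS1 (W.b₆ / W.b₂) (by simp))
    rw [div_mul_eq_mul_div, map_div₀, div_lt_one₀ (by simpa [zero_lt_iff] using h)] at this
    exact this
  have hΔF : (W⁄F).Δ ≠ 0 := by
    rw [show (W⁄F).Δ = algebraMap K F W.Δ from W.map_Δ (algebraMap K F)]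
    exact (map_ne_zero _).mpr hΔ
  have hno : ∀ y : F, (W⁄F).Equation (algebraMap K F x) y → y ∉ Set.range (algebraMap K F) := by
    rintro _ hy ⟨y, rfl⟩
    refine no_y v₁ W hxm (fun a ha ↦ hS1 a ?_) y ?_
    · simp only [Set.mem_insert_iff, Set.mem_singleton_iff] at ha
      rcases ha with h | h | h | h | h | h <;> simp [h]
    · exact (Affine.map_equation W (algebraMap K F).injective x y).mp hy
  have hy : ∃ y, (W⁄F).Equation (algebraMap K F x) y := by
    by_cases hp : p = 2
    · subst hp
      refine exists_y_two _ ?_ (x := algebraMap K F x) ?_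
      · have := congrArg (algebraMap K F) (CharTwo.two_eq_zero (R := K))
        rwa [map_ofNat, map_zero] at this
      · have := (map_ne_zero (algebraMap K F)).mpr (B_ne_zero hΔ hx0 h1 hs2)
        simpa [WeierstrassCurve.baseChange] using this
    · apply exists_y_odd
      have : ((2 : ℕ) : K) ≠ 0 := by
        rw [Ne, CharP.cast_eq_zero_iff K p]
        intro h
        exact hp ((Nat.prime_dvd_prime_iff_eq Fact.out Nat.prime_two).mp h)
      have := (map_ne_zero (algebraMap K F)).mpr this
      rwa [map_natCast, Nat.cast_ofNat] at this
  obtain ⟨y, hy⟩ := hy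
  refine ⟨x, y, ((W⁄F).equation_iff_nonsingular_of_Δ_ne_zero hΔF).mp hy, hno y hy, fun N hN ↦ ?_⟩
  by_cases hp : p = 2
  · subst hp
    exact not_torsion_two hΔ hx0 h1 hs2 _ hN
  · exact not_torsion_odd p hp hΔ hne (hxT hp) (fun a ha ↦ hS2 a (by simpa using ha)) hx0 h1 _ hN

end main
end EllRank

namespace EllRank

section valuations

/-- the data of two valuations that we need. -/
def HasVals (L : Type*) [Field L] : Prop :=
  ∃ (v₁ v₂ : Valuation L (WithZero (Multiplicative ℤ))) (b c : L),
    v₁ b = WithZero.exp (-1 : ℤ) ∧ v₁ c = 1 ∧ v₂ c < 1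

lemma hasVals_of_dedekind (A E L : Type*) [CommRing A] [IsDedekindDomain A] [Field E]
    [Algebra A E] [IsFractionRing A E] [Field L] [Algebra A L] [Algebra E L] [IsScalarTower A E L]
    [FiniteDimensional E L] [Algebra.IsSeparable E L] (t : A) (ht0 : t ≠ 0) (ht1 : t - 1 ≠ 0)
    (ht : ¬ IsUnit t) (ht' : ¬ IsUnit (t - 1)) : HasVals L := by
  have hD : IsDedekindDomain (integralClosure A L) := integralClosure.isDedekindDomain A E L
  have hF : IsFractionRing (integralClosure A L) L :=
    IsIntegralClosure.isFractionRing_of_finite_extension A E L (integralClosure A L)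
  have hinj : Function.Injective (algebraMap A L) := by
    rw [IsScalarTower.algebraMap_eq A E L]
    exact (algebraMap E L).injective.comp (IsFractionRing.injective A E)
  have hinj' : Function.Injective (algebraMap A (integralClosure A L)) := by
    intro x y h
    apply hinj
    rw [IsScalarTower.algebraMap_apply A (integralClosure A L) L, h,
      ← IsScalarTower.algebraMap_apply]
  have : FaithfulSMul A (integralClosure A L) := (faithfulSMul_iff_algebraMap_injective _ _).mpr hinj'
  have hloc : IsLocalHom (algebraMap A (integralClosure A L)) := inferInstance
  have key : ∀ a : A, a ≠ 0 → ¬ IsUnit a →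
      ∃ m : IsDedekindDomain.HeightOneSpectrum (integralClosure A L),
        algebraMap A (integralClosure A L) a ∈ m.asIdeal := by
    intro a ha hu
    obtain ⟨m, hm, ham⟩ := exists_max_ideal_of_mem_nonunits
      (a := algebraMap A (integralClosure A L) a) (fun h ↦ hu (hloc.map_nonunit a h))
    refine ⟨⟨m, hm.isPrime, ?_⟩, ham⟩
    rintro rfl
    exact ha (hinj' (by simpa using ham))
  obtain ⟨m₁, h₁⟩ := key t ht0 ht
  obtain ⟨m₂, h₂⟩ := key (t - 1) ht1 ht'
  obtain ⟨b, hb⟩ := m₁.valuation_exists_uniformizer L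
  refine ⟨m₁.valuation L, m₂.valuation L, b,
    algebraMap (integralClosure A L) L (algebraMap A _ (t - 1)), hb, ?_, ?_⟩
  · rw [IsDedekindDomain.HeightOneSpectrum.valuation_eq_one_iff_notMem]
    intro h
    rw [map_sub, map_one] at h
    apply m₁.isPrime.ne_top
    rw [Ideal.eq_top_iff_one]
    have := sub_mem h₁ h
    simpa using this
  · rwa [IsDedekindDomain.HeightOneSpectrum.valuation_lt_one_iff_mem]

open IntermediateField IntermediateField.algebraAdjoinAdjoin in
lemma hasVals (k₀ L : Type*) [Field k₀] [PerfectField k₀] [Field L] [Algebra k₀ L]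
    [Algebra.EssFiniteType k₀ L] {t : L} (ht : Transcendental k₀ t) : HasVals L := by
  classical
  obtain ⟨s, hs, hsep⟩ := exists_isTranscendenceBasis_and_isSeparable_of_perfectField k₀ L
  obtain ⟨t0, ht0⟩ : ∃ t0, t0 ∈ s := by
    have : Nonempty s := hs.nonempty_iff_transcendental.mpr ⟨⟨t, ht⟩⟩
    exact ⟨_, this.some.2⟩
  set k := IntermediateField.adjoin k₀ ((s : Set L) \ {t0}) with hk
  have htr : Transcendental k t0 := by
    rw [hk, transcendental_adjoin_iff]
    have := hs.1.transcendental_adjoin (s := {i | i ≠ ⟨t0, ht0⟩}) (i := ⟨t0, ht0⟩) (by simp)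
    have e : (Subtype.val : s → L) '' {i | i ≠ ⟨t0, ht0⟩} = (s : Set L) \ {t0} := by
      ext x
      simp [and_comm]
    rwa [e] at this
  have hE : (k⟮t0⟯).restrictScalars k₀ = IntermediateField.adjoin k₀ (s : Set L) := by
    rw [hk, IntermediateField.adjoin_adjoin_left]
    congr 1
    ext x
    simp only [Set.mem_union, Set.mem_sdiff, Set.mem_singleton_iff, SetLike.mem_coe]
    by_cases hx : x = t0
    · simp [hx, ht0]
    · simp [hx]
  have hsep' : Algebra.IsSeparable k⟮t0⟯ L := by
    rw [← hE] at hsep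
    exact hsep
  have hess : Algebra.EssFiniteType ((k⟮t0⟯).restrictScalars k₀) L :=
    Algebra.EssFiniteType.of_comp k₀ _ L
  have hess' : Algebra.EssFiniteType k⟮t0⟯ L := hess
  have hfin : FiniteDimensional k⟮t0⟯ L := Algebra.finite_of_essFiniteType_of_isAlgebraic
  set e := Polynomial.algEquivOfTranscendental k t0 htr
  have : IsPrincipalIdealRing (Algebra.adjoin k {t0}) :=
    IsPrincipalIdealRing.of_surjective e.toRingHom e.surjective
  have hne : ∀ a : k, Polynomial.X - Polynomial.C a ≠ 0 := fun a ↦ Polynomial.X_sub_C_ne_zero a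
  have hu : ∀ a : k, ¬ IsUnit (Polynomial.X - Polynomial.C a) :=
    fun a ↦ Polynomial.not_isUnit_X_sub_C a
  refine hasVals_of_dedekind (Algebra.adjoin k {t0}) k⟮t0⟯ L (e Polynomial.X) ?_ ?_ ?_ ?_
  · simp
  · rw [← map_one e, ← map_sub, Ne, map_eq_zero_iff e e.injective]
    simpa using hne 1
  · rw [MulEquiv.isUnit_map]
    simpa using hu 0
  · rw [← map_one e, ← map_sub, MulEquiv.isUnit_map]
    simpa using hu 1

end valuations
end EllRank

namespace EllRank

open WeierstrassCurve WeierstrassCurve.Affine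

section rank

lemma exists_finset_of_rank_lt (M : Type*) [AddCommGroup M]
    (h : Module.rank ℚ (ℚ ⊗[ℤ] M) < Cardinal.aleph0) :
    ∃ S : Finset M, ∀ P : M, ∃ n : ℤ, n ≠ 0 ∧ n • P ∈ Submodule.span ℤ (S : Set M) := by
  classical
  have hfin : Module.Finite ℚ (ℚ ⊗[ℤ] M) := Module.rank_lt_aleph0_iff.mp h
  have htop : Submodule.span ℚ (Set.range fun m : M ↦ (1 : ℚ) ⊗ₜ[ℤ] m) = ⊤ := by
    rw [eq_top_iff]
    rintro z -
    induction z using TensorProduct.induction_on with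
    | zero => exact zero_mem _
    | tmul q m =>
      have : q ⊗ₜ[ℤ] m = q • ((1 : ℚ) ⊗ₜ[ℤ] m) := by rw [TensorProduct.smul_tmul']; simp
      rw [this]
      exact Submodule.smul_mem _ _ (Submodule.subset_span ⟨m, rfl⟩)
    | add a b ha hb => exact add_mem ha hb
  have hfg : (Submodule.span ℚ (Set.range fun m : M ↦ (1 : ℚ) ⊗ₜ[ℤ] m)).FG := by
    rw [htop]; exact hfin.fg_top
  rw [Submodule.fg_span_iff_fg_span_finset_subset] at hfg
  obtain ⟨s', hs', hs⟩ := hfg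
  rw [htop] at hs
  rw [← Set.image_univ] at hs'
  obtain ⟨S, -, rfl⟩ := Finset.subset_set_image_iff.mp hs'
  refine ⟨S, fun P ↦ ?_⟩
  set N := Submodule.span ℤ (S : Set M) with hN
  have hzero : (N.mkQ).baseChange ℚ = 0 := by
    apply LinearMap.ext_on hs.symm
    intro x hx
    obtain ⟨m, hm, rfl⟩ := by simpa using hx
    have : N.mkQ m = 0 := by
      rw [Submodule.mkQ_apply, Submodule.Quotient.mk_eq_zero]
      exact Submodule.subset_span hm
    simp only [LinearMap.baseChange_tmul, this, TensorProduct.tmul_zero, LinearMap.zero_apply]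
  have h1 : (1 : ℚ) ⊗ₜ[ℤ] (N.mkQ P) = 0 := by
    have := LinearMap.congr_fun hzero ((1 : ℚ) ⊗ₜ[ℤ] P)
    simpa using this
  have hloc : IsLocalizedModule (nonZeroDivisors ℤ) (TensorProduct.mk ℤ ℚ (M ⧸ N) 1) :=
    (isLocalizedModule_iff_isBaseChange (nonZeroDivisors ℤ) ℚ _).mpr
      (TensorProduct.isBaseChange ℤ (M ⧸ N) ℚ)
  obtain ⟨c, hc⟩ := (IsLocalizedModule.eq_zero_iff (nonZeroDivisors ℤ)
    (TensorProduct.mk ℤ ℚ (M ⧸ N) 1)).mp h1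
  refine ⟨c, nonZeroDivisors.ne_zero c.2, ?_⟩
  rw [← Submodule.Quotient.mk_eq_zero, Submodule.Quotient.mk_smul]
  exact hc

end rank

section galois

variable {K : Type*} [Field K] {F : Type*} [Field F] [DecidableEq F] [Algebra K F]
  (W : WeierstrassCurve K)

/-- A point with coordinates in `K`. -/
def IsRat (P : (W⁄F).Point) : Prop :=
  ∀ x y h, P = Point.some x y h → x ∈ Set.range (algebraMap K F) ∧ y ∈ Set.range (algebraMap K F)

open IntermediateField in
lemma conj_point {x : K} {y : F} (hP : (W⁄F).Nonsingular (algebraMap K F x) y)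
    (hy : y ∉ Set.range (algebraMap K F)) {S : Set (W⁄F).Point} (hS : ∀ Q ∈ S, IsRat W Q)
    {n : ℤ} (hn : n • Point.some _ _ hP ∈ Submodule.span ℤ S) :
    (2 * n) • Point.some _ _ hP = 0 := by
  classical
  -- the points of the span are rational
  have hrat : ∀ Q ∈ Submodule.span ℤ S,
      ∃ Q₀ : (W⁄K).Point, Point.map (W' := W) (Algebra.ofId K F) Q₀ = Q := by
    intro Q hQ
    suffices h : Submodule.span ℤ S ≤
        AddSubgroup.toIntSubmodule (Point.map (W' := W) (Algebra.ofId K F)).range by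
      exact h hQ
    rw [Submodule.span_le]
    intro R hR
    rcases R with _ | ⟨a, b, hab⟩
    · exact ⟨0, rfl⟩
    · obtain ⟨⟨a', rfl⟩, ⟨b', rfl⟩⟩ := hS _ hR _ _ _ rfl
      exact ⟨Point.some a' b' ((baseChange_nonsingular (W := W) (f := Algebra.ofId K F)
        (algebraMap K F).injective a' b').mp hab), rfl⟩
  obtain ⟨Q₀, hQ₀⟩ := hrat _ hn
  -- the conjugation
  set B : K := W.a₁ * x + W.a₃ with hB
  set C' : K := -(x ^ 3 + W.a₂ * x ^ 2 + W.a₄ * x + W.a₆) with hC'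
  set g : Polynomial K := Polynomial.X ^ 2 + Polynomial.C B * Polynomial.X + Polynomial.C C'
    with hg
  have hgm : g.Monic := by rw [hg]; monicity!
  have hgd : g.natDegree = 2 := by rw [hg]; compute_degree!
  have hroot : ∀ z : F, (W⁄F).Equation (algebraMap K F x) z → Polynomial.aeval z g = 0 := by
    intro z hz
    rw [equation_iff] at hz
    simp only [WeierstrassCurve.baseChange, map_a₁, map_a₂, map_a₃, map_a₄, map_a₆] at hz
    simp only [hg, hB, hC', map_add, map_mul, map_pow, map_neg, Polynomial.aeval_X,
      Polynomial.aeval_C]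
    linear_combination hz
  have hyInt : IsIntegral K y := ⟨g, hgm, by simpa [Polynomial.aeval_def] using hroot y hP.1⟩
  have hmin : minpoly K y = g := by
    refine (Polynomial.eq_of_monic_of_dvd_of_natDegree_le (minpoly.monic hyInt) hgm
      (minpoly.dvd K y (hroot y hP.1)) ?_).symm
    rw [hgd]
    exact (minpoly.two_le_natDegree_iff hyInt).mpr hy
  set y' := (W⁄F).negY (algebraMap K F x) y with hy'
  have hnegns : (W⁄F).Nonsingular (algebraMap K F x) y' := (nonsingular_neg ..).mpr hP
  let σ : K⟮y⟯ →ₐ[K] F := (algHomAdjoinIntegralEquiv K hyInt).symm ⟨y', by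
    rw [Polynomial.mem_aroots, hmin]
    exact ⟨hgm.ne_zero, hroot _ hnegns.1⟩⟩
  have hσ : σ (AdjoinSimple.gen K y) = y' := algHomAdjoinIntegralEquiv_symm_apply_gen K hyInt _
  have hns : (W⁄K⟮y⟯).Nonsingular (algebraMap K K⟮y⟯ x) (AdjoinSimple.gen K y) := by
    rw [← baseChange_nonsingular (W := W) (f := (K⟮y⟯).val) (K⟮y⟯).val.injective]
    exact hP
  set P' : (W⁄K⟮y⟯).Point := Point.some _ _ hns with hP'
  have h1 : Point.map (W' := W) (K⟮y⟯).val P' = Point.some _ _ hP := rfl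
  have h2 : Point.map (W' := W) σ P' = -Point.some _ _ hP := by
    rw [hP', Point.map_some, Point.neg_some]
    simp only [Point.some.injEq]
    exact ⟨σ.commutes x, hσ⟩
  have hc : ∀ f : K⟮y⟯ →ₐ[K] F, Point.map (W' := W) f (Point.map (Algebra.ofId K K⟮y⟯) Q₀) =
      n • Point.some _ _ hP := by
    intro f
    rw [← hQ₀, Point.map_map]
    congr 2
    exact Subsingleton.elim _ _
  have h3 : n • P' = Point.map (W' := W) (Algebra.ofId K K⟮y⟯) Q₀ := by
    apply Point.map_injective (W' := W) (K⟮y⟯).val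
    rw [hc, map_zsmul, h1]
  have h4 := hc σ
  rw [← h3, map_zsmul, h2, smul_neg] at h4
  rw [two_mul, add_smul]
  nth_rewrite 1 [← h4]
  exact neg_add_cancel _

end galois

section final

/-- The contradiction, once everything is defined over a finitely generated subfield. -/
lemma contra (p : ℕ) [Fact p.Prime] (F : Type*) [Field F] [DecidableEq F] [IsSepClosed F]
    [Algebra (ZMod p) F] (K : Type*) [Field K] [Algebra (ZMod p) K]
    [Algebra.EssFiniteType (ZMod p) K] [Algebra K F] {t : K} (ht : Transcendental (ZMod p) t)
    (WK : WeierstrassCurve K) (W : WeierstrassCurve.Affine F) (hW : W = WK⁄F) (hΔ : W.Δ ≠ 0)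
    (hT : p ≠ 2 → ∃ xT : K, 4 * xT ^ 3 + WK.b₂ * xT ^ 2 + 2 * WK.b₄ * xT + WK.b₆ = 0)
    (S : Set W.Point) (hS : ∀ x y h, Point.some x y h ∈ S →
      x ∈ Set.range (algebraMap K F) ∧ y ∈ Set.range (algebraMap K F))
    (hspan : ∀ P : W.Point, ∃ n : ℤ, n ≠ 0 ∧ n • P ∈ Submodule.span ℤ S) : False := by
  subst hW
  have : CharP K p := charP_of_injective_algebraMap (algebraMap (ZMod p) K).injective p
  have hΔK : WK.Δ ≠ 0 := by
    intro h
    apply hΔ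
    rw [show (WK⁄F).Δ = algebraMap K F WK.Δ from WK.map_Δ (algebraMap K F), h, map_zero]
  obtain ⟨v₁, v₂, b, c, hb, hc1, hc2⟩ := hasVals (ZMod p) K ht
  obtain ⟨x, y, h, hy, hN⟩ := exists_point (F := F) WK v₁ v₂ p hΔK hb hc1 hc2 hT
  obtain ⟨n, hn0, hn⟩ := hspan (Point.some _ _ h)
  have h2 := conj_point WK h hy (S := S) (fun Q hQ x y hxy hQe ↦ hS x y hxy (hQe ▸ hQ)) hn
  refine hN (2 * n).natAbs (by simpa using hn0) ?_
  rcases Int.natAbs_eq (2 * n) with h' | h'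
  · rw [h', natCast_zsmul] at h2; exact h2
  · rw [h', neg_smul, natCast_zsmul, neg_eq_zero] at h2; exact h2

end final
end EllRank

open scoped Classical in
theorem statement8 (p : ℕ) [Fact p.Prime] (F : Type*) [Field F] [IsSepClosed F]
    [CharP F p] [Algebra (ZMod p) F] (hF : ∃ x : F, Transcendental (ZMod p) x)
    (W : WeierstrassCurve.Affine F) (hΔ : W.Δ ≠ 0) :
    Cardinal.aleph0 ≤ Module.rank ℚ (ℚ ⊗[ℤ] W.Point) := by
  by_contra hlt
  rw [not_le] at hlt
  obtain ⟨S, hS⟩ := EllRank.exists_finset_of_rank_lt _ hlt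
  obtain ⟨t, ht⟩ := hF
  obtain ⟨xT, hxT⟩ : ∃ xT : F, p ≠ 2 →
      4 * xT ^ 3 + W.b₂ * xT ^ 2 + 2 * W.b₄ * xT + W.b₆ = 0 := by
    by_cases hp : p = 2
    · exact ⟨0, fun h ↦ absurd hp h⟩
    · have h2 : (2 : F) ≠ 0 := by
        have : ((2 : ℕ) : F) ≠ 0 := by
          rw [Ne, CharP.cast_eq_zero_iff F p]
          intro h
          exact hp ((Nat.prime_dvd_prime_iff_eq Fact.out Nat.prime_two).mp h)
        simpa using this
      obtain ⟨xT, h⟩ := EllRank.exists_two_torsion_x W h2 hΔ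
      exact ⟨xT, fun _ ↦ h⟩
  let cx : W.Point → F := fun P ↦ match P with
    | .zero => 0
    | .some x _ _ => x
  let cy : W.Point → F := fun P ↦ match P with
    | .zero => 0
    | .some _ y _ => y
  set G : Finset F := {t, xT, W.a₁, W.a₂, W.a₃, W.a₄, W.a₆} ∪ (S.image cx ∪ S.image cy) with hG
  set L := IntermediateField.adjoin (ZMod p) (G : Set F) with hL
  have hmem : ∀ z ∈ G, z ∈ L := fun z hz ↦ IntermediateField.subset_adjoin _ _ hz
  have hess : Algebra.EssFiniteType (ZMod p) L :=
    IntermediateField.essFiniteType_iff.mpr ⟨G, rfl⟩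
  let WL : WeierstrassCurve L := ⟨⟨W.a₁, hmem _ (by simp [hG])⟩, ⟨W.a₂, hmem _ (by simp [hG])⟩,
    ⟨W.a₃, hmem _ (by simp [hG])⟩, ⟨W.a₄, hmem _ (by simp [hG])⟩, ⟨W.a₆, hmem _ (by simp [hG])⟩⟩
  have hW : W = WL.map (algebraMap L F) := rfl
  refine EllRank.contra p F L (t := ⟨t, hmem _ (by simp [hG])⟩) ?_ WL W hW hΔ ?_ S ?_ hS
  · intro halg
    apply ht
    exact halg.algebraMap (A := F)
  · intro hp
    refine ⟨⟨xT, hmem _ (by simp [hG])⟩, ?_⟩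
    apply (algebraMap L F).injective
    have h := hxT hp
    rw [hW, WeierstrassCurve.map_b₂, WeierstrassCurve.map_b₄, WeierstrassCurve.map_b₆] at h
    simp only [map_add, map_mul, map_pow, map_ofNat, map_zero]
    exact h
  · intro x y h hm
    have hx : x ∈ S.image cx := Finset.mem_image.mpr ⟨_, hm, rfl⟩
    have hy : y ∈ S.image cy := Finset.mem_image.mpr ⟨_, hm, rfl⟩
    exact ⟨⟨⟨x, hmem _ (Finset.mem_union_right _ (Finset.mem_union_left _ hx))⟩, rfl⟩,
      ⟨⟨y, hmem _ (Finset.mem_union_right _ (Finset.mem_union_right _ hy))⟩, rfl⟩⟩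
end

section
/- Let $p$ be a prime and let $W$ be an elliptic curve over the field $\mathbb{Q}_p$ of $p$-adic numbers (a Weierstrass curve over $\mathbb{Q}_p$ with nonzero discriminant). Then the rank of the group $W(\mathbb{Q}_p)$ of $\mathbb{Q}_p$-rational points of $W$ is infinite, i.e. the $\mathbb{Q}$-vector space $W(\mathbb{Q}_p) \otimes_{\mathbb{Z}} \mathbb{Q}$ is infinite-dimensional. -/
open TensorProduct

open WeierstrassCurve

def IsLog {R F : Type*} [CommRing R] [Field F] [Algebra R F] (D : Derivation R F F)
    (W : WeierstrassCurve.Affine F) (w : F) : W.Point → Prop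
  | .zero => w = 0
  | .some x y _ => D x = w * (2 * y + W.a₁ * x + W.a₃) ∧
      D y = w * (3 * x ^ 2 + 2 * W.a₂ * x + W.a₄ - W.a₁ * y)

section
variable {R F : Type*} [CommRing R] [Field F] [Algebra R F] (D : Derivation R F F)
    (W : WeierstrassCurve.Affine F)

lemma isLog_curve (h1 : D W.a₁ = 0) (h2 : D W.a₂ = 0) (h3 : D W.a₃ = 0) (h4 : D W.a₄ = 0)
    (h6 : D W.a₆ = 0) {x y : F} (h : W.Equation x y) :
    (2 * y + W.a₁ * x + W.a₃) * D y = (3 * x ^ 2 + 2 * W.a₂ * x + W.a₄ - W.a₁ * y) * D x := by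
  rw [Affine.equation_iff] at h
  have := congrArg D h
  simp [Derivation.leibniz, Derivation.leibniz_pow, h1, h2, h3, h4, h6] at this
  linear_combination this

lemma isLog_nonsing {x y : F} (h : W.Nonsingular x y) :
    2 * y + W.a₁ * x + W.a₃ ≠ 0 ∨ 3 * x ^ 2 + 2 * W.a₂ * x + W.a₄ - W.a₁ * y ≠ 0 := by
  rw [Affine.nonsingular_iff] at h
  rcases h.2 with h | h
  · right; intro h'; apply h; linear_combination - h'
  · left; intro h'; apply h; linear_combination  h'

lemma isLog_unique {w w' : F} {P : W.Point} (h : IsLog D W w P) (h' : IsLog D W w' P) : w = w' := by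
  rcases P with _ | ⟨x, y, hP⟩
  · exact h.trans h'.symm
  · rcases isLog_nonsing W hP with hu | hu
    · exact mul_right_cancel₀ hu (h.1.symm.trans h'.1)
    · exact mul_right_cancel₀ hu (h.2.symm.trans h'.2)

lemma isLog_exists (h1 : D W.a₁ = 0) (h2 : D W.a₂ = 0) (h3 : D W.a₃ = 0) (h4 : D W.a₄ = 0)
    (h6 : D W.a₆ = 0) (P : W.Point) : ∃ w, IsLog D W w P := by
  rcases P with _ | ⟨x, y, hP⟩
  · exact ⟨0, rfl⟩
  · have := isLog_curve D W h1 h2 h3 h4 h6 hP.1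
    rcases isLog_nonsing W hP with hu | hu
    · refine ⟨D x / (2 * y + W.a₁ * x + W.a₃), ?_, ?_⟩
      · rw [div_mul_cancel₀ _ hu]
      · rw [div_mul_eq_mul_div, eq_div_iff hu]; linear_combination this
    · refine ⟨D y / (3 * x ^ 2 + 2 * W.a₂ * x + W.a₄ - W.a₁ * y), ?_, ?_⟩
      · rw [div_mul_eq_mul_div, eq_div_iff hu]; linear_combination -this
      · rw [div_mul_cancel₀ _ hu]

lemma isLog_neg (h1 : D W.a₁ = 0) (h3 : D W.a₃ = 0) {w : F} {P : W.Point}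
    (h : IsLog D W w P) : IsLog D W (-w) (-P) := by
  rcases P with _ | ⟨x, y, hP⟩
  · change -w = 0
    rw [show w = 0 from h, neg_zero]
  · obtain ⟨hx, hy⟩ := h
    rw [Affine.Point.neg_some]
    refine ⟨?_, ?_⟩
    · rw [hx, Affine.negY]; ring
    · simp [Affine.negY, Derivation.leibniz, h1, h3, hx, hy]; ring

lemma isLog_alg_add {a1 a2 a3 a4 x₁ x₂ y₁ y₂ L M w w' x3 y3 X3 : F} (hd : x₁ - x₂ ≠ 0)
    (hy2 : y₂ = y₁ - L * (x₁ - x₂))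
    (e3 : x₁ ^ 2 + x₁ * x₂ + x₂ ^ 2 + a2 * (x₁ + x₂) + a4 - a1 * y₁ -
      L * (y₁ + y₂ + a1 * x₂ + a3) = 0)
    (hM : M * (x₁ - x₂) = w * (3 * x₁ ^ 2 + 2 * a2 * x₁ + a4 - a1 * y₁)
        - w' * (3 * x₂ ^ 2 + 2 * a2 * x₂ + a4 - a1 * y₂)
        - L * (w * (2 * y₁ + a1 * x₁ + a3) - w' * (2 * y₂ + a1 * x₂ + a3)))
    (hx3 : x3 = L ^ 2 + a1 * L - a2 - x₁ - x₂)
    (hy3 : y3 = -(L * (x3 - x₁) + y₁) - a1 * x3 - a3)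
    (hX3 : X3 = (2 * L + a1) * M - w * (2 * y₁ + a1 * x₁ + a3) - w' * (2 * y₂ + a1 * x₂ + a3)) :
    X3 = (w + w') * (2 * y3 + a1 * x3 + a3) ∧
    -(M * (x3 - x₁) + L * (X3 - w * (2 * y₁ + a1 * x₁ + a3))
      + w * (3 * x₁ ^ 2 + 2 * a2 * x₁ + a4 - a1 * y₁)) - a1 * X3 =
      (w + w') * (3 * x3 ^ 2 + 2 * a2 * x3 + a4 - a1 * y3) := by
  have key : ∀ z t : F, (z - t) * (x₁ - x₂) = 0 → z = t :=
    fun z t hz => sub_eq_zero.1 ((mul_eq_zero.1 hz).resolve_right hd)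
  have hA : X3 = (w + w') * (2 * y3 + a1 * x3 + a3) := by
    apply key
    subst hX3 hy3 hx3 hy2
    linear_combination (2 * L + a1) * hM + (w - w') * (2 * L + a1) * e3
  refine ⟨hA, ?_⟩
  rw [hA]
  clear hX3 hA
  apply key
  subst hy3 hx3 hy2
  linear_combination (-(L ^ 2 + a1 * L - a2 - x₁ - x₂ - x₁)) * hM +
    (w * (-(L ^ 2 + a1 * L - a2 - x₁ - x₂ - x₁) - 2 * (x₁ - x₂)) +
      w' * ((L ^ 2 + a1 * L - a2 - x₁ - x₂ - x₁) - (x₁ - x₂))) * e3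

lemma isLog_alg_dbl {a1 a2 a3 a4 x y L M w x3 y3 X3 : F}
    (hu : 2 * y + a1 * x + a3 ≠ 0)
    (hL : L * (2 * y + a1 * x + a3) = 3 * x ^ 2 + 2 * a2 * x + a4 - a1 * y)
    (hM : M * (2 * y + a1 * x + a3) + L * (2 * (w * (3 * x ^ 2 + 2 * a2 * x + a4 - a1 * y))
        + a1 * (w * (2 * y + a1 * x + a3)))
        = 6 * x * (w * (2 * y + a1 * x + a3)) + 2 * a2 * (w * (2 * y + a1 * x + a3))
          - a1 * (w * (3 * x ^ 2 + 2 * a2 * x + a4 - a1 * y)))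
    (hx3 : x3 = L ^ 2 + a1 * L - a2 - x - x)
    (hy3 : y3 = -(L * (x3 - x) + y) - a1 * x3 - a3)
    (hX3 : X3 = (2 * L + a1) * M - w * (2 * y + a1 * x + a3) - w * (2 * y + a1 * x + a3)) :
    X3 = (w + w) * (2 * y3 + a1 * x3 + a3) ∧
    -(M * (x3 - x) + L * (X3 - w * (2 * y + a1 * x + a3))
      + w * (3 * x ^ 2 + 2 * a2 * x + a4 - a1 * y)) - a1 * X3 =
      (w + w) * (3 * x3 ^ 2 + 2 * a2 * x3 + a4 - a1 * y3) := by
  have hM' : M = w * (6 * x + 2 * a2 - a1 * L - L * (2 * L + a1)) := by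
    apply mul_right_cancel₀ hu
    linear_combination hM + w * (2 * L + a1) * hL
  have hA : X3 = (w + w) * (2 * y3 + a1 * x3 + a3) := by
    subst hX3 hy3 hx3 hM'
    ring
  refine ⟨hA, ?_⟩
  rw [hA]
  clear hX3 hA hM
  subst hy3 hx3 hM'
  linear_combination 3 * w * hL

lemma isLog_add [DecidableEq F]
    (h1 : D W.a₁ = 0) (h2 : D W.a₂ = 0) (h3 : D W.a₃ = 0)
    (h4 : D W.a₄ = 0) {w w' : F} {P Q : W.Point}
    (h : IsLog D W w P) (h' : IsLog D W w' Q) : IsLog D W (w + w') (P + Q) := by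
  rcases P with _ | ⟨x₁, y₁, hP⟩
  · rw [show w = 0 from h, zero_add]
    change IsLog D W w' (0 + Q)
    rwa [zero_add]
  rcases Q with _ | ⟨x₂, y₂, hQ⟩
  · rw [show w' = 0 from h', add_zero]
    change IsLog D W w (_ + 0)
    rwa [add_zero]
  by_cases hxy : x₁ = x₂ ∧ y₁ = W.negY x₂ y₂
  · rw [Affine.Point.add_of_Y_eq hxy.1 hxy.2]
    change w + w' = 0
    have : Affine.Point.some _ _ hP = -Affine.Point.some _ _ hQ := by
      rw [Affine.Point.neg_some]; simp [hxy]
    rw [this] at h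
    rw [isLog_unique D W h (isLog_neg D W h1 h3 h')]; ring
  · rw [Affine.Point.add_some hxy]
    obtain ⟨hx, hy⟩ := h
    obtain ⟨hx', hy'⟩ := h'
    have e1 := (W.equation_iff x₁ y₁).1 hP.1
    have e2 := (W.equation_iff x₂ y₂).1 hQ.1
    have hD3 : ∀ L : F, D (W.addX x₁ x₂ L) = (2 * L + W.a₁) * D L - w * (2 * y₁ + W.a₁ * x₁ + W.a₃)
          - w' * (2 * y₂ + W.a₁ * x₂ + W.a₃) := by
      intro L
      simp only [Affine.addX, map_sub, map_add, Derivation.leibniz, Derivation.leibniz_pow, h1, h2,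
        smul_eq_mul, hx, hx', nsmul_eq_mul]
      push_cast
      ring
    have hE3 : ∀ L : F, D (W.addY x₁ x₂ y₁ L) = -(D L * (W.addX x₁ x₂ L - x₁) +
        L * (D (W.addX x₁ x₂ L) - w * (2 * y₁ + W.a₁ * x₁ + W.a₃))
      + w * (3 * x₁ ^ 2 + 2 * W.a₂ * x₁ + W.a₄ - W.a₁ * y₁)) - W.a₁ * D (W.addX x₁ x₂ L) := by
      intro L
      simp only [Affine.addY, Affine.negAddY, Affine.negY, map_sub, map_add, map_neg,
        Derivation.leibniz, h1, h3, smul_eq_mul, hx, hy]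
      ring
    by_cases hxx : x₁ = x₂
    · have hyy := Affine.Y_eq_of_Y_ne hP.1 hQ.1 hxx (fun hh => hxy ⟨hxx, hh⟩)
      subst hxx hyy
      have hww : w = w' := isLog_unique D W (P := .some _ _ hP) ⟨hx, hy⟩ ⟨hx', hy'⟩
      subst hww
      have hne : y₁ ≠ W.negY x₁ y₁ := fun hh => hxy ⟨rfl, hh⟩
      have hu : 2 * y₁ + W.a₁ * x₁ + W.a₃ ≠ 0 := by
        intro hh; apply hne; rw [Affine.negY]; linear_combination hh
      have hL : W.slope x₁ x₁ y₁ y₁ * (2 * y₁ + W.a₁ * x₁ + W.a₃) =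
          3 * x₁ ^ 2 + 2 * W.a₂ * x₁ + W.a₄ - W.a₁ * y₁ := by
        rw [Affine.slope_of_Y_ne rfl hne, div_mul_eq_mul_div, div_eq_iff (sub_ne_zero.2 hne),
          Affine.negY]
        ring
      have hDL := congrArg D hL
      have hn2 : D 2 = 0 := by exact_mod_cast D.map_natCast 2
      have hn3 : D 3 = 0 := by exact_mod_cast D.map_natCast 3
      simp only [IsLog, hE3]
      refine isLog_alg_dbl hu hL ?_ rfl rfl (hD3 _)
      simp only [map_sub, map_add, Derivation.leibniz, Derivation.leibniz_pow, h1, h2, h3, h4,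
        smul_eq_mul, hx, hy, nsmul_eq_mul, hn2, hn3] at hDL
      push_cast at hDL
      linear_combination hDL
    · have hd : x₁ - x₂ ≠ 0 := sub_ne_zero.2 hxx
      have hL : W.slope x₁ x₂ y₁ y₂ * (x₁ - x₂) = y₁ - y₂ := by
        rw [Affine.slope_of_X_ne hxx, div_mul_cancel₀ _ hd]
      have hDL := congrArg D hL
      simp only [IsLog, hE3]
      refine isLog_alg_add hd (by linear_combination hL) ?_ ?_ rfl rfl (hD3 _)
      · apply mul_right_cancel₀ hd
        linear_combination e2 - e1 - (y₁ + y₂ + W.a₁ * x₂ + W.a₃) * hL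
      · simp only [Derivation.leibniz, map_sub, smul_eq_mul, hx, hy, hx', hy'] at hDL
        linear_combination hDL
end

lemma isLog_nsmul {R F : Type*} [CommRing R] [Field F] [Algebra R F] (D : Derivation R F F)
    (W : WeierstrassCurve.Affine F) [DecidableEq F]
    (h1 : D W.a₁ = 0) (h2 : D W.a₂ = 0) (h3 : D W.a₃ = 0)
    (h4 : D W.a₄ = 0) {w : F} {P : W.Point} (h : IsLog D W w P) (n : ℕ) :
    IsLog D W (n * w) (n • P) := by
  induction n with
  | zero => rw [zero_smul, Nat.cast_zero, zero_mul]; rfl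
  | succ n ih =>
    rw [succ_nsmul, Nat.cast_succ, add_mul, one_mul]
    exact isLog_add D W h1 h2 h3 h4 ih h

lemma isLog_zero_of_smul_eq {R F : Type*} [CommRing R] [Field F] [CharZero F] [Algebra R F]
    (D : Derivation R F F) (W : WeierstrassCurve.Affine F) [DecidableEq F]
    (h1 : D W.a₁ = 0) (h2 : D W.a₂ = 0) (h3 : D W.a₃ = 0)
    (h4 : D W.a₄ = 0) (h6 : D W.a₆ = 0) {P Q : W.Point} (c : ℤ) (hc : c ≠ 0) (h : c • P = c • Q)
    (hQ : IsLog D W 0 Q) : IsLog D W 0 P := by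
  have hn : c.natAbs • P = c.natAbs • Q := by
    rcases Int.natAbs_eq c with hh | hh
    · rw [hh] at h
      simpa only [natCast_zsmul] using h
    · rw [hh] at h
      simpa only [neg_smul, natCast_zsmul, neg_inj] using h
  obtain ⟨w, hw⟩ := isLog_exists D W h1 h2 h3 h4 h6 P
  have hA := isLog_nsmul D W h1 h2 h3 h4 hw c.natAbs
  have hB := isLog_nsmul D W h1 h2 h3 h4 hQ c.natAbs
  rw [hn] at hA
  have hu := isLog_unique D W hA hB
  rw [mul_zero, mul_eq_zero] at hu
  have hc' : (c.natAbs : F) ≠ 0 := by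
    rw [Nat.cast_ne_zero]; exact Int.natAbs_ne_zero.2 hc
  rw [← hu.resolve_left hc']
  exact hw

open scoped IntermediateField.algebraAdjoinAdjoin in
lemma exists_derivation_ne_zero {K L : Type*} [Field K] [Field L] [CharZero K] [Algebra K L] {s : L}
    (hs : Transcendental K s) : ∃ D : Derivation K L L, D s ≠ 0 := by
  have hi : AlgebraicIndepOn K id ({s} : Set L) := by
    have : Unique ({s} : Set L) := Set.uniqueSingleton s
    exact (algebraicIndependent_singleton_iff (⟨s, rfl⟩ : ({s} : Set L))).2 hs
  obtain ⟨t, hst, ht⟩ := exists_isTranscendenceBasis_superset hi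
  have hst' : s ∈ t := hst rfl
  let v : t → L := Subtype.val
  have hb : AlgebraicIndependent K v := ht.1
  have := ht.isAlgebraic_field
  have : CharZero L := charZero_of_injective_algebraMap (algebraMap K L).injective
  let A := Algebra.adjoin K (Set.range v)
  let E := IntermediateField.adjoin K (Set.range v)
  have : Algebra.IsAlgebraic E L := ht.isAlgebraic_field
  have : CharZero E := charZero_of_injective_algebraMap (algebraMap K E).injective
  have : Algebra.FormallyEtale E L := Algebra.FormallyEtale.of_isSeparable E L
  have : Algebra.FormallyEtale A E := .of_isLocalization (nonZeroDivisors _)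
  have : Algebra.FormallyEtale A L := .comp A E L
  let M := MvPolynomial t K
  let e : M ≃ₐ[K] A := hb.aevalEquiv
  -- a derivation on A
  let a : A := e (MvPolynomial.X ⟨s, hst'⟩)
  have ha : algebraMap A L a = s := by
    change ((hb.aevalEquiv (MvPolynomial.X ⟨s, hst'⟩) : A) : L) = s
    simp [v]
  letI : Algebra M A := e.toRingHom.toAlgebra
  letI : Algebra M L := ((algebraMap A L).comp e.toRingHom).toAlgebra
  haveI : IsScalarTower M A L := .of_algebraMap_eq' rfl
  haveI : IsScalarTower K M L := .of_algebraMap_eq fun r => by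
    change _ = algebraMap A L (e (algebraMap K M r))
    rw [e.commutes]; rfl
  have : Algebra.FormallyEtale M A := by
    refine .of_equiv (A := M) ({ e with commutes' := fun r => rfl } : M ≃ₐ[M] A)
  have : Algebra.FormallyEtale M L := .comp M A L
  have hD := KaehlerDifferential.tensorKaehlerEquivOfFormallyEtale_symm_D_algebraMap K M L
    (MvPolynomial.X ⟨s, hst'⟩)
  have hne : (1 : L) ⊗ₜ[M] KaehlerDifferential.D K M (MvPolynomial.X ⟨s, hst'⟩) ≠ 0 := by
    rw [← KaehlerDifferential.mvPolynomialBasis_apply, ← Module.Basis.baseChange_apply]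
    exact Module.Basis.ne_zero _ _
  have hs' : algebraMap M L (MvPolynomial.X ⟨s, hst'⟩) = s := ha
  rw [hs'] at hD
  have hne2 : KaehlerDifferential.D K L s ≠ 0 := by
    intro h0
    rw [h0, map_zero] at hD
    exact hne hD.symm
  have := mt (Module.forall_dual_apply_eq_zero_iff L (KaehlerDifferential.D K L s)).1 hne2
  push Not at this
  obtain ⟨φ, hφ⟩ := this
  exact ⟨φ.compDer (KaehlerDifferential.D K L), hφ⟩

lemma exists_point_nhds {p : ℕ} [Fact p.Prime] (W : WeierstrassCurve.Affine ℚ_[p]) :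
    ∀ᶠ s in nhds (0 : ℚ_[p]), s ≠ 0 → ∃ y, W.Equation (s ^ 2)⁻¹ y := by
  have hsq : Filter.map (fun r : ℚ_[p] => r ^ 2) (nhds 1) = nhds 1 := by
    have := (hasStrictDerivAt_pow 2 (1 : ℚ_[p])).map_nhds_eq (by norm_num)
    simpa using this
  have hev : ∀ᶠ c in nhds (1 : ℚ_[p]), ∃ r, r ^ 2 = c := by
    rw [← hsq, Filter.eventually_map]
    exact Filter.Eventually.of_forall fun r => ⟨r, rfl⟩
  let g : ℚ_[p] → ℚ_[p] := fun s => (W.a₁ * s + W.a₃ * s ^ 3) ^ 2 / 4 +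
    (1 + W.a₂ * s ^ 2 + W.a₄ * s ^ 4 + W.a₆ * s ^ 6)
  have hg : Filter.Tendsto g (nhds 0) (nhds 1) := by
    have : Continuous g := by fun_prop
    simpa [g] using this.tendsto 0
  filter_upwards [hg.eventually hev] with s hs hs0
  obtain ⟨r, hr⟩ := hs
  refine ⟨(r - (W.a₁ * s + W.a₃ * s ^ 3) / 2) / s ^ 3, ?_⟩
  rw [WeierstrassCurve.Affine.equation_iff]
  simp only [g] at hr
  field_simp
  field_simp at hr
  linear_combination hr

open scoped Classical in
theorem statement9 (p : ℕ) [Fact p.Prime]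
    (W : WeierstrassCurve.Affine ℚ_[p]) (hΔ : W.Δ ≠ 0) :
    Cardinal.aleph0 ≤ Module.rank ℚ (ℚ ⊗[ℤ] W.Point) := by
  by_contra hlt
  rw [not_le, Module.rank_lt_aleph0_iff] at hlt
  have hcount : Countable (ℚ ⊗[ℤ] W.Point) :=
    (Module.finBasis ℚ (ℚ ⊗[ℤ] W.Point)).equivFun.toEquiv.countable_iff.2 inferInstance
  let f : W.Point →ₗ[ℤ] ℚ ⊗[ℤ] W.Point := TensorProduct.mk ℤ ℚ W.Point 1
  have hloc : IsLocalizedModule (nonZeroDivisors ℤ) f :=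
    (isLocalizedModule_iff_isBaseChange (nonZeroDivisors ℤ) ℚ f).2
      (TensorProduct.isBaseChange ℤ W.Point ℚ)
  let rep : ℚ ⊗[ℤ] W.Point → W.Point := Function.invFun f
  have hrep : ∀ P, f (rep (f P)) = f P := fun P => Function.invFun_eq ⟨P, rfl⟩
  let xc : W.Point → ℚ_[p] := fun P => match P with
    | .zero => 0
    | .some x _ _ => x
  let yc : W.Point → ℚ_[p] := fun P => match P with
    | .zero => 0
    | .some _ y _ => y
  let S : Set ℚ_[p] := {W.a₁, W.a₂, W.a₃, W.a₄, W.a₆} ∪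
    (Set.range (fun v => xc (rep v)) ∪ Set.range (fun v => yc (rep v)))
  have hS : S.Countable :=
    (Set.toFinite _).countable.union ((Set.countable_range _).union (Set.countable_range _))
  let K := IntermediateField.adjoin ℚ S
  have hK : Cardinal.mk K ≤ Cardinal.aleph0 := by
    refine (IntermediateField.cardinalMk_adjoin_le ℚ S).trans ?_
    simp [hS.le_aleph0]
  have hT : {x : ℚ_[p] | IsAlgebraic K x}.Countable := by
    rw [← Cardinal.le_aleph0_iff_set_countable]
    exact (Algebraic.cardinalMk_le_max K ℚ_[p]).trans (max_le hK le_rfl)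
  have hdense := hT.dense_compl ℚ_[p]
  obtain ⟨s, hs, hsy⟩ := hdense.inter_nhds_nonempty (exists_point_nhds W)
  have hs : Transcendental K s := hs
  have hs0 : s ≠ 0 := by
    rintro rfl
    exact hs isAlgebraic_zero
  obtain ⟨y, hy⟩ := hsy hs0
  have hns : W.Nonsingular (s ^ 2)⁻¹ y :=
    (WeierstrassCurve.Affine.equation_iff_nonsingular_of_Δ_ne_zero hΔ).1 hy
  obtain ⟨D, hD⟩ := exists_derivation_ne_zero hs
  have hDS : ∀ a ∈ S, D a = 0 := fun a ha =>
    D.map_algebraMap (⟨a, IntermediateField.subset_adjoin ℚ S ha⟩ : K)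
  have h1 : D W.a₁ = 0 := hDS _ (by simp [S])
  have h2 : D W.a₂ = 0 := hDS _ (by simp [S])
  have h3 : D W.a₃ = 0 := hDS _ (by simp [S])
  have h4 : D W.a₄ = 0 := hDS _ (by simp [S])
  have h6 : D W.a₆ = 0 := hDS _ (by simp [S])
  have hlog : ∀ Q : W.Point, D (xc Q) = 0 → D (yc Q) = 0 → IsLog D W 0 Q := by
    intro Q hx hy
    rcases Q with _ | ⟨x, y, hQ⟩
    · rfl
    · exact ⟨by rw [zero_mul]; exact hx, by rw [zero_mul]; exact hy⟩
  let P : W.Point := .some _ _ hns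
  have hQ : IsLog D W 0 (rep (f P)) :=
    hlog _ (hDS _ (Or.inr (Or.inl ⟨f P, rfl⟩))) (hDS _ (Or.inr (Or.inr ⟨f P, rfl⟩)))
  obtain ⟨c, hc⟩ := (IsLocalizedModule.eq_iff_exists (nonZeroDivisors ℤ) f).1 (hrep P).symm
  have hP : IsLog D W 0 P :=
    isLog_zero_of_smul_eq D W h1 h2 h3 h4 h6 (c : ℤ) (nonZeroDivisors.coe_ne_zero c) hc hQ
  have hx : D (s ^ 2)⁻¹ = 0 := by rw [hP.1, zero_mul]
  have hmul : s ^ 2 * (s ^ 2)⁻¹ = 1 := mul_inv_cancel₀ (pow_ne_zero 2 hs0)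
  have := congrArg D hmul
  rw [Derivation.leibniz, hx, Derivation.leibniz_pow, Derivation.map_one_eq_zero] at this
  simp [hs0, hD] at this
end
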